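/- arXiv:0711.1897 — 2 statements merged into one kernel-verified Lean document; each statement's English description precedes it below -/
import Mathlib

section
/- Let n ≥ 3 be odd and let f : ℝⁿ → ℝ be a smooth function whose support is a compact subset of the open unit ball B = {x ∈ ℝⁿ : |x| < 1}. For θ ∈ S^{n-1} let φ_θ(t) = (Mf)(θ,t) be the spherical mean of f, and set g_θ(t) = D^{n-3}[t ↦ t^{n-2} φ_θ(t)](t) for t > 0. Then for every x ∈ B one has f(x) = c_n · Δ_x [ x ↦ ∫_{S^{n-1}} g_θ(|x−θ|) dθ ](x), where Δ is the Laplacian in x and c_n = (−1)^{(n−1)/2} / (4 π^{n/2−1} Γ(n/2)). -/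
open MeasureTheory Metric

/-- The surface measure on the unit sphere `S^{n-1}` in `ℝⁿ`. -/
noncomputable def sphereMeasure (n : ℕ) : Measure (sphere (0 : EuclideanSpace ℝ (Fin n)) 1) :=
  (volume : Measure (EuclideanSpace ℝ (Fin n))).toSphere

/-- The operator `D = (1/(2t)) d/dt`. -/
noncomputable def Dop (g : ℝ → ℝ) : ℝ → ℝ := fun t => (1 / (2 * t)) * deriv g t

/-- The Laplacian `Δ f = ∑ ∂²f/∂x_i²` on `ℝⁿ`. -/
noncomputable def lap {n : ℕ} (f : EuclideanSpace ℝ (Fin n) → ℝ)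
    (x : EuclideanSpace ℝ (Fin n)) : ℝ :=
  ∑ i : Fin n, iteratedFDeriv ℝ 2 f x ![EuclideanSpace.single i 1, EuclideanSpace.single i 1]

/-!
In the variable `τ = t ^ 2` the operator `D` is `d/dτ`, and `t ^ (n - 2) * φ_θ t` is a constant
multiple of the density at `τ` of the law of `|y - θ| ^ 2` when `y` has density `f`. Write
`n = 2 k + 3` and `y = z + v`. Then `|y - θ| ^ 2 - |z - θ| ^ 2 = |v| ^ 2 + 2 ⟪z, v⟫ - 2 ⟪θ, v⟫`, and
for `θ` uniform on the sphere `⟪θ, v⟫ / |v|` has density proportional to `(1 - s ^ 2) ^ k` on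
`[-1, 1]`. Hence `∫ g_θ(|z - θ|) dθ` is a constant multiple of the integral of `f (z + v)` against
the `2k`-th derivative at `|v| ^ 2 + 2 ⟪z, v⟫` of `x ↦ b⁻¹ (1 - (x / b) ^ 2)₊ ^ k`, `b = 2 |v|`.
If `|z| < 1` and `|z + v| ≤ 1`, this point lies in `(-b, b)`, where the function is a polynomial of
degree `2k`: its `2k`-th derivative there is a constant multiple of `|v| ^ (2 - n)`. What is left is
the Newtonian potential of `f`, which the Laplacian inverts. The derivatives are made sense of by
mollification at scale `ε → 0`.
-/

section

open Filter Module Set Topology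
open scoped ContDiff InnerProductSpace

section Polar

variable {E : Type*} [NormedAddCommGroup E] [NormedSpace ℝ E] [MeasurableSpace E]
  [FiniteDimensional ℝ E] [BorelSpace E] [Nontrivial E] (μ : Measure E) [μ.IsAddHaarMeasure]
  {F : E → ℝ}

theorem integral_eq_integral_sphere_prod_Ioi (F : E → ℝ) :
    ∫ x, F x ∂μ = ∫ p : sphere (0 : E) 1 × Ioi (0 : ℝ), F ((p.2 : ℝ) • (p.1 : E))
      ∂(μ.toSphere.prod (Measure.volumeIoiPow (finrank ℝ E - 1))) := by
  calc ∫ x, F x ∂μ = ∫ x : ({0}ᶜ : Set E), F x ∂(μ.comap (↑)) := by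
        rw [integral_subtype_comap (measurableSet_singleton _).compl F, restrict_compl_singleton]
    _ = _ := by
        rw [← μ.measurePreserving_homeomorphUnitSphereProd.integral_comp
          (Homeomorph.measurableEmbedding _)]
        congr with x
        simp [smul_smul, norm_ne_zero_iff.2 x.2]

theorem integrable_comp_sphere_prod_Ioi {μ : Measure E} [μ.IsAddHaarMeasure]
    (hF : Integrable F μ) :
    Integrable (fun p : sphere (0 : E) 1 × Ioi (0 : ℝ) ↦ F ((p.2 : ℝ) • (p.1 : E)))
      (μ.toSphere.prod (Measure.volumeIoiPow (finrank ℝ E - 1))) := by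
  rw [← restrict_compl_singleton (μ := μ) 0, ← IntegrableOn,
    integrableOn_iff_comap_subtypeVal (by measurability)] at hF
  rw [← μ.measurePreserving_homeomorphUnitSphereProd.integrable_comp_emb
    (Homeomorph.measurableEmbedding _)]
  convert hF using 1
  ext x
  simp [smul_smul, norm_ne_zero_iff.2 x.2]

theorem integral_volumeIoiPow (m : ℕ) (q : ℝ → ℝ) :
    ∫ r : Ioi (0 : ℝ), q r ∂(Measure.volumeIoiPow m) = ∫ r in Ioi (0 : ℝ), r ^ m * q r := by
  simp only [Measure.volumeIoiPow, ENNReal.ofReal]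
  rw [integral_withDensity_eq_integral_smul (by fun_prop),
    integral_subtype_comap measurableSet_Ioi fun a ↦ Real.toNNReal (a ^ m) • q a]
  refine setIntegral_congr_fun measurableSet_Ioi fun r hr ↦ ?_
  simp [NNReal.smul_def, Real.coe_toNNReal _ (pow_nonneg (mem_Ioi.1 hr).le _)]

theorem integral_eq_integral_sphere_integral_Ioi (hF : Integrable F μ) :
    ∫ x, F x ∂μ = ∫ θ : sphere (0 : E) 1,
      (∫ r in Ioi (0 : ℝ), r ^ (finrank ℝ E - 1) * F (r • (θ : E))) ∂μ.toSphere := by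
  rw [integral_eq_integral_sphere_prod_Ioi, integral_prod _ (integrable_comp_sphere_prod_Ioi hF)]
  exact integral_congr_ae (.of_forall fun θ ↦ integral_volumeIoiPow _ fun r ↦ F (r • (θ : E)))

theorem integral_eq_integral_Ioi_integral_sphere (hF : Integrable F μ) :
    ∫ x, F x ∂μ = ∫ r in Ioi (0 : ℝ), r ^ (finrank ℝ E - 1) *
      ∫ θ : sphere (0 : E) 1, F (r • (θ : E)) ∂μ.toSphere := by
  rw [integral_eq_integral_sphere_prod_Ioi,
    integral_prod_symm _ (integrable_comp_sphere_prod_Ioi hF)]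
  exact integral_volumeIoiPow _ fun r ↦ ∫ θ : sphere (0 : E) 1, F (r • (θ : E)) ∂μ.toSphere

theorem toSphere_real_univ_ne_zero : μ.toSphere.real univ ≠ 0 :=
  have : NeZero μ.toSphere := ⟨μ.toSphere_ne_zero⟩
  measureReal_univ_ne_zero

end Polar

section Zonal

theorem integral_pow_mul_exp_neg_sq_pos (m : ℕ) :
    0 < ∫ r in Ioi (0 : ℝ), r ^ m * Real.exp (-r ^ 2) := by
  have h := integral_rpow_mul_exp_neg_rpow (p := 2) (q := m) two_pos
    (by linarith [Nat.cast_nonneg (α := ℝ) m])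
  simp only [Real.rpow_natCast, Real.rpow_two] at h
  have : 0 < Real.Gamma (((m : ℝ) + 1) / 2) := Real.Gamma_pos_of_pos (by positivity)
  rw [h]
  positivity

theorem integrableOn_pow_mul_exp_neg_sq (m : ℕ) :
    IntegrableOn (fun r : ℝ ↦ r ^ m * Real.exp (-r ^ 2)) (Ioi 0) := by
  simpa using integrableOn_rpow_mul_exp_neg_mul_sq (b := 1) one_pos (s := m)
    (by linarith [Nat.cast_nonneg (α := ℝ) m])

theorem integrable_exp_neg_norm_sq {E : Type*} [NormedAddCommGroup E] [NormedSpace ℝ E]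
    [MeasurableSpace E] [FiniteDimensional ℝ E] [BorelSpace E] [Nontrivial E] (μ : Measure E)
    [μ.IsAddHaarMeasure] : Integrable (fun x ↦ Real.exp (-‖x‖ ^ 2)) μ := by
  rw [integrable_fun_norm_addHaar μ (f := fun r ↦ Real.exp (-r ^ 2))]
  exact integrableOn_pow_mul_exp_neg_sq _

theorem exists_abs_comp_div_le {h : ℝ → ℝ} (hh : Continuous h) :
    ∃ C, ∀ a b : ℝ, |a| ≤ b → |h (a / b)| ≤ C := by
  obtain ⟨C, hC⟩ := (isCompact_Icc (a := (-1 : ℝ)) (b := 1)).exists_bound_of_continuousOn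
    hh.continuousOn
  refine ⟨C, fun a b hab ↦ hC _ ?_⟩
  have hb : 0 ≤ b := (abs_nonneg a).trans hab
  rw [mem_Icc, ← abs_le, abs_div, abs_of_nonneg hb]
  exact div_le_one_of_le₀ hab hb

theorem integrable_indicator_pow_mul_exp_mul_comp_div (m : ℕ) {h : ℝ → ℝ} (hh : Continuous h) :
    Integrable fun p : ℝ × ℝ ↦ (Ioi (0 : ℝ)).indicator (fun ρ ↦ ρ ^ m *
      (Real.exp (-(p.1 ^ 2 + ρ ^ 2)) * h (p.1 / √(p.1 ^ 2 + ρ ^ 2)))) p.2 := by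
  obtain ⟨C, hC⟩ := exists_abs_comp_div_le hh
  have hgauss : Integrable fun p : ℝ × ℝ ↦ Real.exp (-p.1 ^ 2) *
      (Ioi (0 : ℝ)).indicator (fun ρ ↦ ρ ^ m * Real.exp (-ρ ^ 2)) p.2 :=
    Integrable.mul_prod (f := fun s : ℝ ↦ Real.exp (-s ^ 2))
      (by simpa using integrable_exp_neg_mul_sq one_pos)
      ((integrableOn_pow_mul_exp_neg_sq m).integrable_indicator measurableSet_Ioi)
  have hbdd := hgauss.mul_bdd (g := fun p ↦ h (p.1 / √(p.1 ^ 2 + p.2 ^ 2))) (c := C)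
    (hh.measurable.comp (by fun_prop)).aestronglyMeasurable
    (.of_forall fun p ↦ hC _ _ (Real.abs_le_sqrt (by nlinarith [sq_nonneg p.2])))
  refine hbdd.congr (.of_forall fun p ↦ ?_)
  simp only [indicator]
  split_ifs
  · rw [neg_add, Real.exp_add]; ring
  · simp

theorem integral_integral_Ioi_exp_neg_sq_mul_comp_div (m : ℕ) {h : ℝ → ℝ} (hh : Continuous h) :
    ∫ s : ℝ, ∫ ρ in Ioi (0 : ℝ), ρ ^ m *
        (Real.exp (-(s ^ 2 + ρ ^ 2)) * h (s / √(s ^ 2 + ρ ^ 2))) =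
      (∫ r in Ioi (0 : ℝ), r ^ (m + 1) * Real.exp (-r ^ 2)) *
        ∫ α in (0 : ℝ)..Real.pi, Real.sin α ^ m * h (Real.cos α) := by
  let f : ℝ × ℝ → ℝ := fun p ↦ (Ioi (0 : ℝ)).indicator (fun ρ ↦ ρ ^ m *
    (Real.exp (-(p.1 ^ 2 + ρ ^ 2)) * h (p.1 / √(p.1 ^ 2 + ρ ^ 2)))) p.2
  let u : ℝ → ℝ := (Ioo 0 Real.pi).indicator fun α ↦ Real.sin α ^ m * h (Real.cos α)
  have hpolar : ∀ p ∈ Ioi (0 : ℝ) ×ˢ Ioo (-Real.pi) Real.pi,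
      p.1 • f (polarCoord.symm p) = p.1 ^ (m + 1) * Real.exp (-p.1 ^ 2) * u p.2 := by
    rintro ⟨r, α⟩ ⟨hr : 0 < r, hα⟩
    have hsq : (r * Real.cos α) ^ 2 + (r * Real.sin α) ^ 2 = r ^ 2 := by
      nlinarith [Real.sin_sq_add_cos_sq α]
    simp only [polarCoord_symm_apply, f, u, smul_eq_mul, indicator, mem_Ioi, mem_Ioo]
    by_cases h0 : 0 < α
    · have : 0 < Real.sin α := Real.sin_pos_of_pos_of_lt_pi h0 hα.2
      rw [if_pos (by positivity), if_pos ⟨h0, hα.2⟩, hsq, Real.sqrt_sq hr.le,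
        mul_div_cancel_left₀ _ hr.ne']
      ring
    · have : Real.sin α ≤ 0 := Real.sin_nonpos_of_nonpos_of_neg_pi_le (not_lt.1 h0) hα.1.le
      rw [if_neg (by nlinarith), if_neg fun h ↦ h0 h.1, mul_zero, mul_zero]
  calc _ = ∫ s : ℝ, ∫ ρ : ℝ, f (s, ρ) := by simp only [← integral_indicator measurableSet_Ioi]; rfl
    _ = ∫ p, f p := by
        rw [Measure.volume_eq_prod,
          integral_prod _ (integrable_indicator_pow_mul_exp_mul_comp_div m hh)]
    _ = ∫ p in Ioi (0 : ℝ) ×ˢ Ioo (-Real.pi) Real.pi,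
          p.1 ^ (m + 1) * Real.exp (-p.1 ^ 2) * u p.2 := by
        rw [← integral_comp_polarCoord_symm, polarCoord_target]
        exact setIntegral_congr_fun (measurableSet_Ioi.prod measurableSet_Ioo) hpolar
    _ = (∫ r in Ioi (0 : ℝ), r ^ (m + 1) * Real.exp (-r ^ 2)) *
          ∫ α in Ioo (-Real.pi) Real.pi, u α := by
        rw [Measure.volume_eq_prod]
        exact setIntegral_prod_mul (fun r : ℝ ↦ r ^ (m + 1) * Real.exp (-r ^ 2)) _ _ _
    _ = _ := by
        have hsub : Ioo 0 Real.pi ⊆ Ioo (-Real.pi) Real.pi :=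
          Ioo_subset_Ioo_left (by linarith [Real.pi_pos])
        rw [setIntegral_indicator measurableSet_Ioo, inter_eq_right.2 hsub,
          ← integral_Ioc_eq_integral_Ioo, ← intervalIntegral.integral_of_le Real.pi_pos.le]

theorem exists_linearIsometryEquiv_apply_eq {E F : Type*} [NormedAddCommGroup E]
    [InnerProductSpace ℝ E] [FiniteDimensional ℝ E] [NormedAddCommGroup F]
    [InnerProductSpace ℝ F] [FiniteDimensional ℝ F] (h : finrank ℝ E = finrank ℝ F) {x : E} {y : F}
    (hxy : ‖x‖ = ‖y‖) : ∃ L : E ≃ₗᵢ[ℝ] F, L x = y := by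
  let L := (stdOrthonormalBasis ℝ E).equiv (stdOrthonormalBasis ℝ F) (finCongr h)
  have hL : ‖L x‖ = ‖y‖ := by rw [L.norm_map, hxy]
  exact ⟨L.trans (Submodule.reflection (ℝ ∙ (L x - y))ᗮ), Submodule.reflection_sub hL⟩

variable {E : Type*} [NormedAddCommGroup E] [InnerProductSpace ℝ E] [FiniteDimensional ℝ E]

theorem exists_linearIsometryEquiv_prod_apply_eq {m : ℕ} (hE : finrank ℝ E = m + 1) {e : E}
    (he : ‖e‖ = 1) : ∃ L : E ≃ₗᵢ[ℝ] WithLp 2 (ℝ × EuclideanSpace ℝ (Fin m)),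
      L e = WithLp.toLp 2 (1, 0) := by
  refine exists_linearIsometryEquiv_apply_eq ?_ (by simp [he])
  rw [(WithLp.linearEquiv 2 ℝ (ℝ × EuclideanSpace ℝ (Fin m))).finrank_eq, finrank_prod, hE]
  simp [add_comm]

variable [MeasurableSpace E] [BorelSpace E]

theorem integrable_exp_neg_norm_sq_mul_comp_inner_div [Nontrivial E] {e : E} (he : ‖e‖ = 1)
    {h : ℝ → ℝ} (hh : Continuous h) :
    Integrable fun x : E ↦ Real.exp (-‖x‖ ^ 2) * h (⟪x, e⟫_ℝ / ‖x‖) := by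
  obtain ⟨C, hC⟩ := exists_abs_comp_div_le hh
  refine (integrable_exp_neg_norm_sq volume).mul_bdd (c := C)
    (hh.measurable.comp (by fun_prop)).aestronglyMeasurable (.of_forall fun x ↦ hC _ _ ?_)
  simpa [he] using abs_real_inner_le_norm x e

theorem integral_exp_neg_norm_sq_mul_comp_inner_div [Nontrivial E] {e : E} (he : ‖e‖ = 1)
    {h : ℝ → ℝ} (hh : Continuous h) :
    ∫ x : E, Real.exp (-‖x‖ ^ 2) * h (⟪x, e⟫_ℝ / ‖x‖) =
      (∫ r in Ioi (0 : ℝ), r ^ (finrank ℝ E - 1) * Real.exp (-r ^ 2)) *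
        ∫ θ : sphere (0 : E) 1, h ⟪(θ : E), e⟫_ℝ ∂(volume : Measure E).toSphere := by
  rw [integral_eq_integral_Ioi_integral_sphere volume
    (integrable_exp_neg_norm_sq_mul_comp_inner_div he hh), ← integral_mul_const]
  refine setIntegral_congr_fun measurableSet_Ioi fun r (hr : 0 < r) ↦ ?_
  simp only [norm_smul, norm_eq_of_mem_sphere, real_inner_smul_left, Real.norm_of_nonneg hr.le,
    mul_one, mul_div_cancel_left₀ _ hr.ne', integral_const_mul, mul_assoc]

theorem integral_exp_neg_norm_sq_mul_comp_inner_div_eq_prod {m : ℕ} (hE : finrank ℝ E = m + 2)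
    {e : E} (he : ‖e‖ = 1) {h : ℝ → ℝ} (hh : Continuous h) :
    ∫ x : E, Real.exp (-‖x‖ ^ 2) * h (⟪x, e⟫_ℝ / ‖x‖) =
      (volume : Measure (EuclideanSpace ℝ (Fin (m + 1)))).toSphere.real univ *
        ∫ s : ℝ, ∫ ρ in Ioi (0 : ℝ), ρ ^ m *
          (Real.exp (-(s ^ 2 + ρ ^ 2)) * h (s / √(s ^ 2 + ρ ^ 2))) := by
  let V := EuclideanSpace ℝ (Fin (m + 1))
  have : Nontrivial E := nontrivial_of_finrank_pos (R := ℝ) (by omega)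
  obtain ⟨L, hL⟩ := exists_linearIsometryEquiv_prod_apply_eq hE he
  have hmp : MeasurePreserving (fun x ↦ WithLp.ofLp (L x)) (volume : Measure E)
      (volume : Measure (ℝ × V)) := (WithLp.volume_preserving_ofLp ℝ V).comp L.measurePreserving
  have hme : MeasurableEmbedding (fun x ↦ (WithLp.ofLp (L x) : ℝ × V)) :=
    (MeasurableEquiv.toLp 2 (ℝ × V)).symm.measurableEmbedding.comp
      L.toHomeomorph.measurableEmbedding
  let F : ℝ × V → ℝ := fun p ↦
    Real.exp (-(p.1 ^ 2 + ‖p.2‖ ^ 2)) * h (p.1 / √(p.1 ^ 2 + ‖p.2‖ ^ 2))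
  have hF : ∀ x, F (WithLp.ofLp (L x)) = Real.exp (-‖x‖ ^ 2) * h (⟪x, e⟫_ℝ / ‖x‖) := by
    intro x
    have hn : (WithLp.ofLp (L x)).1 ^ 2 + ‖(WithLp.ofLp (L x)).2‖ ^ 2 = ‖x‖ ^ 2 := by
      rw [← L.norm_map x, WithLp.prod_norm_sq_eq_of_L2]
      simp
    have hi : (WithLp.ofLp (L x)).1 = ⟪x, e⟫_ℝ := by
      rw [← L.inner_map_map x e, hL]
      simp [WithLp.prod_inner_apply]
    simp only [F, hn, Real.sqrt_sq (norm_nonneg x), ← hi]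
  have hFint : Integrable F := by
    rw [← hmp.integrable_comp_emb hme]
    exact (integrable_exp_neg_norm_sq_mul_comp_inner_div he hh).congr
      (.of_forall fun x ↦ (hF x).symm)
  have hinner (s : ℝ) := integral_fun_norm_addHaar (volume : Measure V)
    fun ρ ↦ Real.exp (-(s ^ 2 + ρ ^ 2)) * h (s / √(s ^ 2 + ρ ^ 2))
  simp only [finrank_euclideanSpace_fin, V, add_tsub_cancel_right, smul_eq_mul] at hinner
  simp only [← hF]
  rw [hmp.integral_comp hme F, Measure.volume_eq_prod, integral_prod _ hFint, ← integral_const_mul]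
  simp only [F, V, hinner, Measure.toSphere_real_apply_univ, finrank_euclideanSpace_fin,
    nsmul_eq_mul, mul_assoc]

theorem integral_sphere_comp_inner {m : ℕ} (hE : finrank ℝ E = m + 2) {e : E} (he : ‖e‖ = 1)
    {h : ℝ → ℝ} (hh : Continuous h) :
    ∫ θ : sphere (0 : E) 1, h ⟪(θ : E), e⟫_ℝ ∂(volume : Measure E).toSphere =
      (volume : Measure (EuclideanSpace ℝ (Fin (m + 1)))).toSphere.real univ *
        ∫ α in (0 : ℝ)..Real.pi, Real.sin α ^ m * h (Real.cos α) := by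
  have : Nontrivial E := nontrivial_of_finrank_pos (R := ℝ) (by omega)
  have hsphere := integral_exp_neg_norm_sq_mul_comp_inner_div he hh
  rw [integral_exp_neg_norm_sq_mul_comp_inner_div_eq_prod hE he hh,
    integral_integral_Ioi_exp_neg_sq_mul_comp_div m hh, hE,
    show m + 2 - 1 = m + 1 from rfl, mul_left_comm] at hsphere
  exact (mul_left_cancel₀ (integral_pow_mul_exp_neg_sq_pos (m + 1)).ne' hsphere).symm

theorem integral_sin_pow_odd_mul_comp_cos (k : ℕ) {h : ℝ → ℝ} (hh : Continuous h) :
    ∫ α in (0 : ℝ)..Real.pi, Real.sin α ^ (2 * k + 1) * h (Real.cos α) =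
      ∫ s in (-1 : ℝ)..1, h s * (1 - s ^ 2) ^ k := by
  have hsub := intervalIntegral.integral_comp_mul_deriv (a := 0) (b := Real.pi) (f := Real.cos)
    (f' := fun x ↦ -Real.sin x) (g := fun s ↦ h s * (1 - s ^ 2) ^ k)
    (fun x _ ↦ Real.hasDerivAt_cos x) (by fun_prop) (by fun_prop)
  rw [Real.cos_zero, Real.cos_pi, intervalIntegral.integral_symm (-1),
    ← neg_eq_iff_eq_neg] at hsub
  rw [← hsub, ← intervalIntegral.integral_neg]
  refine intervalIntegral.integral_congr fun α _ ↦ ?_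
  simp only [Function.comp, ← Real.sin_sq]
  ring

end Zonal

section NewtonPotential

theorem hasCompactSupport_comp_smul_right {E : Type*} [NormedAddCommGroup E] [NormedSpace ℝ E]
    {p : E → ℝ} (hp : HasCompactSupport p) {v : E} (hv : v ≠ 0) :
    HasCompactSupport fun r : ℝ ↦ p (r • v) :=
  hp.comp_isClosedEmbedding (isClosedEmbedding_smul_left hv)

theorem integral_Ioi_fderiv_smul {E : Type*} [NormedAddCommGroup E] [NormedSpace ℝ E]
    {p : E → ℝ} (hp : ContDiff ℝ 1 p) (hpc : HasCompactSupport p) {v : E} (hv : v ≠ 0) :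
    ∫ r in Ioi (0 : ℝ), fderiv ℝ p (r • v) v = -p 0 := by
  have hderiv (r : ℝ) : HasDerivAt (fun r : ℝ ↦ p (r • v)) (fderiv ℝ p (r • v) v) r :=
    (hp.differentiable one_ne_zero _).hasFDerivAt.comp_hasDerivAt r
      (by simpa using (hasDerivAt_id r).smul_const v)
  have hFTC := (hasCompactSupport_comp_smul_right hpc hv).integral_Ioi_deriv_eq
    (hp.comp (f := fun r : ℝ ↦ r • v) (by fun_prop)) 0
  simpa [Function.comp_def, (hderiv _).deriv] using hFTC

theorem continuous_inv_sqrt_norm_sq_add_pow {E : Type*} [SeminormedAddCommGroup E] (m : ℕ) {ε : ℝ}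
    (hε : 0 < ε) :
    Continuous fun v : E ↦ (√(‖v‖ ^ 2 + ε) ^ m)⁻¹ :=
  Continuous.inv₀ (by fun_prop) fun v ↦ (pow_pos (Real.sqrt_pos.2 (by positivity)) _).ne'

theorem hasFDerivAt_inv_sqrt_norm_sq_add_pow {E : Type*} [NormedAddCommGroup E]
    [InnerProductSpace ℝ E] (m : ℕ) {ε : ℝ} (hε : 0 < ε) (v : E) :
    HasFDerivAt (fun v : E ↦ (√(‖v‖ ^ 2 + ε) ^ m)⁻¹)
      ((-m * (√(‖v‖ ^ 2 + ε) ^ (m + 2))⁻¹) • innerSL ℝ v) v := by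
  have hpos : 0 < ‖v‖ ^ 2 + ε := by positivity
  have hs : √(‖v‖ ^ 2 + ε) ≠ 0 := (Real.sqrt_pos.2 hpos).ne'
  have hsq : HasFDerivAt (fun v : E ↦ ‖v‖ ^ 2 + ε) (2 • innerSL ℝ v) v :=
    (hasStrictFDerivAt_norm_sq v).hasFDerivAt.add_const _
  refine ((((Real.hasDerivAt_sqrt hpos.ne').pow m).inv (pow_ne_zero _ hs)).comp_hasFDerivAt v
    hsq).congr_fderiv ?_
  rcases m with _ | m
  · simp
  ext w
  simp only [smul_apply, Pi.pow_apply, nsmul_eq_mul, smul_eq_mul, Nat.cast_ofNat,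
    innerSL_apply_apply, add_tsub_cancel_right, Nat.cast_add, Nat.cast_one]
  field_simp
  ring

section Laplacian

open InnerProductSpace Laplacian

variable {ι E : Type*} [Fintype ι] [NormedAddCommGroup E] [InnerProductSpace ℝ E]
  (b : OrthonormalBasis ι ℝ E)

theorem sum_apply_mul_inner (L : E →L[ℝ] ℝ) (v : E) : ∑ i, L (b i) * ⟪v, b i⟫_ℝ = L v := by
  conv_rhs => rw [← b.sum_repr' v]
  simp only [map_sum, map_smul, smul_eq_mul, real_inner_comm, mul_comm]

theorem laplacian_eq_sum_fderiv_fderiv [FiniteDimensional ℝ E] {f : E → ℝ} (hf : ContDiff ℝ 2 f)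
    (z : E) : (Δ f) z = ∑ i, fderiv ℝ (fun y ↦ fderiv ℝ f y (b i)) z (b i) := by
  rw [laplacian_eq_iteratedFDeriv_orthonormalBasis f b]
  refine Finset.sum_congr rfl fun i _ ↦ ?_
  have hfd : DifferentiableAt ℝ (fderiv ℝ f) z :=
    (hf.fderiv_right (m := 1) le_rfl).differentiable one_ne_zero z
  rw [iteratedFDeriv_two_apply, fderiv_clm_apply hfd (differentiableAt_const _)]
  simp

end Laplacian

section Normed

variable {E : Type*} [NormedAddCommGroup E] [NormedSpace ℝ E] [MeasurableSpace E]
  [FiniteDimensional ℝ E] [BorelSpace E] (μ : Measure E) [μ.IsAddHaarMeasure] {m : ℕ} {p : E → ℝ}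

theorem locallyIntegrable_inv_norm_pow (hm : m < finrank ℝ E) :
    LocallyIntegrable (fun v ↦ (‖v‖ ^ m)⁻¹) μ := by
  have : Nontrivial E := nontrivial_of_finrank_pos (R := ℝ) (by omega)
  rw [locallyIntegrable_iff]
  intro K hK
  obtain ⟨R, hR⟩ := hK.isBounded.subset_ball (0 : E)
  refine IntegrableOn.mono_set ?_ hR
  rw [integrableOn_fun_norm_addHaar μ (f := fun r : ℝ ↦ (r ^ m)⁻¹)]
  have hpow : IntegrableOn (fun r : ℝ ↦ r ^ (finrank ℝ E - 1 - m)) (Ioo 0 R) :=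
    ((continuous_pow _).integrableOn_Icc (a := 0) (b := R)).mono_set Ioo_subset_Icc_self
  refine hpow.congr_fun (fun r hr ↦ ?_) measurableSet_Ioo
  rw [smul_eq_mul, ← div_eq_mul_inv, eq_div_iff (pow_ne_zero _ hr.1.ne'), ← pow_add]
  congr 1
  omega

variable {μ}

theorem integrable_mul_inv_norm_pow (hm : m < finrank ℝ E) (hp : Continuous p)
    (hpc : HasCompactSupport p) : Integrable (fun v ↦ p v * (‖v‖ ^ m)⁻¹) μ := by
  simpa [mul_comm] using
    (locallyIntegrable_inv_norm_pow μ hm).integrable_smul_right_of_hasCompactSupport hp hpc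

theorem integrable_mul_inv_norm_pow_of_abs_le (hm : m < finrank ℝ E) {q : E → ℝ}
    (hp : Continuous p) (hq : Continuous q) (hqc : HasCompactSupport q)
    (hpq : ∀ v, |p v| ≤ q v * ‖v‖) : Integrable (fun v ↦ p v * (‖v‖ ^ (m + 1))⁻¹) μ := by
  refine (integrable_mul_inv_norm_pow hm hq hqc).mono
    (hp.aestronglyMeasurable.mul (by fun_prop)) (.of_forall fun v ↦ ?_)
  rcases eq_or_ne v 0 with rfl | hv
  · rw [norm_zero, zero_pow (Nat.succ_ne_zero m), inv_zero, mul_zero, norm_zero]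
    exact norm_nonneg _
  have hv0 : 0 < ‖v‖ := norm_pos_iff.2 hv
  rw [norm_mul, norm_mul, norm_inv, norm_inv, norm_pow, norm_pow, norm_norm, pow_succ', mul_inv,
    ← mul_assoc]
  gcongr
  rw [mul_inv_le_iff₀ hv0]
  exact (hpq v).trans (by gcongr; exact le_abs_self _)

theorem ae_ne_zero [Nontrivial E] : ∀ᵐ v ∂μ, v ≠ 0 := by simp [ae_iff]

variable (μ)

theorem integral_fderiv_self_mul_inv_norm_pow_finrank [Nontrivial E] (hp : ContDiff ℝ 1 p)
    (hpc : HasCompactSupport p) :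
    ∫ v, fderiv ℝ p v v * (‖v‖ ^ finrank ℝ E)⁻¹ ∂μ = -(μ.toSphere.real univ * p 0) := by
  have hfd : Continuous (fderiv ℝ p) := hp.continuous_fderiv one_ne_zero
  obtain ⟨d, hd⟩ := Nat.exists_eq_add_one.2 (finrank_pos (R := ℝ) (M := E))
  have hint : Integrable (fun v ↦ fderiv ℝ p v v * (‖v‖ ^ finrank ℝ E)⁻¹) μ := by
    rw [hd]
    exact integrable_mul_inv_norm_pow_of_abs_le (by omega) (hfd.clm_apply continuous_id) hfd.norm
      (hpc.fderiv ℝ).norm fun v ↦ (fderiv ℝ p v).le_opNorm v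
  have hray (θ : sphere (0 : E) 1) : ∫ r in Ioi (0 : ℝ), r ^ (finrank ℝ E - 1) *
      (fderiv ℝ p (r • (θ : E)) (r • (θ : E)) * (‖r • (θ : E)‖ ^ finrank ℝ E)⁻¹) = -p 0 := by
    rw [← integral_Ioi_fderiv_smul hp hpc (ne_zero_of_mem_unit_sphere θ)]
    refine setIntegral_congr_fun measurableSet_Ioi fun r (hr : 0 < r) ↦ ?_
    simp only [norm_smul, norm_eq_of_mem_sphere, Real.norm_of_nonneg hr.le, mul_one, map_smul,
      smul_eq_mul, hd, add_tsub_cancel_right]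
    field_simp
    ring
  rw [integral_eq_integral_sphere_integral_Ioi μ hint]
  simp only [hray, integral_const, smul_eq_mul, mul_neg]

end Normed

variable {E : Type*} [NormedAddCommGroup E] [InnerProductSpace ℝ E] [FiniteDimensional ℝ E]
  [MeasurableSpace E] [BorelSpace E]

/-- The Newtonian potential of `f`, with the kernel `|v| ^ (2 - dim E)` not normalised to be a
fundamental solution of the Laplacian. -/
noncomputable def newtonPotential (f : E → ℝ) (z : E) : ℝ :=
  ∫ v, f (z + v) * (‖v‖ ^ (finrank ℝ E - 2))⁻¹

theorem newtonPotential_eq_convolution (f : E → ℝ) :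
    newtonPotential f = convolution (fun v : E ↦ (‖v‖ ^ (finrank ℝ E - 2))⁻¹) f
      (ContinuousLinearMap.mul ℝ ℝ) volume := by
  ext z
  rw [newtonPotential, convolution_def, ← integral_neg_eq_self]
  simp [sub_eq_add_neg, mul_comm]

variable {m : ℕ} {f q : E → ℝ}

open InnerProductSpace Laplacian

theorem contDiff_newtonPotential {n : ℕ∞} (hE : finrank ℝ E = m + 2) (hf : ContDiff ℝ n f)
    (hfc : HasCompactSupport f) : ContDiff ℝ n (newtonPotential f) := by
  rw [newtonPotential_eq_convolution]
  exact hfc.contDiff_convolution_right _ (locallyIntegrable_inv_norm_pow volume (by omega)) hf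

theorem fderiv_newtonPotential_apply (hE : finrank ℝ E = m + 2) (hf : ContDiff ℝ 1 f)
    (hfc : HasCompactSupport f) (z w : E) :
    fderiv ℝ (newtonPotential f) z w = newtonPotential (fun y ↦ fderiv ℝ f y w) z := by
  have hK : LocallyIntegrable fun v : E ↦ (‖v‖ ^ (finrank ℝ E - 2))⁻¹ :=
    locallyIntegrable_inv_norm_pow volume (by omega)
  rw [newtonPotential_eq_convolution, newtonPotential_eq_convolution,
    (hfc.hasFDerivAt_convolution_right _ hK hf z).fderiv,
    convolution_precompR_apply _ hK (hfc.fderiv ℝ) (hf.continuous_fderiv one_ne_zero)]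

theorem integral_fderiv_mul_inv_sqrt_norm_sq_add_pow (m : ℕ) (hq : ContDiff ℝ 1 q)
    (hqc : HasCompactSupport q) (e : E) {ε : ℝ} (hε : 0 < ε) :
    ∫ v, fderiv ℝ q v e * (√(‖v‖ ^ 2 + ε) ^ m)⁻¹ =
      m * ∫ v, q v * ⟪v, e⟫_ℝ * (√(‖v‖ ^ 2 + ε) ^ (m + 2))⁻¹ := by
  have hcont (j : ℕ) := continuous_inv_sqrt_norm_sq_add_pow (E := E) j hε
  have hfd (v : E) : fderiv ℝ (fun v : E ↦ (√(‖v‖ ^ 2 + ε) ^ m)⁻¹) v e =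
      -m * (⟪v, e⟫_ℝ * (√(‖v‖ ^ 2 + ε) ^ (m + 2))⁻¹) := by
    rw [(hasFDerivAt_inv_sqrt_norm_sq_add_pow m hε v).fderiv]
    simp only [neg_mul, neg_smul, neg_apply, smul_apply, coe_innerSL_apply, smul_eq_mul]
    ring
  have hfdq : Continuous fun v ↦ fderiv ℝ q v e :=
    (hq.continuous_fderiv one_ne_zero).clm_apply continuous_const
  have hinner : Continuous fun v : E ↦ ⟪v, e⟫_ℝ := by fun_prop
  have key := integral_mul_fderiv_eq_neg_fderiv_mul_of_integrable (𝕜 := ℝ) (μ := volume) (v := e)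
    (f := q) (g := fun v : E ↦ (√(‖v‖ ^ 2 + ε) ^ m)⁻¹)
    ((hfdq.mul (hcont m)).integrable_of_hasCompactSupport (hqc.fderiv_apply ℝ e).mul_right)
    (by
      simp_rw [hfd]
      exact (hq.continuous.mul (continuous_const.mul
        (hinner.mul (hcont _)))).integrable_of_hasCompactSupport hqc.mul_right)
    ((hq.continuous.mul (hcont m)).integrable_of_hasCompactSupport hqc.mul_right)
    (fun v _ ↦ hq.differentiable one_ne_zero v)
    fun v _ ↦ (hasFDerivAt_inv_sqrt_norm_sq_add_pow m hε v).differentiableAt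
  rw [← neg_eq_iff_eq_neg] at key
  rw [← key, ← integral_const_mul, ← integral_neg]
  simp_rw [hfd]
  congr with v
  ring

theorem tendsto_integral_mul_inv_sqrt_norm_sq_add_pow [Nontrivial E] (hp : Continuous q)
    (hint : Integrable fun v ↦ q v * (‖v‖ ^ m)⁻¹) :
    Tendsto (fun ε : ℝ ↦ ∫ v, q v * (√(‖v‖ ^ 2 + ε) ^ m)⁻¹) (𝓝[>] 0)
      (𝓝 (∫ v, q v * (‖v‖ ^ m)⁻¹)) := by
  refine tendsto_integral_filter_of_dominated_convergence _ ?_ ?_ hint.norm ?_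
  · filter_upwards [self_mem_nhdsWithin] with ε hε
    exact (hp.mul (continuous_inv_sqrt_norm_sq_add_pow m hε)).aestronglyMeasurable
  · filter_upwards [self_mem_nhdsWithin] with ε (hε : 0 < ε)
    filter_upwards [ae_ne_zero] with v hv
    have : 0 < ‖v‖ := norm_pos_iff.2 hv
    rw [norm_mul, norm_mul, norm_inv, norm_inv, norm_pow, norm_pow, norm_norm,
      Real.norm_of_nonneg (Real.sqrt_nonneg _)]
    gcongr
    exact Real.le_sqrt_of_sq_le (by linarith)
  · filter_upwards [ae_ne_zero] with v hv
    have hv0 : 0 < ‖v‖ := norm_pos_iff.2 hv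
    have hcont : ContinuousAt (fun ε : ℝ ↦ (√(‖v‖ ^ 2 + ε) ^ m)⁻¹) 0 :=
      ContinuousAt.inv₀ (by fun_prop) (by rw [add_zero, Real.sqrt_sq hv0.le]; positivity)
    have hlim := hcont.tendsto
    rw [add_zero, Real.sqrt_sq hv0.le] at hlim
    exact (hlim.mono_left nhdsWithin_le_nhds).const_mul _

theorem integrable_mul_inner_mul_inv_norm_pow (hE : finrank ℝ E = m + 2) (hq : Continuous q)
    (hqc : HasCompactSupport q) (e : E) :
    Integrable fun v ↦ q v * ⟪v, e⟫_ℝ * (‖v‖ ^ (m + 2))⁻¹ := by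
  refine integrable_mul_inv_norm_pow_of_abs_le (q := fun v ↦ |q v| * ‖e‖) (by omega)
    (hq.mul (by fun_prop)) (by fun_prop) hqc.abs.mul_right fun v ↦ ?_
  rw [abs_mul, mul_assoc, mul_comm ‖e‖]
  gcongr
  exact abs_real_inner_le_norm v e

theorem integral_fderiv_mul_inv_norm_pow (hE : finrank ℝ E = m + 2) (hq : ContDiff ℝ 1 q)
    (hqc : HasCompactSupport q) (e : E) :
    ∫ v, fderiv ℝ q v e * (‖v‖ ^ m)⁻¹ = m * ∫ v, q v * ⟪v, e⟫_ℝ * (‖v‖ ^ (m + 2))⁻¹ := by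
  have : Nontrivial E := nontrivial_of_finrank_pos (R := ℝ) (by omega)
  have hfdq : Continuous fun v ↦ fderiv ℝ q v e :=
    (hq.continuous_fderiv one_ne_zero).clm_apply continuous_const
  have hlhs := tendsto_integral_mul_inv_sqrt_norm_sq_add_pow hfdq
    (integrable_mul_inv_norm_pow (m := m) (by omega) hfdq (hqc.fderiv_apply ℝ e))
  have hrhs := tendsto_integral_mul_inv_sqrt_norm_sq_add_pow (hq.continuous.mul (by fun_prop))
    (integrable_mul_inner_mul_inv_norm_pow hE hq.continuous hqc e)
  refine tendsto_nhds_unique hlhs ((hrhs.const_mul (m : ℝ)).congr' ?_)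
  filter_upwards [self_mem_nhdsWithin] with ε hε
  exact (integral_fderiv_mul_inv_sqrt_norm_sq_add_pow m hq hqc e hε).symm

theorem laplacian_newtonPotential (hE : finrank ℝ E = m + 2) (hf : ContDiff ℝ 2 f)
    (hfc : HasCompactSupport f) (z : E) :
    (Δ (newtonPotential f)) z = -(m * (volume : Measure E).toSphere.real univ * f z) := by
  have : Nontrivial E := nontrivial_of_finrank_pos (R := ℝ) (by omega)
  let b := stdOrthonormalBasis ℝ E
  let p : E → ℝ := fun v ↦ f (z + v)
  have hp : ContDiff ℝ 2 p := hf.comp (contDiff_const.add contDiff_id)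
  have hpc : HasCompactSupport p := hfc.comp_homeomorph (Homeomorph.addLeft z)
  have hpartial (e : E) : ContDiff ℝ 1 fun v ↦ fderiv ℝ p v e :=
    (hp.fderiv_right le_rfl).clm_apply contDiff_const
  have hsecond (e : E) : newtonPotential (fun x ↦ fderiv ℝ (fun y ↦ fderiv ℝ f y e) x e) z =
      m * ∫ v, fderiv ℝ p v e * ⟪v, e⟫_ℝ * (‖v‖ ^ (m + 2))⁻¹ := by
    rw [← integral_fderiv_mul_inv_norm_pow hE (hpartial e) (hpc.fderiv_apply ℝ e), newtonPotential]
    simp only [p, fderiv_comp_add_left (f := f), hE, add_tsub_cancel_right,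
      fderiv_comp_add_left (f := fun y ↦ fderiv ℝ f y e)]
  calc (Δ (newtonPotential f)) z
      = ∑ i, newtonPotential (fun x ↦ fderiv ℝ (fun y ↦ fderiv ℝ f y (b i)) x (b i)) z := by
        rw [laplacian_eq_sum_fderiv_fderiv b (contDiff_newtonPotential hE hf hfc)]
        refine Finset.sum_congr rfl fun i _ ↦ ?_
        simp only [fderiv_newtonPotential_apply hE (hf.of_le one_le_two) hfc]
        exact fderiv_newtonPotential_apply hE
          ((hf.fderiv_right le_rfl).clm_apply contDiff_const) (hfc.fderiv_apply ℝ _) z _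
    _ = m * ∫ v, fderiv ℝ p v v * (‖v‖ ^ finrank ℝ E)⁻¹ := by
        simp only [hsecond, ← Finset.mul_sum]
        rw [← integral_finsetSum _ fun i _ ↦ integrable_mul_inner_mul_inv_norm_pow hE
          (hpartial (b i)).continuous (hpc.fderiv_apply ℝ _) (b i)]
        simp only [← Finset.sum_mul, sum_apply_mul_inner b, hE]
    _ = _ := by
        rw [integral_fderiv_self_mul_inv_norm_pow_finrank volume (hp.of_le one_le_two) hpc]
        simp only [p, add_zero, mul_neg]
        ring

end NewtonPotential

section Calculus

theorem contDiff_integral_of_isCompact {E P : Type*} [NormedAddCommGroup E] [NormedSpace ℝ E]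
    [FiniteDimensional ℝ E] [MeasurableSpace E] [BorelSpace E] [NormedAddCommGroup P]
    [NormedSpace ℝ P] {K : Set E} (hK : IsCompact K) (μ : Measure K) [IsFiniteMeasure μ]
    {Q : P → E → ℝ} (hQ : ContDiff ℝ ∞ (Function.uncurry Q)) :
    ContDiff ℝ ∞ fun p ↦ ∫ x : K, Q p x ∂μ := by
  obtain ⟨R, hR, hKR⟩ := hK.isBounded.subset_closedBall_lt 0 0
  let χ : ContDiffBump (0 : E) := ⟨R, R + 1, hR, by linarith⟩
  have hloc : LocallyIntegrable (fun _ : E ↦ (1 : ℝ)) (μ.map (↑)) :=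
    have := Measure.isFiniteMeasure_map μ ((↑) : K → E)
    (integrable_const _).locallyIntegrable
  have hcut : ContDiff ℝ ∞ fun q : P × E ↦ χ q.2 * Q q.1 (-q.2) :=
    (χ.contDiff.comp contDiff_snd).mul (hQ.comp (contDiff_fst.prodMk contDiff_snd.neg))
  have hconv := contDiffOn_convolution_right_with_param_comp (ContinuousLinearMap.mul ℝ ℝ)
    (s := (univ : Set P)) (v := fun _ ↦ (0 : E)) contDiffOn_const (f := fun _ : E ↦ (1 : ℝ))
    (g := fun p w ↦ χ w * Q p (-w)) isOpen_univ (isCompact_closedBall (0 : E) (R + 1))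
    (fun p w _ hw ↦ by simp [χ.zero_of_le_dist (not_le.1 hw).le]) hloc hcut.contDiffOn
  rw [contDiffOn_univ] at hconv
  convert hconv using 1
  ext p
  have hmeas : StronglyMeasurable fun t : E ↦
      ContinuousLinearMap.mul ℝ ℝ 1 (χ (0 - t) * Q p (-(0 - t))) :=
    (continuous_const.mul (hcut.continuous.comp (f := fun t : E ↦ (p, 0 - t))
      (by fun_prop))).stronglyMeasurable
  rw [convolution_def, integral_map_of_stronglyMeasurable measurable_subtype_coe hmeas]
  refine integral_congr_ae (.of_forall fun x ↦ ?_)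
  have hχ : χ (-x) = 1 := χ.one_of_mem_closedBall (by simpa [χ] using hKR x.2)
  simp [hχ]

theorem contDiffOn_iteratedDeriv_snd {P : Type*} [NormedAddCommGroup P] [NormedSpace ℝ P]
    {F : P → ℝ → ℝ} {U : Set (P × ℝ)} (hU : IsOpen U)
    (hF : ContDiffOn ℝ ∞ (Function.uncurry F) U) (j : ℕ) :
    ContDiffOn ℝ ∞ (fun q : P × ℝ ↦ iteratedDeriv j (F q.1) q.2) U := by
  induction j with
  | zero => simpa only [iteratedDeriv_zero] using! hF
  | succ j ih =>
    refine ((ih.fderiv_of_isOpen hU (m := ∞) (by simp)).clm_apply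
      (contDiffOn_const (c := ((0 : P), (1 : ℝ))))).congr fun q hq ↦ ?_
    have hd : DifferentiableAt ℝ (fun q : P × ℝ ↦ iteratedDeriv j (F q.1) q.2) q :=
      (ih.differentiableOn (by simp)).differentiableAt (hU.mem_nhds hq)
    rw [iteratedDeriv_succ]
    exact (HasFDerivAt.comp_hasDerivAt (f := fun s : ℝ ↦ (q.1, s)) q.2 hd.hasFDerivAt
      ((hasDerivAt_const _ _).prodMk (hasDerivAt_id _))).deriv

theorem contDiffOn_iteratedDeriv {F : ℝ → ℝ} {U : Set ℝ} (hU : IsOpen U) (hF : ContDiffOn ℝ ∞ F U)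
    (j : ℕ) : ContDiffOn ℝ ∞ (iteratedDeriv j F) U := by
  induction j with
  | zero => simpa only [iteratedDeriv_zero] using hF
  | succ j ih => simpa only [iteratedDeriv_succ] using ih.deriv_of_isOpen hU (by simp)

theorem contDiff_iteratedDeriv {F : ℝ → ℝ} (hF : ContDiff ℝ ∞ F) (j : ℕ) :
    ContDiff ℝ ∞ (iteratedDeriv j F) :=
  contDiffOn_univ.1 (contDiffOn_iteratedDeriv isOpen_univ hF.contDiffOn j)

theorem iterate_Dop_eq_iteratedDeriv {F g : ℝ → ℝ} (hF : ContDiffOn ℝ ∞ F (Ioi 0))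
    (hg : ∀ t, 0 < t → g t = F (t ^ 2)) (j : ℕ) :
    ∀ t, 0 < t → Dop^[j] g t = iteratedDeriv j F (t ^ 2) := by
  induction j with
  | zero => simpa using hg
  | succ j ih =>
    intro t ht
    have hloc : Dop^[j] g =ᶠ[𝓝 t] fun s ↦ iteratedDeriv j F (s ^ 2) := by
      filter_upwards [lt_mem_nhds ht] with s hs using ih s hs
    have hd : DifferentiableAt ℝ (iteratedDeriv j F) (t ^ 2) :=
      ((contDiffOn_iteratedDeriv isOpen_Ioi hF j).differentiableOn (by simp)).differentiableAt
        (Ioi_mem_nhds (by positivity))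
    have hchain : HasDerivAt (fun s : ℝ ↦ iteratedDeriv j F (s ^ 2)) _ t :=
      HasDerivAt.comp (h₂ := iteratedDeriv j F) t hd.hasDerivAt (hasDerivAt_pow 2 t)
    rw [Function.iterate_succ_apply', Dop, hloc.deriv_eq, hchain.deriv, iteratedDeriv_succ]
    field_simp
    ring

theorem hasCompactSupport_iteratedDeriv {χ : ℝ → ℝ} (hχ : HasCompactSupport χ) (j : ℕ) :
    HasCompactSupport (iteratedDeriv j χ) := by
  induction j with
  | zero => simpa only [iteratedDeriv_zero] using hχ
  | succ j ih => simpa only [iteratedDeriv_succ] using ih.deriv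

theorem tsupport_iteratedDeriv_subset (χ : ℝ → ℝ) (j : ℕ) :
    tsupport (iteratedDeriv j χ) ⊆ tsupport χ := by
  induction j with
  | zero => simp
  | succ j ih => simpa only [iteratedDeriv_succ] using tsupport_deriv_subset.trans ih

theorem integrable_mul_of_tsupport_subset {χ F : ℝ → ℝ} {U : Set ℝ} (hU : IsOpen U)
    (hχ : Continuous χ) (hχc : HasCompactSupport χ) (hχU : tsupport χ ⊆ U) (hF : ContinuousOn F U) :
    Integrable (χ * F) := by
  refine Continuous.integrable_of_hasCompactSupport (continuous_of_tsupport fun x hx ↦ ?_)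
    hχc.mul_right
  exact hχ.continuousAt.mul
    (hF.continuousAt (hU.mem_nhds (hχU (tsupport_mul_subset_left hx))))

theorem integral_iteratedDeriv_mul {χ F : ℝ → ℝ} {U : Set ℝ} (hU : IsOpen U)
    (hχ : ContDiff ℝ ∞ χ) (hχc : HasCompactSupport χ) (hχU : tsupport χ ⊆ U)
    (hF : ContDiffOn ℝ ∞ F U) (N : ℕ) :
    ∫ u, iteratedDeriv N χ u * F u = (-1) ^ N * ∫ u, χ u * iteratedDeriv N F u := by
  induction N generalizing F with
  | zero => simp
  | succ N ih =>
    have hχN := contDiff_iteratedDeriv hχ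
    have hNc := hasCompactSupport_iteratedDeriv hχc
    have hNU (j : ℕ) := (tsupport_iteratedDeriv_subset χ j).trans hχU
    have hF' : ContDiffOn ℝ ∞ (deriv F) U := hF.deriv_of_isOpen hU (by simp)
    have hparts := integral_mul_deriv_eq_deriv_mul_of_integrable
      (u := iteratedDeriv N χ) (u' := iteratedDeriv (N + 1) χ) (v := F) (v' := deriv F)
      (fun x _ ↦ by
        rw [iteratedDeriv_succ]
        exact ((hχN N).differentiable (by simp) x).hasDerivAt)
      (fun x hx ↦ ((hF.differentiableOn (by simp)).differentiableAt
        (hU.mem_nhds (hNU N hx))).hasDerivAt)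
      (integrable_mul_of_tsupport_subset hU (hχN N).continuous (hNc N) (hNU N) hF'.continuousOn)
      (integrable_mul_of_tsupport_subset hU (hχN _).continuous (hNc _)
        (hNU _) hF.continuousOn)
      (integrable_mul_of_tsupport_subset hU (hχN N).continuous (hNc N) (hNU N) hF.continuousOn)
    rw [← neg_eq_iff_eq_neg.2 hparts, ih hF', iteratedDeriv_succ', pow_succ]
    ring

theorem iteratedDeriv_polynomial_eval (p : Polynomial ℝ) (j : ℕ) :
    iteratedDeriv j (fun s ↦ p.eval s) = fun s ↦ (Polynomial.derivative^[j] p).eval s := by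
  induction j with
  | zero => simp
  | succ j ih =>
    ext s
    rw [iteratedDeriv_succ, ih, Polynomial.deriv, Function.iterate_succ_apply']

theorem iteratedDeriv_one_sub_sq_pow (k : ℕ) :
    iteratedDeriv (2 * k) (fun s : ℝ ↦ (1 - s ^ 2) ^ k) =
      fun _ ↦ (-1) ^ k * ((2 * k).factorial : ℝ) := by
  let q : Polynomial ℝ := 1 - Polynomial.X ^ 2
  have hq : q.natDegree ≤ 2 := by
    simp only [q]
    compute_degree
  have hdeg : (Polynomial.derivative^[2 * k] (q ^ k)).natDegree ≤ 0 := by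
    have := Polynomial.natDegree_iterate_derivative (q ^ k) (2 * k)
    have := Polynomial.natDegree_pow_le_of_le k hq
    omega
  have hlead : (q ^ k).coeff (2 * k) = (-1) ^ k := by
    rw [mul_comm, Polynomial.coeff_pow_of_natDegree_le hq]
    simp [q, Polynomial.coeff_one]
  have hcoeff : (Polynomial.derivative^[2 * k] (q ^ k)).coeff 0 =
      (-1) ^ k * ((2 * k).factorial : ℝ) := by
    rw [Polynomial.coeff_iterate_derivative, zero_add, hlead, Nat.descFactorial_self,
      nsmul_eq_mul, mul_comm]
  have heval : (fun s : ℝ ↦ (1 - s ^ 2) ^ k) = fun s ↦ (q ^ k).eval s := by simp [q]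
  rw [heval, iteratedDeriv_polynomial_eval, Polynomial.eq_C_of_natDegree_le_zero hdeg, hcoeff]
  simp

theorem intervalIntegral_eq_integral_of_support_subset_Icc {f : ℝ → ℝ} {a b : ℝ} (hab : a ≤ b)
    (hf : Function.support f ⊆ Icc a b) : ∫ s in a..b, f s = ∫ s, f s := by
  rw [intervalIntegral.integral_of_le hab, ← integral_Icc_eq_integral_Ioc]
  exact setIntegral_eq_integral_of_forall_compl_eq_zero fun s hs ↦
    Function.notMem_support.1 fun h ↦ hs (hf h)

theorem iteratedDeriv_comp_sub_mul_of_even {ψ : ℝ → ℝ} (hψ : ContDiff ℝ ∞ ψ) (a b : ℝ) {N : ℕ}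
    (hN : Even N) : iteratedDeriv N (fun s ↦ ψ (a - b * s)) =
      fun s ↦ b ^ N * iteratedDeriv N ψ (a - b * s) := by
  have hsub : ContDiff ℝ N fun y ↦ ψ (a - y) :=
    (hψ.of_le (by exact_mod_cast le_top)).comp (contDiff_const.sub contDiff_id)
  rw [iteratedDeriv_comp_const_mul hsub, iteratedDeriv_comp_const_sub]
  simp [hN.neg_one_pow]

theorem integral_iteratedDeriv_comp_mul_one_sub_sq_pow (k : ℕ) {ψ : ℝ → ℝ} (hψ : ContDiff ℝ ∞ ψ)
    (hψs : tsupport ψ ⊆ Icc (-1) 1) {a b : ℝ} (hb : 0 < b) (hab : |a| + 1 ≤ b) :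
    ∫ s in (-1 : ℝ)..1, iteratedDeriv (2 * k) ψ (a - b * s) * (1 - s ^ 2) ^ k =
      (-1) ^ k * ((2 * k).factorial : ℝ) / b ^ (2 * k + 1) * ∫ u, ψ u := by
  have hmem (s : ℝ) (hs : a - b * s ∈ tsupport ψ) : s ∈ Icc (-1 : ℝ) 1 := by
    obtain ⟨h1, h2⟩ := hψs hs
    obtain ⟨h3, h4⟩ := abs_le.1 (le_sub_iff_add_le.2 hab)
    exact ⟨by nlinarith, by nlinarith⟩
  have hχ : ContDiff ℝ ∞ fun s ↦ ψ (a - b * s) := hψ.comp (by fun_prop)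
  have hχc : HasCompactSupport fun s ↦ ψ (a - b * s) :=
    .of_support_subset_isCompact isCompact_Icc fun s hs ↦ hmem s (subset_tsupport ψ hs)
  have hparts := integral_iteratedDeriv_mul isOpen_univ hχ hχc (subset_univ _)
    (F := fun s ↦ (1 - s ^ 2) ^ k) (by fun_prop) (2 * k)
  have hscale : ∫ s, ψ (a - b * s) = b⁻¹ * ∫ u, ψ u := by
    rw [Measure.integral_comp_mul_left (fun y ↦ ψ (a - y)), integral_sub_left_eq_self,
      abs_of_pos (inv_pos.2 hb), smul_eq_mul]
  rw [intervalIntegral_eq_integral_of_support_subset_Icc (by norm_num) fun s hs ↦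
    hmem s (tsupport_iteratedDeriv_subset ψ _ (subset_tsupport _ (left_ne_zero_of_mul hs)))]
  rw [iteratedDeriv_comp_sub_mul_of_even hψ a b (even_two_mul k), iteratedDeriv_one_sub_sq_pow,
    integral_mul_const, hscale, (even_two_mul k).neg_one_pow, one_mul] at hparts
  simp only [mul_assoc, integral_const_mul] at hparts
  rw [pow_succ]
  field_simp at hparts ⊢
  linear_combination hparts

theorem continuous_integral_integral_mul_comp_mul {X : Type*} [TopologicalSpace X] [CompactSpace X]
    [R1Space X] [SecondCountableTopology X] [MeasurableSpace X] [OpensMeasurableSpace X]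
    (μ : Measure X) [IsFiniteMeasure μ] {ψ : ℝ → ℝ} (hψ : Continuous ψ)
    (hψs : tsupport ψ ⊆ Icc (-1) 1) {H : X → ℝ → ℝ} (hH : Continuous (Function.uncurry H)) :
    Continuous fun ε : ℝ ↦ ∫ x, (∫ s, ψ s * H x (ε * s)) ∂μ := by
  have hinner : Continuous fun q : ℝ × X ↦ ∫ s in Icc (-1) 1, ψ s * H q.2 (q.1 * s) :=
    continuous_parametric_integral_of_continuous (f := fun (q : ℝ × X) s ↦ ψ s * H q.2 (q.1 * s))
      ((hψ.comp continuous_snd).mul (hH.comp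
        (f := fun r : (ℝ × X) × ℝ ↦ (r.1.2, r.1.1 * r.2)) (by fun_prop))) isCompact_Icc
  have hrestrict (ε : ℝ) (x : X) :
      ∫ s in Icc (-1) 1, ψ s * H x (ε * s) = ∫ s, ψ s * H x (ε * s) :=
    setIntegral_eq_integral_of_forall_compl_eq_zero fun s hs ↦ by
      rw [image_eq_zero_of_notMem_tsupport fun h ↦ hs (hψs h), zero_mul]
  simp only [hrestrict] at hinner
  simpa using continuous_parametric_integral_of_continuous (μ := μ)
    (f := fun (ε : ℝ) x ↦ ∫ s, ψ s * H x (ε * s)) hinner isCompact_univ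

theorem tendsto_integral_integral_mul_comp_mul {X : Type*} [TopologicalSpace X] [CompactSpace X]
    [R1Space X] [SecondCountableTopology X] [MeasurableSpace X] [OpensMeasurableSpace X]
    (μ : Measure X) [IsFiniteMeasure μ] {ψ : ℝ → ℝ} (hψ : Continuous ψ)
    (hψs : tsupport ψ ⊆ Icc (-1) 1) {H : X → ℝ → ℝ} {δ : ℝ} (hδ : 0 < δ)
    (hH : ContinuousOn (Function.uncurry H) (univ ×ˢ Icc (-δ) δ)) :
    Tendsto (fun ε ↦ ∫ x, (∫ s, ψ s * H x (ε * s)) ∂μ) (𝓝 0)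
      (𝓝 ((∫ s, ψ s) * ∫ x, H x 0 ∂μ)) := by
  let clamp : ℝ → ℝ := fun u ↦ max (-δ) (min δ u)
  have hclamp_mem (u : ℝ) : clamp u ∈ Icc (-δ) δ :=
    ⟨le_max_left _ _, max_le (by linarith) (min_le_left _ _)⟩
  have hclamp_eq {u : ℝ} (hu : |u| ≤ δ) : clamp u = u := by
    obtain ⟨h1, h2⟩ := abs_le.1 hu
    simp [clamp, h1, h2]
  have hlim := (continuous_integral_integral_mul_comp_mul μ hψ hψs (H := fun x u ↦ H x (clamp u))
    (hH.comp_continuous (f := fun q : X × ℝ ↦ (q.1, clamp q.2)) (by fun_prop)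
      fun q ↦ ⟨mem_univ _, hclamp_mem _⟩)).tendsto 0
  simp only [zero_mul, hclamp_eq (abs_zero.trans_le hδ.le), integral_mul_const,
    integral_const_mul] at hlim
  refine hlim.congr' ?_
  filter_upwards [Metric.closedBall_mem_nhds (0 : ℝ) hδ] with ε hε
  congr with x
  congr with s
  rcases eq_or_ne (ψ s) 0 with h0 | h0
  · simp [h0]
  · have hs : |s| ≤ 1 := abs_le.2 (hψs (subset_tsupport ψ h0))
    have hεs : |ε * s| ≤ δ := by
      rw [abs_mul]
      exact (mul_le_of_le_one_right (abs_nonneg _) hs).trans (by simpa using hε)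
    rw [hclamp_eq hεs]

end Calculus

section SqDistDensity

variable {E : Type*} [NormedAddCommGroup E] [InnerProductSpace ℝ E] [FiniteDimensional ℝ E]
  [MeasurableSpace E] [BorelSpace E] {f : E → ℝ} {χ : ℝ → ℝ}

/-- The density at `τ` of the law of the squared distance `|x - y| ^ 2` when `y` has density `f`,
expressed through the integral of `f` over the sphere of radius `√τ` about `x`. -/
noncomputable def sqDistDensity (f : E → ℝ) (x : E) (τ : ℝ) : ℝ :=
  √τ ^ (finrank ℝ E - 2) / 2 *
    ∫ σ : sphere (0 : E) 1, f (x - √τ • (σ : E)) ∂(volume : Measure E).toSphere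

theorem contDiffOn_sqDistDensity (hf : ContDiff ℝ ∞ f) :
    ContDiffOn ℝ ∞ (Function.uncurry (sqDistDensity f)) {q | 0 < q.2} := by
  have hsqrt : ContDiffOn ℝ ∞ (fun q : E × ℝ ↦ √q.2) {q | 0 < q.2} :=
    contDiffOn_snd.sqrt fun q (hq : 0 < q.2) ↦ hq.ne'
  have hmean := contDiff_integral_of_isCompact (isCompact_sphere (0 : E) 1)
    (volume : Measure E).toSphere (Q := fun (q : E × ℝ) σ ↦ f (q.1 - q.2 • σ))
    (hf.comp (by fun_prop))
  exact ((hsqrt.pow _).div_const 2).mul (hmean.comp_contDiffOn (contDiffOn_fst.prodMk hsqrt))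

theorem integral_mul_sqDistDensity (hE : 2 < finrank ℝ E) (hf : Continuous f)
    (hfc : HasCompactSupport f) (hχ : Continuous χ) (x : E) :
    ∫ τ, χ τ * sqDistDensity f x τ = ∫ y, χ (‖y‖ ^ 2) * f (x - y) := by
  have : Nontrivial E := nontrivial_of_finrank_pos (R := ℝ) (by omega)
  have hneg (τ : ℝ) (hτ : τ ∉ Ioi 0) : χ τ * sqDistDensity f x τ = 0 := by
    have hsqrt : √τ = 0 := Real.sqrt_eq_zero_of_nonpos (not_lt.1 hτ)
    simp [sqDistDensity, hsqrt, (Nat.sub_pos_of_lt hE).ne']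
  have hint : Integrable fun y ↦ χ (‖y‖ ^ 2) * f (x - y) :=
    Continuous.integrable_of_hasCompactSupport (by fun_prop)
      (hfc.comp_homeomorph (Homeomorph.subLeft x)).mul_left
  rw [← setIntegral_eq_integral_of_forall_compl_eq_zero hneg,
    ← integral_comp_rpow_Ioi_of_pos two_pos, integral_eq_integral_Ioi_integral_sphere volume hint]
  refine setIntegral_congr_fun measurableSet_Ioi fun r (hr : 0 < r) ↦ ?_
  obtain ⟨d, hd⟩ := Nat.exists_eq_add_of_lt hE
  have hd1 : finrank ℝ E - 1 = d + 2 := by omega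
  have hd2 : finrank ℝ E - 2 = d + 1 := by omega
  have hnorm : (2 : ℝ) - 1 = 1 := by norm_num
  simp only [sqDistDensity, hd1, hd2, hnorm, Real.rpow_one, Real.rpow_two, Real.sqrt_sq hr.le,
    norm_smul, norm_eq_of_mem_sphere, Real.norm_of_nonneg hr.le, mul_one, integral_const_mul,
    smul_eq_mul]
  ring

theorem integral_mul_sqDistDensity_comp_add (hE : 2 < finrank ℝ E) (hf : Continuous f)
    (hfc : HasCompactSupport f) (hχ : Continuous χ) (x z : E) :
    ∫ u, χ u * sqDistDensity f x (‖z - x‖ ^ 2 + u) =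
      ∫ v, f (z + v) * χ (‖v‖ ^ 2 + 2 * ⟪z, v⟫_ℝ - 2 * ⟪x, v⟫_ℝ) := by
  calc ∫ u, χ u * sqDistDensity f x (‖z - x‖ ^ 2 + u)
      = ∫ τ, χ (τ - ‖z - x‖ ^ 2) * sqDistDensity f x τ := by
        rw [← integral_add_left_eq_self (fun τ ↦ χ (τ - _) * _) (‖z - x‖ ^ 2)]
        simp only [add_sub_cancel_left]
    _ = ∫ y, χ (‖y‖ ^ 2 - ‖z - x‖ ^ 2) * f (x - y) :=
        integral_mul_sqDistDensity (χ := fun τ ↦ χ (τ - ‖z - x‖ ^ 2)) hE hf hfc (by fun_prop) x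
    _ = ∫ v, χ (‖x - z - v‖ ^ 2 - ‖z - x‖ ^ 2) * f (x - (x - z - v)) :=
        (integral_sub_left_eq_self (fun y ↦ χ (‖y‖ ^ 2 - ‖z - x‖ ^ 2) * f (x - y)) volume
          (x - z)).symm
    _ = _ := by
        congr with v
        rw [mul_comm, norm_sub_rev z, norm_sub_sq_real (x - z), inner_sub_left]
        congr 2 <;> [abel; ring]

theorem integral_sphere_comp_add_mul_inner {m : ℕ} (hE : finrank ℝ E = m + 2) (hχ : Continuous χ)
    (a b : ℝ) {v : E} (hv : v ≠ 0) :
    ∫ θ : sphere (0 : E) 1, χ (a + b * ⟪(θ : E), v⟫_ℝ) ∂(volume : Measure E).toSphere =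
      (volume : Measure (EuclideanSpace ℝ (Fin (m + 1)))).toSphere.real univ *
        ∫ α in (0 : ℝ)..Real.pi, Real.sin α ^ m * χ (a + b * ‖v‖ * Real.cos α) := by
  have hnorm : ‖v‖ ≠ 0 := norm_ne_zero_iff.2 hv
  rw [← integral_sphere_comp_inner hE (e := ‖v‖⁻¹ • v) (by simp [norm_smul, hnorm])
    (h := fun s ↦ χ (a + b * ‖v‖ * s)) (by fun_prop)]
  congr with θ
  rw [inner_smul_right]
  field_simp

theorem integral_sphere_integral_mul_sqDistDensity {m : ℕ} (hE : finrank ℝ E = m + 3)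
    (hf : Continuous f) (hfc : HasCompactSupport f) (hχ : Continuous χ) (z : E) :
    ∫ θ : sphere (0 : E) 1, (∫ u, χ u * sqDistDensity f θ (‖z - θ‖ ^ 2 + u))
        ∂(volume : Measure E).toSphere =
      (volume : Measure (EuclideanSpace ℝ (Fin (m + 2)))).toSphere.real univ *
        ∫ v, f (z + v) * ∫ α in (0 : ℝ)..Real.pi, Real.sin α ^ (m + 1) *
          χ (‖v‖ ^ 2 + 2 * ⟪z, v⟫_ℝ - 2 * ‖v‖ * Real.cos α) := by
  have : Nontrivial E := nontrivial_of_finrank_pos (R := ℝ) (by omega)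
  have hcont : Continuous (Function.uncurry fun (θ : sphere (0 : E) 1) v ↦
      f (z + v) * χ (‖v‖ ^ 2 + 2 * ⟪z, v⟫_ℝ - 2 * ⟪(θ : E), v⟫_ℝ)) := by
    fun_prop
  simp only [integral_mul_sqDistDensity_comp_add (by omega) hf hfc hχ]
  rw [integral_integral_swap_of_hasCompactSupport hcont, ← integral_const_mul]
  · refine integral_congr_ae ?_
    filter_upwards [ae_ne_zero] with v hv
    have hzonal := integral_sphere_comp_add_mul_inner hE hχ (‖v‖ ^ 2 + 2 * ⟪z, v⟫_ℝ) (-2) hv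
    simp only [neg_mul, ← sub_eq_add_neg] at hzonal
    rw [integral_const_mul, hzonal]
    ring
  · refine HasCompactSupport.of_support_subset_isCompact (isCompact_univ.prod
      (hfc.comp_homeomorph (Homeomorph.addLeft z)).isCompact) fun q hq ↦ ⟨mem_univ _, ?_⟩
    exact subset_tsupport _ (left_ne_zero_of_mul hq)

end SqDistDensity

section Mollification

variable {ψ : ℝ → ℝ}

theorem integral_mul_iteratedDeriv_comp_add_mul (hψ : ContDiff ℝ ∞ ψ)
    (hψs : tsupport ψ ⊆ Icc (-1) 1) {F : ℝ → ℝ} {U : Set ℝ} (hU : IsOpen U)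
    (hF : ContDiffOn ℝ ∞ F U) {b ε : ℝ} (hε : 0 < ε) (hbU : closedBall b ε ⊆ U) {N : ℕ}
    (hN : Even N) :
    ∫ s, ψ s * iteratedDeriv N F (b + ε * s) =
      (ε ^ (N + 1))⁻¹ * ∫ u, iteratedDeriv N ψ (ε⁻¹ * u) * F (b + u) := by
  let χ : ℝ → ℝ := fun u ↦ ψ (ε⁻¹ * u)
  have hχ : ContDiff ℝ ∞ χ := hψ.comp (by fun_prop)
  have hmem {u : ℝ} (hu : u ∈ tsupport χ) : |u| ≤ ε := by
    have h : |ε⁻¹ * u| ≤ 1 :=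
      abs_le.2 (hψs (tsupport_comp_subset_preimage ψ (continuous_const_mul ε⁻¹) hu))
    rwa [abs_mul, abs_inv, abs_of_pos hε, inv_mul_le_iff₀ hε, mul_one] at h
  have hχc : HasCompactSupport χ := .of_support_subset_isCompact (isCompact_Icc (a := -ε) (b := ε))
    fun u hu ↦ abs_le.1 (hmem (subset_tsupport χ hu))
  have hparts := integral_iteratedDeriv_mul (hU.preimage (continuous_const_add b)) hχ hχc
    (fun u hu ↦ hbU (by simpa [Real.dist_eq] using hmem hu))
    (hF.comp (contDiff_const.add contDiff_id).contDiffOn fun u hu ↦ hu) N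
  have hscale := Measure.integral_comp_mul_left (fun u ↦ χ u * iteratedDeriv N F (b + u)) ε
  have hcancel (s : ℝ) : ε⁻¹ * (ε * s) = s := inv_mul_cancel_left₀ hε.ne' s
  simp only [χ, hcancel, abs_of_pos (inv_pos.2 hε), smul_eq_mul] at hscale
  simp only [χ, iteratedDeriv_comp_const_mul (hψ.of_le (by exact_mod_cast le_top)),
    Function.comp_def, id, iteratedDeriv_comp_const_add, hN.neg_one_pow, one_mul, mul_assoc,
    integral_const_mul] at hparts
  rw [hscale, ← hparts, pow_succ, mul_inv, inv_pow]
  ring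

/-- The `2k`-th derivative at `a`, mollified by `ψ` at scale `ε`, of the function
`x ↦ b⁻¹ (1 - (x / b) ^ 2)₊ ^ k`, after the substitution `x = b s`. -/
noncomputable def mollifiedDeriv (ψ : ℝ → ℝ) (k : ℕ) (a b ε : ℝ) : ℝ :=
  (ε ^ (2 * k + 1))⁻¹ *
    ∫ s in (-1 : ℝ)..1, iteratedDeriv (2 * k) ψ (ε⁻¹ * (a - b * s)) * (1 - s ^ 2) ^ k

theorem mollifiedDeriv_eq (k : ℕ) (hψ : ContDiff ℝ ∞ ψ) (hψs : tsupport ψ ⊆ Icc (-1) 1)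
    (hψ1 : ∫ s, ψ s = 1) {a b ε : ℝ} (hε : 0 < ε) (hab : |a| + ε ≤ b) :
    mollifiedDeriv ψ k a b ε = (-1) ^ k * ((2 * k).factorial : ℝ) / b ^ (2 * k + 1) := by
  have hb : 0 < b := by linarith [abs_nonneg a]
  have hscaled : |ε⁻¹ * a| + 1 ≤ ε⁻¹ * b := by
    rw [abs_mul, abs_inv, abs_of_pos hε, ← inv_mul_cancel₀ hε.ne', ← mul_add]
    gcongr
  have h := integral_iteratedDeriv_comp_mul_one_sub_sq_pow k hψ hψs (by positivity) hscaled
  rw [hψ1, mul_one] at h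
  simp only [mollifiedDeriv, mul_sub, ← mul_assoc, h, mul_pow, inv_pow]
  field_simp

theorem continuous_mollifiedDeriv {X : Type*} [TopologicalSpace X] [FirstCountableTopology X]
    [LocallyCompactSpace X] (k : ℕ) (hψ : ContDiff ℝ ∞ ψ) {a b : X → ℝ} (ha : Continuous a)
    (hb : Continuous b) (ε : ℝ) : Continuous fun x ↦ mollifiedDeriv ψ k (a x) (b x) ε := by
  have := (contDiff_iteratedDeriv hψ (2 * k)).continuous
  exact continuous_const.mul
    (intervalIntegral.continuous_parametric_intervalIntegral_of_continuous'
      (f := fun x s ↦ iteratedDeriv (2 * k) ψ (ε⁻¹ * (a x - b x * s)) * (1 - s ^ 2) ^ k)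
      (by fun_prop) _ _)

theorem exists_abs_integral_mul_one_sub_sq_pow_le (k : ℕ) {h : ℝ → ℝ} (hh : Continuous h)
    (hhc : HasCompactSupport h) : ∃ M, 0 ≤ M ∧ ∀ y : ℝ → ℝ,
      |∫ s in (-1 : ℝ)..1, h (y s) * (1 - s ^ 2) ^ k| ≤ M := by
  obtain ⟨C, hC⟩ := hh.bounded_above_of_compact_support hhc
  have hC0 : 0 ≤ C := (norm_nonneg _).trans (hC 0)
  refine ⟨C * |1 - (-1)|, by positivity, fun y ↦ (Real.norm_eq_abs _).symm.le.trans
    (intervalIntegral.norm_integral_le_of_norm_le_const fun s hs ↦ ?_)⟩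
  rw [uIoc_of_le (by norm_num)] at hs
  have hsq : s ^ 2 ≤ 1 := (sq_le_one_iff_abs_le_one s).2 (abs_le.2 ⟨hs.1.le, hs.2⟩)
  rw [norm_mul, norm_pow, Real.norm_of_nonneg (sub_nonneg.2 hsq)]
  exact (mul_le_mul (hC _) (pow_le_one₀ (sub_nonneg.2 hsq) (sub_le_self _ (sq_nonneg s)))
    (pow_nonneg (sub_nonneg.2 hsq) k) hC0).trans_eq (mul_one C)

theorem exists_abs_mollifiedDeriv_le (k : ℕ) (hψ : ContDiff ℝ ∞ ψ)
    (hψs : tsupport ψ ⊆ Icc (-1) 1) (hψ1 : ∫ s, ψ s = 1) {c : ℝ} (hc : c < 1) :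
    ∃ C, ∀ a b ε : ℝ, 0 < b → |a| ≤ c * b → 0 < ε →
      |mollifiedDeriv ψ k a b ε| ≤ C * (b ^ (2 * k + 1))⁻¹ := by
  have hψc : HasCompactSupport ψ := isCompact_Icc.of_isClosed_subset (isClosed_tsupport ψ) hψs
  obtain ⟨M, hM0, hM⟩ := exists_abs_integral_mul_one_sub_sq_pow_le k
    (contDiff_iteratedDeriv hψ (2 * k)).continuous (hasCompactSupport_iteratedDeriv hψc _)
  refine ⟨max (2 * k).factorial (M * ((1 - c) ^ (2 * k + 1))⁻¹), fun a b ε hb hab hε ↦ ?_⟩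
  by_cases hle : |a| + ε ≤ b
  · rw [mollifiedDeriv_eq k hψ hψs hψ1 hε hle, abs_div, abs_mul, abs_pow, abs_neg, abs_one,
      one_pow, one_mul, Nat.abs_cast, abs_of_pos (by positivity), div_eq_mul_inv]
    gcongr
    exact le_max_left _ _
  · have hbε : (1 - c) * b ≤ ε := by linarith
    have : 0 < 1 - c := sub_pos.2 hc
    calc |mollifiedDeriv ψ k a b ε|
        ≤ (ε ^ (2 * k + 1))⁻¹ * M := by
          rw [mollifiedDeriv, abs_mul, abs_of_pos (by positivity)]
          gcongr
          exact hM _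
      _ ≤ (((1 - c) * b) ^ (2 * k + 1))⁻¹ * M := by gcongr
      _ = M * ((1 - c) ^ (2 * k + 1))⁻¹ * (b ^ (2 * k + 1))⁻¹ := by
          rw [mul_pow, mul_inv]
          ring
      _ ≤ _ := by
          gcongr
          exact le_max_right _ _

theorem tendsto_mollifiedDeriv (k : ℕ) (hψ : ContDiff ℝ ∞ ψ) (hψs : tsupport ψ ⊆ Icc (-1) 1)
    (hψ1 : ∫ s, ψ s = 1) {a b : ℝ} (hab : |a| < b) :
    Tendsto (mollifiedDeriv ψ k a b) (𝓝[>] 0)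
      (𝓝 ((-1) ^ k * ((2 * k).factorial : ℝ) / b ^ (2 * k + 1))) := by
  refine tendsto_const_nhds.congr' ?_
  filter_upwards [Ioo_mem_nhdsGT (sub_pos.2 hab)] with ε hε
  exact (mollifiedDeriv_eq k hψ hψs hψ1 hε.1 (by linarith [hε.2])).symm

end Mollification

section Backprojection

theorem sq_one_sub_norm_le_norm_sub_sq {E : Type*} [SeminormedAddCommGroup E] {z : E} (hz : ‖z‖ < 1)
    (θ : sphere (0 : E) 1) : (1 - ‖z‖) ^ 2 ≤ ‖z - θ‖ ^ 2 := by
  have h := norm_sub_norm_le (θ : E) z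
  rw [norm_eq_of_mem_sphere, norm_sub_rev] at h
  exact pow_le_pow_left₀ (sub_nonneg.2 hz.le) h 2

variable {E : Type*} [NormedAddCommGroup E] [InnerProductSpace ℝ E] {f : E → ℝ} {z : E}

theorem abs_norm_sq_add_two_mul_inner_le {v : E} (h : ‖z + v‖ ≤ 1) :
    |‖v‖ ^ 2 + 2 * ⟪z, v⟫_ℝ| ≤ (1 + ‖z‖) / 2 * (2 * ‖v‖) := by
  have hinner : ‖v‖ ^ 2 + 2 * ⟪z, v⟫_ℝ = ⟪z + v + z, v⟫_ℝ := by
    rw [inner_add_left, inner_add_left, real_inner_self_eq_norm_sq]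
    ring
  calc |‖v‖ ^ 2 + 2 * ⟪z, v⟫_ℝ| ≤ ‖z + v + z‖ * ‖v‖ := hinner ▸ abs_real_inner_le_norm _ _
    _ ≤ (1 + ‖z‖) * ‖v‖ := by
        gcongr
        exact (norm_add_le _ _).trans (by gcongr)
    _ = _ := by ring

variable [FiniteDimensional ℝ E] [MeasurableSpace E] [BorelSpace E] {ψ : ℝ → ℝ} {k : ℕ}

theorem const_mul_newtonPotential_eq (hE : finrank ℝ E = 2 * k + 3) (c : ℝ) :
    c / 2 ^ (2 * k + 1) * newtonPotential f z =
      ∫ v, f (z + v) * (c / (2 * ‖v‖) ^ (2 * k + 1)) := by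
  rw [newtonPotential, hE, ← integral_const_mul]
  congr with v
  rw [mul_pow, Nat.add_sub_cancel (2 * k + 1) 2, div_mul_eq_div_div]
  ring

theorem tendsto_integral_mul_mollifiedDeriv (hE : finrank ℝ E = 2 * k + 3) (hf : Continuous f)
    (hfs : Function.support f ⊆ closedBall 0 1) (hψ : ContDiff ℝ ∞ ψ)
    (hψs : tsupport ψ ⊆ Icc (-1) 1) (hψ1 : ∫ s, ψ s = 1) (hz : ‖z‖ < 1) :
    Tendsto (fun ε ↦ ∫ v, f (z + v) * mollifiedDeriv ψ k (‖v‖ ^ 2 + 2 * ⟪z, v⟫_ℝ) (2 * ‖v‖) ε)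
      (𝓝[>] 0) (𝓝 ((-1) ^ k * ((2 * k).factorial : ℝ) / 2 ^ (2 * k + 1) *
        newtonPotential f z)) := by
  have : Nontrivial E := nontrivial_of_finrank_pos (R := ℝ) (by omega)
  have hc : (1 + ‖z‖) / 2 < 1 := by linarith
  obtain ⟨C, hC⟩ := exists_abs_mollifiedDeriv_le k hψ hψs hψ1 hc
  have hfc : HasCompactSupport f := .of_support_subset_isCompact (isCompact_closedBall 0 1) hfs
  have habs {v : E} (hv : f (z + v) ≠ 0) :
      |‖v‖ ^ 2 + 2 * ⟪z, v⟫_ℝ| ≤ (1 + ‖z‖) / 2 * (2 * ‖v‖) :=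
    abs_norm_sq_add_two_mul_inner_le (mem_closedBall_zero_iff.1 (hfs hv))
  have hint : Integrable fun v ↦ C * |f (z + v)| / 2 ^ (2 * k + 1) * (‖v‖ ^ (2 * k + 1))⁻¹ :=
    integrable_mul_inv_norm_pow (by omega) (by fun_prop)
      ((hfc.comp_homeomorph (Homeomorph.addLeft z)).abs.mul_left.mul_right)
  rw [const_mul_newtonPotential_eq hE]
  refine tendsto_integral_filter_of_dominated_convergence _ ?_ ?_ hint ?_
  · refine .of_forall fun ε ↦ Continuous.aestronglyMeasurable ?_
    exact (by fun_prop : Continuous fun v ↦ f (z + v)).mul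
      (continuous_mollifiedDeriv k hψ (by fun_prop) (by fun_prop) ε)
  · filter_upwards [self_mem_nhdsWithin] with ε (hε : 0 < ε)
    filter_upwards [ae_ne_zero] with v hv
    rcases eq_or_ne (f (z + v)) 0 with h0 | h0
    · simp [h0]
    · have := hC _ _ ε (by positivity) (habs h0) hε
      rw [norm_mul, Real.norm_eq_abs, Real.norm_eq_abs]
      calc _ ≤ |f (z + v)| * (C * ((2 * ‖v‖) ^ (2 * k + 1))⁻¹) := by gcongr
        _ = _ := by rw [mul_pow, mul_inv]; ring
  · filter_upwards [ae_ne_zero] with v hv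
    rcases eq_or_ne (f (z + v)) 0 with h0 | h0
    · simp [h0]
    · have hv' : 0 < 2 * ‖v‖ := by positivity
      exact (tendsto_mollifiedDeriv k hψ hψs hψ1
        ((habs h0).trans_lt (mul_lt_of_lt_one_left hv' hc))).const_mul _

theorem integral_sphere_integral_mul_iteratedDeriv_sqDistDensity (hE : finrank ℝ E = 2 * k + 3)
    (hf : ContDiff ℝ ∞ f) (hfc : HasCompactSupport f) (hψ : ContDiff ℝ ∞ ψ)
    (hψs : tsupport ψ ⊆ Icc (-1) 1) (hz : ‖z‖ < 1) {ε : ℝ} (hε : 0 < ε)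
    (hεz : ε < (1 - ‖z‖) ^ 2) :
    ∫ θ : sphere (0 : E) 1, (∫ s, ψ s * iteratedDeriv (2 * k) (sqDistDensity f θ)
        (‖z - θ‖ ^ 2 + ε * s)) ∂(volume : Measure E).toSphere =
      (volume : Measure (EuclideanSpace ℝ (Fin (2 * k + 2)))).toSphere.real univ *
        ∫ v, f (z + v) * mollifiedDeriv ψ k (‖v‖ ^ 2 + 2 * ⟪z, v⟫_ℝ) (2 * ‖v‖) ε := by
  have hψk : Continuous (iteratedDeriv (2 * k) ψ) := (contDiff_iteratedDeriv hψ _).continuous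
  have hparts (θ : sphere (0 : E) 1) := integral_mul_iteratedDeriv_comp_add_mul
    (F := sqDistDensity f θ) (b := ‖z - θ‖ ^ 2) (N := 2 * k) hψ hψs isOpen_Ioi
    ((contDiffOn_sqDistDensity hf).comp (contDiff_prodMk_right (θ : E)).contDiffOn fun τ hτ ↦ hτ)
    hε (fun u hu ↦ ?_) (even_two_mul k)
  · simp only [hparts, integral_const_mul]
    rw [integral_sphere_integral_mul_sqDistDensity hE hf.continuous hfc
      (χ := fun u ↦ iteratedDeriv (2 * k) ψ (ε⁻¹ * u)) (by fun_prop), mul_left_comm,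
      ← integral_const_mul]
    congr with v
    rw [integral_sin_pow_odd_mul_comp_cos k
      (h := fun s ↦ iteratedDeriv (2 * k) ψ (ε⁻¹ * (‖v‖ ^ 2 + 2 * ⟪z, v⟫_ℝ - 2 * ‖v‖ * s)))
      (by fun_prop), mollifiedDeriv, mul_left_comm]
  · have := sq_one_sub_norm_le_norm_sub_sq hz θ
    rw [Real.closedBall_eq_Icc] at hu
    exact mem_Ioi.2 (by linarith [hu.1])

theorem exists_contDiff_integral_eq_one_tsupport_subset_Icc :
    ∃ ψ : ℝ → ℝ, ContDiff ℝ ∞ ψ ∧ tsupport ψ ⊆ Icc (-1) 1 ∧ ∫ s, ψ s = 1 := by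
  let bump : ContDiffBump (0 : ℝ) := ⟨1 / 2, 1, by norm_num, by norm_num⟩
  refine ⟨bump.normed volume, bump.contDiff_normed, ?_, bump.integral_normed⟩
  rw [bump.tsupport_normed_eq, Real.closedBall_eq_Icc]
  simp [bump]

theorem integral_sphere_iteratedDeriv_sqDistDensity (hE : finrank ℝ E = 2 * k + 3)
    (hf : ContDiff ℝ ∞ f) (hfs : Function.support f ⊆ closedBall 0 1) (hz : ‖z‖ < 1) :
    ∫ θ : sphere (0 : E) 1, iteratedDeriv (2 * k) (sqDistDensity f θ) (‖z - θ‖ ^ 2)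
        ∂(volume : Measure E).toSphere =
      (volume : Measure (EuclideanSpace ℝ (Fin (2 * k + 2)))).toSphere.real univ *
        ((-1) ^ k * ((2 * k).factorial : ℝ) / 2 ^ (2 * k + 1) * newtonPotential f z) := by
  obtain ⟨ψ, hψ, hψs, hψ1⟩ := exists_contDiff_integral_eq_one_tsupport_subset_Icc
  have hfc : HasCompactSupport f := .of_support_subset_isCompact (isCompact_closedBall 0 1) hfs
  have hgap : 0 < (1 - ‖z‖) ^ 2 := by
    have := sub_pos.2 hz
    positivity
  have hH : ContinuousOn (Function.uncurry fun (θ : sphere (0 : E) 1) u ↦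
      iteratedDeriv (2 * k) (sqDistDensity f θ) (‖z - θ‖ ^ 2 + u))
      (univ ×ˢ Icc (-((1 - ‖z‖) ^ 2 / 2)) ((1 - ‖z‖) ^ 2 / 2)) := by
    refine (contDiffOn_iteratedDeriv_snd (isOpen_lt continuous_const continuous_snd)
      (contDiffOn_sqDistDensity hf) (2 * k)).continuousOn.comp
      (f := fun q : sphere (0 : E) 1 × ℝ ↦ ((q.1 : E), ‖z - q.1‖ ^ 2 + q.2)) (by fun_prop) ?_
    rintro ⟨θ, u⟩ ⟨-, hu⟩
    have := sq_one_sub_norm_le_norm_sub_sq hz θ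
    exact (by linarith [hu.1] : 0 < ‖z - θ‖ ^ 2 + u)
  have hlhs := tendsto_integral_integral_mul_comp_mul (volume : Measure E).toSphere
    hψ.continuous hψs (half_pos hgap) hH
  simp only [hψ1, one_mul, add_zero] at hlhs
  refine tendsto_nhds_unique (hlhs.mono_left (nhdsWithin_le_nhds (s := Ioi 0)))
    (((tendsto_integral_mul_mollifiedDeriv hE hf.continuous hfs hψ hψs hψ1 hz).const_mul
      _).congr' ?_)
  filter_upwards [Ioo_mem_nhdsGT hgap] with ε hε
  exact (integral_sphere_integral_mul_iteratedDeriv_sqDistDensity hE hf hfc hψ hψs hz hε.1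
    hε.2).symm

end Backprojection

section Constants

theorem two_mul_Gamma_add_half (k : ℕ) :
    2 * (k.factorial : ℝ) * Real.Gamma (k + 3 / 2) =
      (2 * k + 1).factorial * √Real.pi / 2 ^ (2 * k) := by
  have h := Real.Gamma_mul_Gamma_add_half ((k : ℝ) + 1)
  have hdouble : 2 * ((k : ℝ) + 1) = (2 * k + 1 : ℕ) + 1 := by
    push_cast
    ring
  have hexp : (1 : ℝ) - ((2 * k + 1 : ℕ) + 1) = -(2 * k + 1 : ℕ) := by ring
  have hhalf : (k : ℝ) + 1 + 1 / 2 = k + 3 / 2 := by ring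
  rw [hdouble, hexp, hhalf, Real.Gamma_nat_eq_factorial, Real.Gamma_nat_eq_factorial,
    Real.rpow_neg two_pos.le, Real.rpow_natCast] at h
  rw [mul_assoc, h, pow_succ]
  field_simp

variable {E : Type*} [NormedAddCommGroup E] [InnerProductSpace ℝ E] [FiniteDimensional ℝ E]
  [MeasurableSpace E] [BorelSpace E]

theorem toSphere_real_univ_eq [Nontrivial E] : (volume : Measure E).toSphere.real univ =
    2 * Real.pi ^ ((finrank ℝ E : ℝ) / 2) / Real.Gamma ((finrank ℝ E : ℝ) / 2) := by
  have hn : 0 < (finrank ℝ E : ℝ) := Nat.cast_pos.2 finrank_pos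
  have hpos : 0 < (finrank ℝ E : ℝ) / 2 := half_pos hn
  have : 0 < Real.Gamma ((finrank ℝ E : ℝ) / 2) := Real.Gamma_pos_of_pos hpos
  have hpi : √Real.pi ^ finrank ℝ E = Real.pi ^ ((finrank ℝ E : ℝ) / 2) := by
    rw [Real.sqrt_eq_rpow, ← Real.rpow_mul_natCast Real.pi_pos.le, one_div_mul_eq_div]
  rw [Measure.toSphere_real_apply_univ, measureReal_def, InnerProductSpace.volume_ball,
    Real.Gamma_add_one hpos.ne', hpi, ENNReal.ofReal_one, one_pow, one_mul,
    ENNReal.toReal_ofReal (by positivity)]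
  field_simp

theorem toSphere_real_univ_of_finrank_even {k : ℕ} (hE : finrank ℝ E = 2 * k + 2) :
    (volume : Measure E).toSphere.real univ = 2 * Real.pi ^ (k + 1) / k.factorial := by
  have : Nontrivial E := nontrivial_of_finrank_pos (R := ℝ) (by omega)
  have hhalf : (finrank ℝ E : ℝ) / 2 = (k + 1 : ℕ) := by
    rw [hE]
    push_cast
    ring
  rw [toSphere_real_univ_eq, hhalf, Real.rpow_natCast, Nat.cast_succ, Real.Gamma_nat_eq_factorial]

theorem four_mul_pi_rpow_mul_Gamma_eq {k : ℕ} (hE : finrank ℝ E = 2 * k + 2) :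
    4 * Real.pi ^ (((2 * k + 3 : ℕ) : ℝ) / 2 - 1) * Real.Gamma (((2 * k + 3 : ℕ) : ℝ) / 2) =
      (volume : Measure E).toSphere.real univ * (2 * k + 1).factorial / 2 ^ (2 * k) := by
  have hexp : ((2 * k + 3 : ℕ) : ℝ) / 2 - 1 = k + 1 / 2 := by
    push_cast
    ring
  have hhalf : ((2 * k + 3 : ℕ) : ℝ) / 2 = k + 3 / 2 := by
    push_cast
    ring
  have hsqrt : √Real.pi * √Real.pi = Real.pi := Real.mul_self_sqrt Real.pi_pos.le
  have hfac : (k.factorial : ℝ) ≠ 0 := by positivity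
  have hdup := two_mul_Gamma_add_half k
  rw [toSphere_real_univ_of_finrank_even hE, hexp, hhalf, Real.rpow_add Real.pi_pos,
    Real.rpow_natCast, ← Real.sqrt_eq_rpow, ← mul_right_inj' hfac]
  calc _ = 2 * Real.pi ^ k * √Real.pi * (2 * k.factorial * Real.Gamma (k + 3 / 2)) := by ring
    _ = 2 * Real.pi ^ k * (√Real.pi * √Real.pi) * (2 * k + 1).factorial / 2 ^ (2 * k) := by
        rw [hdup]
        ring
    _ = _ := by
        rw [hsqrt, pow_succ]
        field_simp

end Constants

section Inversion

open InnerProductSpace Laplacian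

variable {E : Type*} [NormedAddCommGroup E] [InnerProductSpace ℝ E] [FiniteDimensional ℝ E]
  [MeasurableSpace E] [BorelSpace E] {f : E → ℝ}

theorem iterate_Dop_sphericalMean (hf : ContDiff ℝ ∞ f) (x : E) (c : ℝ) (j : ℕ) {t : ℝ}
    (ht : 0 < t) :
    Dop^[j] (fun s ↦ s ^ (finrank ℝ E - 2) *
        (c * ∫ σ : sphere (0 : E) 1, f (x - s • (σ : E)) ∂(volume : Measure E).toSphere)) t =
      2 * c * iteratedDeriv j (sqDistDensity f x) (t ^ 2) := by
  have hsmooth : ContDiffOn ℝ ∞ (sqDistDensity f x) (Ioi 0) :=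
    (contDiffOn_sqDistDensity hf).comp (contDiff_prodMk_right x).contDiffOn fun τ hτ ↦ hτ
  rw [← iteratedDeriv_const_mul_field]
  refine iterate_Dop_eq_iteratedDeriv (contDiffOn_const.mul hsmooth) (fun s hs ↦ ?_) j t ht
  rw [sqDistDensity, Real.sqrt_sq hs.le]
  ring

theorem integral_sphere_iterate_Dop_sphericalMean {k : ℕ} (hE : finrank ℝ E = 2 * k + 3)
    (hf : ContDiff ℝ ∞ f) (hfs : Function.support f ⊆ closedBall 0 1) (c : ℝ) {z : E}
    (hz : ‖z‖ < 1) :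
    ∫ θ : sphere (0 : E) 1, Dop^[2 * k] (fun s ↦ s ^ (2 * k + 1) *
        (c * ∫ σ : sphere (0 : E) 1, f (θ - s • (σ : E)) ∂(volume : Measure E).toSphere))
          ‖z - θ‖ ∂(volume : Measure E).toSphere =
      (-1) ^ k * c * ((volume : Measure (EuclideanSpace ℝ (Fin (2 * k + 2)))).toSphere.real univ *
        (2 * k).factorial / 2 ^ (2 * k)) * newtonPotential f z := by
  have hpos (θ : sphere (0 : E) 1) : 0 < ‖z - θ‖ := by
    have hsq := (pow_pos (sub_pos.2 hz) 2).trans_le (sq_one_sub_norm_le_norm_sub_sq hz θ)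
    exact (norm_nonneg _).lt_of_ne' (sq_pos_iff.1 hsq)
  have hDop (θ : sphere (0 : E) 1) := iterate_Dop_sphericalMean hf θ c (2 * k) (hpos θ)
  rw [show finrank ℝ E - 2 = 2 * k + 1 by omega] at hDop
  simp only [hDop]
  rw [integral_const_mul, integral_sphere_iteratedDeriv_sqDistDensity hE hf hfs hz]
  ring

theorem lap_eq_laplacian {n : ℕ} (f : EuclideanSpace ℝ (Fin n) → ℝ) : lap f = Δ f := by
  rw [laplacian_eq_iteratedFDeriv_orthonormalBasis f (EuclideanSpace.basisFun (Fin n) ℝ)]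
  simp [funext_iff, lap]

theorem spherical_mean_inversion_odd_general {n : ℕ} (hE : finrank ℝ E = n) (hn3 : 3 ≤ n)
    (hodd : Odd n) (hf : ContDiff ℝ ∞ f) (hfs : Function.support f ⊆ closedBall 0 1)
    {φ g : E → ℝ → ℝ}
    (hφ : ∀ θ t, φ θ t = (1 / (2 * Real.pi ^ ((n : ℝ) / 2) / Real.Gamma ((n : ℝ) / 2))) *
      ∫ σ : sphere (0 : E) 1, f (θ - t • (σ : E)) ∂(volume : Measure E).toSphere)
    (hg : ∀ θ t, g θ t = Dop^[n - 3] (fun s ↦ s ^ (n - 2) * φ θ s) t) {x : E} (hx : ‖x‖ < 1) :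
    f x = ((-1) ^ ((n - 1) / 2) /
        (4 * Real.pi ^ ((n : ℝ) / 2 - 1) * Real.Gamma ((n : ℝ) / 2))) *
      (Δ (fun z : E ↦ ∫ θ : sphere (0 : E) 1, g θ ‖z - θ‖ ∂(volume : Measure E).toSphere)) x := by
  obtain ⟨k, rfl⟩ : ∃ k, n = 2 * k + 3 := by
    obtain ⟨m, rfl⟩ := hodd
    exact ⟨m - 1, by omega⟩
  have : Nontrivial E := nontrivial_of_finrank_pos (R := ℝ) (by omega)
  have hfc : HasCompactSupport f := .of_support_subset_isCompact (isCompact_closedBall 0 1) hfs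
  have hf2 : ContDiff ℝ 2 f := contDiff_infty.1 hf 2
  set M := (volume : Measure E).toSphere.real univ with hM
  set S := (volume : Measure (EuclideanSpace ℝ (Fin (2 * k + 2)))).toSphere.real univ with hS
  have hbackprojection :
      (fun z ↦ ∫ θ : sphere (0 : E) 1, g θ ‖z - θ‖ ∂(volume : Measure E).toSphere) =ᶠ[𝓝 x]
        ((-1) ^ k * M⁻¹ * (S * (2 * k).factorial / 2 ^ (2 * k))) • newtonPotential f := by
    filter_upwards [isOpen_ball.mem_nhds (mem_ball_zero_iff.2 hx)] with z hz
    rw [Pi.smul_apply, smul_eq_mul, hS, ← integral_sphere_iterate_Dop_sphericalMean hE hf hfs _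
      (mem_ball_zero_iff.1 hz), hM, toSphere_real_univ_eq, hE]
    simp only [hg, hφ, one_div]
    rfl
  have hM0 : M ≠ 0 := toSphere_real_univ_ne_zero volume
  have hS0 : S ≠ 0 := toSphere_real_univ_ne_zero volume
  rw [(laplacian_congr_nhds hbackprojection).eq_of_nhds,
    laplacian_smul _ (contDiff_newtonPotential (n := 2) hE hf2 hfc).contDiffAt,
    laplacian_newtonPotential (m := 2 * k + 1) hE hf2 hfc, ← hM,
    four_mul_pi_rpow_mul_Gamma_eq (finrank_euclideanSpace_fin (𝕜 := ℝ) (n := 2 * k + 2)), ← hS,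
    show (2 * k + 3 - 1) / 2 = k + 1 by omega, Nat.factorial_succ, smul_eq_mul, pow_succ]
  have hsign : (-1 : ℝ) ^ k * (-1) ^ k = 1 := pow_mul_pow_eq_one k (by norm_num)
  push_cast
  field_simp
  linear_combination (-f x) * hsign

end Inversion

end

/-- Finch–Patch–Rakesh inversion formula, odd dimensions. -/
theorem spherical_mean_inversion_odd
    (n : ℕ) (hn3 : 3 ≤ n) (hodd : Odd n)
    (f : EuclideanSpace ℝ (Fin n) → ℝ)
    (hf : ContDiff ℝ (⊤ : ℕ∞) f) (hfc : HasCompactSupport f)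
    (hsupp : tsupport f ⊆ ball (0 : EuclideanSpace ℝ (Fin n)) 1)
    -- spherical means `φ_θ(t) = (Mf)(θ,t)`
    (φ : EuclideanSpace ℝ (Fin n) → ℝ → ℝ)
    (hφ : ∀ θ : EuclideanSpace ℝ (Fin n), ∀ t : ℝ,
      φ θ t = (1 / (2 * Real.pi ^ ((n : ℝ) / 2) / Real.Gamma ((n : ℝ) / 2))) *
        ∫ σ : sphere (0 : EuclideanSpace ℝ (Fin n)) 1,
          f (θ - t • (σ : EuclideanSpace ℝ (Fin n))) ∂(sphereMeasure n))
    -- `g_θ(t) = D^{n-3}[t ↦ t^{n-2} φ_θ(t)](t)`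
    (g : EuclideanSpace ℝ (Fin n) → ℝ → ℝ)
    (hg : ∀ θ : EuclideanSpace ℝ (Fin n), ∀ t : ℝ,
      g θ t = Dop^[n - 3] (fun s => s ^ (n - 2) * φ θ s) t)
    (x : EuclideanSpace ℝ (Fin n)) (hx : x ∈ ball (0 : EuclideanSpace ℝ (Fin n)) 1) :
    f x = ((-1 : ℝ) ^ ((n - 1) / 2) /
            (4 * Real.pi ^ ((n : ℝ) / 2 - 1) * Real.Gamma ((n : ℝ) / 2))) *
      lap (fun z => ∫ θ : sphere (0 : EuclideanSpace ℝ (Fin n)) 1,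
            g (θ : EuclideanSpace ℝ (Fin n)) ‖z - (θ : EuclideanSpace ℝ (Fin n))‖
          ∂(sphereMeasure n)) x := by
  rw [lap_eq_laplacian]
  exact spherical_mean_inversion_odd_general finrank_euclideanSpace_fin hn3 hodd hf
    ((subset_tsupport f).trans (hsupp.trans ball_subset_closedBall)) hφ hg (mem_ball_zero_iff.1 hx)
end

section
/- Let n ≥ 3 be odd and let f : ℝⁿ → ℝ be a smooth function whose support is a compact subset of the open unit ball B = {x ∈ ℝⁿ : |x| < 1}. For θ ∈ S^{n-1} let φ_θ(t) = (Mf)(θ,t) and g_θ(t) = D^{n-3}[t ↦ t^{n-2} φ_θ(t)](t). Then for every x ∈ B, (1/σ_{n-1}) ∫_{S^{n-1}} g_θ(|x−θ|) dθ = c · (I²f)(x), where c = 2(−1)^{(n−3)/2} Γ(n/2)² / π and I² is the Riesz potential of order 2. -/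
open MeasureTheory Metric

/-!
Let `F v` be the backprojection of `t ^ (n - 2) * (Mf)(θ, t)` in which every squared radius
`|x - θ| ^ 2` is replaced by `|x - θ| ^ 2 + v`. Since `D = d/d(t ^ 2)`, the left-hand side is the
derivative of order `n - 3` of `F` at `0`. Polar coordinates about each `θ` and an exchange of
integrals identify `F v` with the integral of `f y` against the `(n - 2)`-dimensional density of the
sphere on the hyperplane slice `|θ - y| ^ 2 - |θ - x| ^ 2 = v`, which is proportional to
`(2 |y - x|) ^ (2 - n) * Q ^ ((n - 3) / 2)`, cut off where `Q < 0`, for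
`Q = (2 |y - x|) ^ 2 - (|y| ^ 2 - |x| ^ 2 - v) ^ 2`. As `|x| < 1`, the cut-off only concerns `y` at
distance `O(v)` from `x`, where `Q = O(v ^ 2)`, so removing it changes `F` by `o(v ^ (n - 3))` and
does not affect the derivative. For odd `n` what is left is a polynomial in `v` of degree `n - 3`,
and its leading coefficient is a multiple of the Riesz potential `∫ f y * |x - y| ^ (2 - n)`.
-/

section Development

open Set
open scoped ContDiff RealInnerProductSpace Topology

/-! ### Polar coordinates -/

section PolarCoordinates

variable {E G : Type*} [NormedAddCommGroup E] [NormedSpace ℝ E] [NormedAddCommGroup G]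

lemma smul_homeomorphUnitSphereProd (x : ({0}ᶜ : Set E)) :
    ((homeomorphUnitSphereProd E x).2 : ℝ) • ((homeomorphUnitSphereProd E x).1 : E) = x := by
  have hx : (x : E) ≠ 0 := x.2
  simp [smul_smul, hx]

variable [FiniteDimensional ℝ E] [MeasurableSpace E] [BorelSpace E] (μ : Measure E)
  [μ.IsAddHaarMeasure]

lemma integrable_sphere_prod {F : E → G} (hF : Integrable F μ) :
    Integrable (fun z : sphere (0 : E) 1 × Ioi (0 : ℝ) => F ((z.2 : ℝ) • (z.1 : E)))
      (μ.toSphere.prod (.volumeIoiPow (Module.finrank ℝ E - 1))) := by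
  rw [← μ.measurePreserving_homeomorphUnitSphereProd.integrable_comp_emb
    (Homeomorph.measurableEmbedding _)]
  simp only [Function.comp_def, smul_homeomorphUnitSphereProd]
  exact (integrableOn_iff_comap_subtypeVal (measurableSet_singleton _).compl).1 hF.integrableOn

variable [Nontrivial E] [NormedSpace ℝ G]

lemma integral_eq_integral_sphere_prod (F : E → G) :
    ∫ x, F x ∂μ = ∫ z : sphere (0 : E) 1 × Ioi (0 : ℝ), F ((z.2 : ℝ) • (z.1 : E))
      ∂(μ.toSphere.prod (.volumeIoiPow (Module.finrank ℝ E - 1))) := by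
  rw [← μ.measurePreserving_homeomorphUnitSphereProd.integral_comp
    (Homeomorph.measurableEmbedding _)]
  simp_rw [smul_homeomorphUnitSphereProd]
  rw [integral_subtype_comap (measurableSet_singleton _).compl F, restrict_compl_singleton]

lemma integral_volumeIoiPow_s1 (k : ℕ) (u : ℝ → G) :
    ∫ r : Ioi (0 : ℝ), u r ∂.volumeIoiPow k = ∫ r in Ioi (0 : ℝ), r ^ k • u r := by
  simp only [Measure.volumeIoiPow, ENNReal.ofReal]
  rw [integral_withDensity_eq_integral_smul (measurable_subtype_coe.pow_const k).real_toNNReal,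
    integral_subtype_comap measurableSet_Ioi fun r ↦ Real.toNNReal (r ^ k) • u r]
  refine setIntegral_congr_fun measurableSet_Ioi fun r hr ↦ ?_
  simp only [NNReal.smul_def, Real.coe_toNNReal _ (pow_nonneg (mem_Ioi.1 hr).le k)]

lemma integral_eq_integral_Ioi_sphere {F : E → G} (hF : Integrable F μ) :
    ∫ x, F x ∂μ = ∫ r in Ioi (0 : ℝ), r ^ (Module.finrank ℝ E - 1) •
      ∫ z : sphere (0 : E) 1, F (r • (z : E)) ∂μ.toSphere := by
  rw [integral_eq_integral_sphere_prod,
    integral_prod_symm _ (integrable_sphere_prod μ hF), integral_volumeIoiPow_s1 _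
      fun r => ∫ z : sphere (0 : E) 1, F (r • (z : E)) ∂μ.toSphere]

lemma integral_angular_mul_radial (a : E → ℝ) (u : ℝ → ℝ) :
    ∫ x, a (‖x‖⁻¹ • x) * u ‖x‖ ∂μ =
      (∫ z : sphere (0 : E) 1, a z ∂μ.toSphere) *
        ∫ r in Ioi (0 : ℝ), r ^ (Module.finrank ℝ E - 1) * u r := by
  have hpolar (z : sphere (0 : E) 1 × Ioi (0 : ℝ)) :
      a (‖(z.2 : ℝ) • (z.1 : E)‖⁻¹ • (z.2 : ℝ) • (z.1 : E)) * u ‖(z.2 : ℝ) • (z.1 : E)‖ =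
        a z.1 * u z.2 := by
    have hr : (0 : ℝ) < z.2 := z.2.2
    simp [norm_smul, abs_of_pos hr, smul_smul, hr.ne']
  simp_rw [integral_eq_integral_sphere_prod μ fun x => a (‖x‖⁻¹ • x) * u ‖x‖, hpolar]
  rw [integral_prod_mul (fun z : sphere (0 : E) 1 => a z) fun r : Ioi (0 : ℝ) => u r,
    integral_volumeIoiPow_s1 _ u]
  rfl

end PolarCoordinates

/-! ### Surface area and Gaussian integrals -/

/-- The surface area `2 π^{m/2} / Γ(m/2)` of the unit sphere of `ℝᵐ`. -/
noncomputable def sphereArea (m : ℕ) : ℝ := 2 * Real.pi ^ ((m : ℝ) / 2) / Real.Gamma ((m : ℝ) / 2)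

section Gaussian

variable {E : Type*} [NormedAddCommGroup E] [InnerProductSpace ℝ E] [FiniteDimensional ℝ E]
  [MeasurableSpace E] [BorelSpace E]

lemma finrank_mul_volume_ball [Nontrivial E] :
    Module.finrank ℝ E * (volume : Measure E).real (ball 0 1) =
      sphereArea (Module.finrank ℝ E) := by
  have hd : (0 : ℝ) < Module.finrank ℝ E / 2 := by
    have : 0 < Module.finrank ℝ E := Module.finrank_pos
    positivity
  rw [measureReal_def, InnerProductSpace.volume_ball, sphereArea, Real.Gamma_add_one hd.ne',
    Real.sqrt_eq_rpow, ← Real.rpow_natCast, ← Real.rpow_mul Real.pi_pos.le]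
  have := (Real.Gamma_pos_of_pos hd).ne'
  rw [ENNReal.toReal_mul, ENNReal.toReal_ofReal (by positivity)]
  field_simp
  simp [Module.finrank_pos.ne']

lemma integrable_exp_neg_norm_sq_s1 : Integrable fun x : E => Real.exp (-‖x‖ ^ 2) := by
  have h := (GaussianFourier.integrable_cexp_neg_mul_sq_norm_add (V := E) (b := 1)
    (by simp) 0 0).norm
  simpa [Complex.norm_exp, ← Complex.ofReal_pow] using h

end Gaussian

lemma integrable_pow_mul_exp_neg_sq (k : ℕ) :
    Integrable fun r : ℝ => r ^ k * Real.exp (-r ^ 2) := by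
  simpa using integrable_rpow_mul_exp_neg_mul_sq (b := 1) one_pos
    (show (-1 : ℝ) < k by linarith [k.cast_nonneg (α := ℝ)])

lemma integral_Ioi_pow_mul_exp_neg_sq_pos (k : ℕ) :
    0 < ∫ r in Ioi (0 : ℝ), r ^ k * Real.exp (-r ^ 2) := by
  refine (setIntegral_pos_iff_support_of_nonneg_ae ?_
    (integrable_pow_mul_exp_neg_sq k).integrableOn).2 ?_
  · filter_upwards [ae_restrict_mem measurableSet_Ioi] with r (hr : 0 < r)
    exact mul_nonneg (pow_nonneg hr.le k) (Real.exp_nonneg _)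
  · have hsub : Ioi (0 : ℝ) ⊆ Function.support fun r : ℝ => r ^ k * Real.exp (-r ^ 2) :=
      fun r (hr : 0 < r) => (mul_pos (pow_pos hr k) (Real.exp_pos _)).ne'
    rw [inter_eq_right.2 hsub, Real.volume_Ioi]
    exact ENNReal.zero_lt_top

lemma integrable_comp_mul_of_abs_le_one {X : Type*} [MeasurableSpace X] {μ : Measure X}
    {N w : X → ℝ} {h : ℝ → ℝ} (hh : Continuous h) (hN : Measurable N) (hN1 : ∀ x, |N x| ≤ 1)
    (hw : Integrable w μ) : Integrable (fun x => h (N x) * w x) μ := by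
  obtain ⟨C, hC⟩ :=
    isCompact_Icc.exists_bound_of_continuousOn (hh.continuousOn (s := Icc (-1 : ℝ) 1))
  exact hw.bdd_mul (hh.measurable.comp hN).aestronglyMeasurable
    (.of_forall fun x => hC _ (abs_le.1 (hN1 x)))

lemma abs_div_sqrt_sq_add_sq_le_one (a s : ℝ) : |a / √(a ^ 2 + s ^ 2)| ≤ 1 := by
  rw [abs_div, abs_of_nonneg (Real.sqrt_nonneg _)]
  exact div_le_one_of_le₀ (Real.abs_le_sqrt (by linarith [sq_nonneg s])) (Real.sqrt_nonneg _)

lemma exp_neg_sqrt_sq_add_sq (a s : ℝ) :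
    Real.exp (-√(a ^ 2 + s ^ 2) ^ 2) = Real.exp (-a ^ 2) * Real.exp (-s ^ 2) := by
  rw [Real.sq_sqrt (by positivity), ← Real.exp_add, neg_add]

lemma integral_halfPlane_polar (k : ℕ) (h u : ℝ → ℝ) :
    ∫ q in univ ×ˢ Ioi (0 : ℝ), q.2 ^ k *
        (h (q.1 / √(q.1 ^ 2 + q.2 ^ 2)) * u √(q.1 ^ 2 + q.2 ^ 2)) =
      (∫ φ in Ioo 0 Real.pi, h (Real.cos φ) * Real.sin φ ^ k) *
        ∫ r in Ioi (0 : ℝ), r ^ (k + 1) * u r := by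
  have hsub : Ioi (0 : ℝ) ×ˢ Ioo 0 Real.pi ⊆ polarCoord.target := by
    rw [polarCoord_target]
    exact prod_mono_right (Ioo_subset_Ioo_left (by linarith [Real.pi_pos]))
  rw [← integral_indicator (MeasurableSet.univ.prod measurableSet_Ioi),
    ← integral_comp_polarCoord_symm, mul_comm, ← setIntegral_prod_mul,
    setIntegral_eq_of_subset_of_forall_sdiff_eq_zero
      polarCoord.open_target.measurableSet hsub]
  · refine setIntegral_congr_fun (measurableSet_Ioi.prod measurableSet_Ioo) fun q hq => ?_
    obtain ⟨r, φ⟩ := q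
    obtain ⟨hr : 0 < r, hφ⟩ := hq
    have hs : 0 < Real.sin φ := Real.sin_pos_of_mem_Ioo hφ
    have hnorm : √((r * Real.cos φ) ^ 2 + (r * Real.sin φ) ^ 2) = r := by
      rw [show (r * Real.cos φ) ^ 2 + (r * Real.sin φ) ^ 2 = r ^ 2 by
        linear_combination r ^ 2 * Real.sin_sq_add_cos_sq φ, Real.sqrt_sq hr.le]
    simp only [indicator, polarCoord_symm_apply, mem_prod, mem_univ, mem_Ioi, hr,
      mul_pos_iff_of_pos_left, hs, and_self, ↓reduceIte, hnorm, ne_eq, hr.ne', not_false_eq_true,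
      mul_div_cancel_left₀, smul_eq_mul]
    ring
  · rintro ⟨r, φ⟩ hq
    rw [polarCoord_target] at hq
    have hs : Real.sin φ ≤ 0 := Real.sin_nonpos_of_nonpos_of_neg_pi_le
      (not_lt.1 fun hφ => hq.2 ⟨hq.1.1, hφ, hq.1.2.2⟩) hq.1.2.1.le
    simp [indicator, (mul_nonpos_of_nonneg_of_nonpos hq.1.1.le hs).not_gt]

/-! ### Zonal integrals over the sphere -/

section Zonal

variable {E : Type*} [NormedAddCommGroup E] [InnerProductSpace ℝ E] [FiniteDimensional ℝ E]
  [MeasurableSpace E] [BorelSpace E]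

lemma integral_cylinder_gaussian [Nontrivial E] {h : ℝ → ℝ} (hh : Continuous h) :
    ∫ q : ℝ × E, h (q.1 / √(q.1 ^ 2 + ‖q.2‖ ^ 2)) * Real.exp (-√(q.1 ^ 2 + ‖q.2‖ ^ 2) ^ 2)
      ∂(volume.prod volume) =
      sphereArea (Module.finrank ℝ E) *
        ((∫ φ in Ioo 0 Real.pi, h (Real.cos φ) * Real.sin φ ^ (Module.finrank ℝ E - 1)) *
          ∫ r in Ioi (0 : ℝ), r ^ Module.finrank ℝ E * Real.exp (-r ^ 2)) := by
  set k := Module.finrank ℝ E - 1 with hk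
  have hk1 : Module.finrank ℝ E = k + 1 := (Nat.sub_add_cancel Module.finrank_pos).symm
  set H : ℝ → ℝ → ℝ := fun a s => h (a / √(a ^ 2 + s ^ 2)) * Real.exp (-√(a ^ 2 + s ^ 2) ^ 2)
  have hgauss : Integrable fun a : ℝ => Real.exp (-a ^ 2) := by
    simpa using integrable_exp_neg_mul_sq one_pos
  have hcyl : Integrable (fun q : ℝ × E => H q.1 ‖q.2‖) (volume.prod volume) := by
    refine integrable_comp_mul_of_abs_le_one hh (by fun_prop)
      (fun q => abs_div_sqrt_sq_add_sq_le_one q.1 ‖q.2‖) ?_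
    simp only [exp_neg_sqrt_sq_add_sq]
    exact hgauss.mul_prod integrable_exp_neg_norm_sq_s1
  have hhalf : Integrable (fun q : ℝ × ℝ => q.2 ^ k * H q.1 q.2)
      (volume.prod (volume.restrict (Ioi 0))) := by
    simp only [H, mul_left_comm _ (h _), exp_neg_sqrt_sq_add_sq]
    refine integrable_comp_mul_of_abs_le_one hh (by fun_prop)
      (fun q => abs_div_sqrt_sq_add_sq_le_one q.1 q.2) ?_
    simp only [mul_left_comm _ (Real.exp _)]
    exact hgauss.mul_prod (integrable_pow_mul_exp_neg_sq k).integrableOn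
  calc ∫ q : ℝ × E, H q.1 ‖q.2‖ ∂(volume.prod volume)
      = ∫ a : ℝ, ∫ y : E, H a ‖y‖ := integral_prod _ hcyl
    _ = ∫ a : ℝ, sphereArea (k + 1) * ∫ s in Ioi (0 : ℝ), s ^ k * H a s := by
        simp_rw [integral_fun_norm_addHaar, ← hk, ← hk1, ← finrank_mul_volume_ball (E := E),
          nsmul_eq_mul, smul_eq_mul, mul_assoc]
    _ = sphereArea (k + 1) * ∫ q in univ ×ˢ Ioi (0 : ℝ), q.2 ^ k * H q.1 q.2 := by
        rw [integral_const_mul, ← integral_prod _ hhalf, Measure.volume_eq_prod,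
          ← Measure.prod_restrict, Measure.restrict_univ]
    _ = _ := by rw [integral_halfPlane_polar k h fun r => Real.exp (-r ^ 2), ← hk1]

lemma integral_eq_integral_smul_add_orthogonal {G : Type*} [NormedAddCommGroup G] [NormedSpace ℝ G]
    {e : E} (he : ‖e‖ = 1) (F : E → G) :
    ∫ x, F x = ∫ q : ℝ × (ℝ ∙ e)ᗮ, F (q.1 • e + (q.2 : E)) ∂(volume.prod volume) := by
  let L := LinearIsometryEquiv.toSpanUnitSingleton (𝕜 := ℝ) e he
  have hL : MeasurePreserving (Prod.map L (id : (ℝ ∙ e)ᗮ → (ℝ ∙ e)ᗮ)) :=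
    L.measurePreserving.prod (.id volume)
  have hLm : MeasurableEmbedding (Prod.map L (id : (ℝ ∙ e)ᗮ → (ℝ ∙ e)ᗮ)) :=
    (L.toHomeomorph.prodCongr (.refl _)).measurableEmbedding
  rw [← (ℝ ∙ e).orthogonalDecomposition.symm.measurePreserving.integral_comp
      (ℝ ∙ e).orthogonalDecomposition.symm.toHomeomorph.measurableEmbedding,
    ← (WithLp.volume_preserving_toLp _ _).integral_comp
      (MeasurableEquiv.toLp 2 _).measurableEmbedding, ← hL.integral_comp hLm]
  rfl

lemma integral_sphere_comp_inner_unit {h : ℝ → ℝ} (hh : Continuous h)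
    {m : ℕ} (hm : m ≠ 0) (hE : Module.finrank ℝ E = m + 1) {e : E} (he : ‖e‖ = 1) :
    ∫ z : sphere (0 : E) 1, h ⟪(z : E), e⟫ ∂(volume : Measure E).toSphere =
      sphereArea m * ∫ φ in Ioo 0 Real.pi, h (Real.cos φ) * Real.sin φ ^ (m - 1) := by
  have := Fact.mk hE
  have hK : Module.finrank ℝ (ℝ ∙ e)ᗮ = m :=
    Submodule.finrank_orthogonal_span_singleton (norm_ne_zero_iff.1 (he ▸ one_ne_zero))
  have : Nontrivial E := Module.nontrivial_of_finrank_eq_succ hE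
  have : Nontrivial (ℝ ∙ e)ᗮ := Module.nontrivial_of_finrank_pos (R := ℝ) (by omega)
  have hsplit (a : ℝ) (y : (ℝ ∙ e)ᗮ) :
      ⟪‖a • e + (y : E)‖⁻¹ • (a • e + (y : E)), e⟫ = a / √(a ^ 2 + ‖y‖ ^ 2) ∧
        ‖a • e + (y : E)‖ = √(a ^ 2 + ‖y‖ ^ 2) := by
    have hye : ⟪(y : E), e⟫ = 0 := Submodule.mem_orthogonal_singleton_iff_inner_left.1 y.2
    have hey : ⟪e, (y : E)⟫ = 0 := Submodule.mem_orthogonal_singleton_iff_inner_right.1 y.2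
    have hnorm : ‖a • e + (y : E)‖ = √(a ^ 2 + ‖y‖ ^ 2) := by
      rw [← Real.sqrt_sq (norm_nonneg _), norm_add_sq_real]
      simp [norm_smul, he, inner_smul_left, hey]
    refine ⟨?_, hnorm⟩
    rw [hnorm, inner_smul_left, inner_add_left, inner_smul_left, hye,
      real_inner_self_eq_norm_sq, he]
    simp [div_eq_inv_mul]
  have hpolar := integral_angular_mul_radial (volume : Measure E) (fun x => h ⟪x, e⟫)
    fun r => Real.exp (-r ^ 2)
  simp_rw [integral_eq_integral_smul_add_orthogonal he
      fun x => h ⟪‖x‖⁻¹ • x, e⟫ * Real.exp (-‖x‖ ^ 2),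
    (hsplit _ _).1, (hsplit _ _).2, integral_cylinder_gaussian hh, hK, hE, Nat.add_sub_cancel,
    ← mul_assoc] at hpolar
  exact (mul_right_cancel₀ (integral_Ioi_pow_mul_exp_neg_sq_pos m).ne' hpolar).symm

lemma integral_sphere_comp_sub_inner {χ : ℝ → ℝ} (hχ : Continuous χ) {p : ℕ}
    (hE : Module.finrank ℝ E = 2 * p + 3) (a : ℝ) {w : E} (hw : w ≠ 0) :
    ∫ z : sphere (0 : E) 1, χ (a - ⟪(z : E), w⟫) ∂(volume : Measure E).toSphere =
      sphereArea (2 * p + 2) / ‖w‖ ^ (2 * p + 1) *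
        ∫ u in (a - ‖w‖)..(a + ‖w‖), χ u * (‖w‖ ^ 2 - (a - u) ^ 2) ^ p := by
  have hρ : ‖w‖ ≠ 0 := norm_ne_zero_iff.2 hw
  have hinner (z : E) : ⟪z, w⟫ = ‖w‖ * ⟪z, ‖w‖⁻¹ • w⟫ := by
    rw [inner_smul_right, mul_inv_cancel_left₀ hρ]
  have hsubst := intervalIntegral.integral_comp_mul_deriv (a := 0) (b := Real.pi)
    (f := fun φ => a - ‖w‖ * Real.cos φ) (f' := fun φ => ‖w‖ * Real.sin φ)
    (g := fun u => χ u * (‖w‖ ^ 2 - (a - u) ^ 2) ^ p)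
    (fun φ _ => by simpa using ((Real.hasDerivAt_cos φ).const_mul ‖w‖).const_sub a)
    (by fun_prop) (by fun_prop)
  have hpow (φ : ℝ) : ‖w‖ ^ (2 * p + 1) * (χ (a - ‖w‖ * Real.cos φ) * Real.sin φ ^ (2 * p + 1)) =
      ((fun u => χ u * (‖w‖ ^ 2 - (a - u) ^ 2) ^ p) ∘ fun φ => a - ‖w‖ * Real.cos φ) φ *
        (‖w‖ * Real.sin φ) := by
    have hsq : ‖w‖ ^ 2 - (a - (a - ‖w‖ * Real.cos φ)) ^ 2 = (‖w‖ * Real.sin φ) ^ 2 := by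
      linear_combination (-‖w‖ ^ 2) * Real.sin_sq_add_cos_sq φ
    simp only [Function.comp_apply, hsq]
    ring
  simp_rw [← hpow, Real.cos_zero, Real.cos_pi, intervalIntegral.integral_const_mul,
    intervalIntegral.integral_of_le Real.pi_pos.le, integral_Ioc_eq_integral_Ioo] at hsubst
  simp_rw [hinner]
  rw [integral_sphere_comp_inner_unit (h := fun v => χ (a - ‖w‖ * v)) (by fun_prop)
    (Nat.succ_ne_zero (2 * p + 1)) hE (e := ‖w‖⁻¹ • w) (by simp [norm_smul, hρ])]
  simp only [mul_one, mul_neg, sub_neg_eq_add] at hsubst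
  rw [← hsubst, Nat.succ_sub_one]
  field_simp

end Zonal

/-! ### Iterates of `D` and parametric integrals -/

lemma Dop_sqrt (G : ℝ → ℝ) {s : ℝ} (hs : 0 < s) :
    Dop G √s = deriv (fun u => G √u) s := by
  by_cases hG : DifferentiableAt ℝ G √s
  · have hcomp : HasDerivAt (fun u => G √u) (deriv G √s * (1 / (2 * √s))) s :=
      hG.hasDerivAt.comp s (Real.hasDerivAt_sqrt hs.ne')
    rw [hcomp.deriv, Dop, mul_comm]
  · have hG' : ¬DifferentiableAt ℝ (fun u => G √u) s := by
      refine fun h => hG ?_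
      have hsq : DifferentiableAt ℝ (fun t => G √(t ^ 2)) √s :=
        DifferentiableAt.comp (g := fun u => G √u) _ (by rwa [Real.sq_sqrt hs.le]) (by fun_prop)
      refine hsq.congr_of_eventuallyEq ?_
      filter_upwards [Ioi_mem_nhds (Real.sqrt_pos.2 hs)] with t ht
      rw [Real.sqrt_sq (le_of_lt ht)]
    rw [Dop, deriv_zero_of_not_differentiableAt hG, deriv_zero_of_not_differentiableAt hG',
      mul_zero]

lemma iterate_Dop_sqrt (G : ℝ → ℝ) (k : ℕ) {s : ℝ} (hs : 0 < s) :
    Dop^[k] G √s = iteratedDeriv k (fun u => G √u) s := by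
  induction k generalizing s with
  | zero => simp
  | succ k ih =>
    rw [Function.iterate_succ_apply', Dop_sqrt _ hs, iteratedDeriv_succ]
    refine Filter.EventuallyEq.deriv_eq ?_
    filter_upwards [Ioi_mem_nhds hs] with u hu using ih hu

lemma iterate_Dop_const_mul (k : ℕ) (c : ℝ) (g : ℝ → ℝ) (t : ℝ) :
    Dop^[k] (fun s => c * g s) t = c * Dop^[k] g t := by
  induction k generalizing g with
  | zero => rfl
  | succ k ih =>
    have hstep : Dop (fun s => c * g s) = fun s => c * Dop g s := by
      funext s
      rw [Dop, Dop, deriv_const_mul_field, mul_left_comm]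
    rw [Function.iterate_succ_apply, hstep, ih, Function.iterate_succ_apply]

section Continuous

variable {E X : Type*} [TopologicalSpace E] {A : ℝ × E → ℝ} {Ω : Set (ℝ × E)}
  [TopologicalSpace X] {K : Set X} {c : X → E} {w : X → ℝ} {I : Set ℝ}

lemma exists_nhds_bound (hA : ContinuousOn A Ω) (hK : IsCompact K) (hc : ContinuousOn c K)
    (hI : IsOpen I) (hIK : ∀ v ∈ I, ∀ x ∈ K, (v, c x) ∈ Ω) {v : ℝ} (hv : v ∈ I) :
    ∃ U ∈ 𝓝 v, U ⊆ I ∧ ∃ C, ∀ u ∈ U, ∀ x ∈ K, ‖A (u, c x)‖ ≤ C := by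
  obtain ⟨U, hU, hUI, hUc⟩ := local_compact_nhds (hI.mem_nhds hv)
  obtain ⟨C, hC⟩ := (hUc.prod (hK.image_of_continuousOn hc)).exists_bound_of_continuousOn
    (hA.mono (by rintro ⟨u, _⟩ ⟨hu, x, hx, rfl⟩; exact hIK u (hUI hu) x hx))
  exact ⟨U, hU, hUI, C, fun u hu x hx => hC _ ⟨hu, x, hx, rfl⟩⟩

variable [T2Space X] [MeasurableSpace X] [OpensMeasurableSpace X] {μ : Measure X}

lemma integrableOn_mul_comp (hA : ContinuousOn A Ω) (hK : IsCompact K)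
    (hc : ContinuousOn c K) (hw : IntegrableOn w K μ) {v : ℝ} (hv : ∀ x ∈ K, (v, c x) ∈ Ω) :
    IntegrableOn (fun x => w x * A (v, c x)) K μ :=
  hw.mul_continuousOn (hA.comp (continuousOn_const.prodMk hc) hv) hK

lemma continuousOn_integral_mul_comp (hA : ContinuousOn A Ω) (hK : IsCompact K)
    (hc : ContinuousOn c K) (hw : IntegrableOn w K μ) (hI : IsOpen I)
    (hIK : ∀ v ∈ I, ∀ x ∈ K, (v, c x) ∈ Ω) :
    ContinuousOn (fun v => ∫ x in K, w x * A (v, c x) ∂μ) I := by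
  intro v hv
  obtain ⟨U, hU, hUI, C, hC⟩ := exists_nhds_bound hA hK hc hI hIK hv
  refine (continuousAt_of_dominated (bound := fun x => ‖w x‖ * C) ?_ ?_ ?_ ?_).continuousWithinAt
  · filter_upwards [hU] with u hu
    exact (integrableOn_mul_comp hA hK hc hw (hIK u (hUI hu))).aestronglyMeasurable
  · filter_upwards [hU] with u hu
    filter_upwards [ae_restrict_mem hK.measurableSet] with x hx
    rw [norm_mul]
    exact mul_le_mul_of_nonneg_left (hC u hu x hx) (norm_nonneg _)
  · exact hw.norm.mul_const C
  · filter_upwards [ae_restrict_mem hK.measurableSet] with x hx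
    exact continuousAt_const.mul <| (hA.comp (continuousOn_id.prodMk continuousOn_const)
      fun u hu => hIK u hu x hx).continuousAt (hI.mem_nhds hv)

end Continuous

section Differentiable

variable {E X : Type*} [NormedAddCommGroup E] [NormedSpace ℝ E] {A : ℝ × E → ℝ} {Ω : Set (ℝ × E)}

lemma hasDerivAt_fst {q : ℝ × E} (hA : DifferentiableAt ℝ A q) :
    HasDerivAt (fun u => A (u, q.2)) (fderiv ℝ A q (1, 0)) q.1 :=
  hA.hasFDerivAt.comp_hasDerivAt q.1 ((hasDerivAt_id q.1).prodMk (hasDerivAt_const q.1 q.2))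

lemma contDiffOn_deriv_fst {m : WithTop ℕ∞} (hΩ : IsOpen Ω) (hA : ContDiffOn ℝ (m + 1) A Ω) :
    ContDiffOn ℝ m (fun q : ℝ × E => deriv (fun u => A (u, q.2)) q.1) Ω := by
  have hd : ContDiffOn ℝ m (fun q => fderiv ℝ A q (1, 0)) Ω :=
    (hA.fderiv_of_isOpen hΩ le_rfl).clm_apply contDiffOn_const
  refine hd.congr fun q hq => (hasDerivAt_fst ?_).deriv
  exact (hA.differentiableOn (by simp)).differentiableAt (hΩ.mem_nhds hq)

lemma contDiffOn_iteratedDeriv_fst (k : ℕ) {m : WithTop ℕ∞} (hΩ : IsOpen Ω)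
    (hA : ContDiffOn ℝ (m + k) A Ω) :
    ContDiffOn ℝ m (fun q : ℝ × E => iteratedDeriv k (fun u => A (u, q.2)) q.1) Ω := by
  induction k generalizing m with
  | zero => simpa using hA
  | succ k ih =>
    simp only [iteratedDeriv_succ]
    exact contDiffOn_deriv_fst hΩ (ih (by simpa [add_assoc, add_comm (1 : WithTop ℕ∞)] using hA))

variable [TopologicalSpace X] [T2Space X] [MeasurableSpace X] [OpensMeasurableSpace X]
  {μ : Measure X} {K : Set X} {c : X → E} {w : X → ℝ} {I : Set ℝ}

lemma hasDerivAt_integral_mul_comp (hΩ : IsOpen Ω) (hA : ContDiffOn ℝ 1 A Ω) (hK : IsCompact K)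
    (hc : ContinuousOn c K) (hw : IntegrableOn w K μ) (hI : IsOpen I)
    (hIK : ∀ v ∈ I, ∀ x ∈ K, (v, c x) ∈ Ω) {v : ℝ} (hv : v ∈ I) :
    HasDerivAt (fun v => ∫ x in K, w x * A (v, c x) ∂μ)
      (∫ x in K, w x * deriv (fun u => A (u, c x)) v ∂μ) v := by
  have hA' : ContinuousOn (fun q : ℝ × E => deriv (fun u => A (u, q.2)) q.1) Ω :=
    (contDiffOn_deriv_fst (m := 0) hΩ (by simpa using hA)).continuousOn
  obtain ⟨U, hU, hUI, C, hC⟩ := exists_nhds_bound hA' hK hc hI hIK hv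
  have hint (u) (hu : u ∈ U) :=
    integrableOn_mul_comp (μ := μ) hA.continuousOn hK hc hw (hIK u (hUI hu))
  refine (hasDerivAt_integral_of_dominated_loc_of_deriv_le
    (F := fun u x => w x * A (u, c x))
    (F' := fun u x => w x * deriv (fun t => A (t, c x)) u) (bound := fun x => ‖w x‖ * C) hU ?_
    (hint v (mem_of_mem_nhds hU)) ?_ ?_ (hw.norm.mul_const C) ?_).2
  · filter_upwards [hU] with u hu using (hint u hu).aestronglyMeasurable
  · exact (integrableOn_mul_comp hA' hK hc hw (hIK v hv)).aestronglyMeasurable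
  · filter_upwards [ae_restrict_mem hK.measurableSet] with x hx u hu
    rw [norm_mul]
    exact mul_le_mul_of_nonneg_left (hC u hu x hx) (norm_nonneg _)
  · filter_upwards [ae_restrict_mem hK.measurableSet] with x hx u hu
    have hd : DifferentiableAt ℝ A (u, c x) :=
      (hA.differentiableOn one_ne_zero).differentiableAt (hΩ.mem_nhds (hIK u (hUI hu) x hx))
    exact ((hasDerivAt_fst hd).differentiableAt.hasDerivAt).const_mul (w x)

lemma contDiffOn_integral_mul_comp (hΩ : IsOpen Ω) {m : ℕ} (hA : ContDiffOn ℝ m A Ω)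
    (hK : IsCompact K) (hc : ContinuousOn c K) (hw : IntegrableOn w K μ) (hI : IsOpen I)
    (hIK : ∀ v ∈ I, ∀ x ∈ K, (v, c x) ∈ Ω) :
    ContDiffOn ℝ m (fun v => ∫ x in K, w x * A (v, c x) ∂μ) I := by
  induction m generalizing A with
  | zero =>
    rw [Nat.cast_zero, contDiffOn_zero] at hA ⊢
    exact continuousOn_integral_mul_comp hA hK hc hw hI hIK
  | succ m ih =>
    have hderiv (v) (hv : v ∈ I) :=
      hasDerivAt_integral_mul_comp (μ := μ) hΩ (hA.of_le (by simp)) hK hc hw hI hIK hv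
    push_cast at hA ⊢
    refine (contDiffOn_succ_iff_deriv_of_isOpen hI).2
      ⟨fun v hv => (hderiv v hv).differentiableAt.differentiableWithinAt, by simp, ?_⟩
    exact (ih (contDiffOn_deriv_fst hΩ hA)).congr fun v hv => (hderiv v hv).deriv

lemma iteratedDeriv_integral_mul_comp (hΩ : IsOpen Ω) {k : ℕ} (hA : ContDiffOn ℝ k A Ω)
    (hK : IsCompact K) (hc : ContinuousOn c K) (hw : IntegrableOn w K μ) (hI : IsOpen I)
    (hIK : ∀ v ∈ I, ∀ x ∈ K, (v, c x) ∈ Ω) {v : ℝ} (hv : v ∈ I) :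
    iteratedDeriv k (fun v => ∫ x in K, w x * A (v, c x) ∂μ) v =
      ∫ x in K, w x * iteratedDeriv k (fun u => A (u, c x)) v ∂μ := by
  induction k generalizing v with
  | zero => simp
  | succ k ih =>
    push_cast at hA
    have hev : iteratedDeriv k (fun v => ∫ x in K, w x * A (v, c x) ∂μ) =ᶠ[𝓝 v]
        fun v => ∫ x in K, w x * iteratedDeriv k (fun u => A (u, c x)) v ∂μ := by
      filter_upwards [hI.mem_nhds hv] with u hu using ih (hA.of_le le_self_add) hu
    have hAk := contDiffOn_iteratedDeriv_fst k (m := 1) hΩ (by rwa [add_comm])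
    rw [iteratedDeriv_succ, hev.deriv_eq,
      (hasDerivAt_integral_mul_comp hΩ hAk hK hc hw hI hIK hv).deriv]
    simp only [iteratedDeriv_succ]

end Differentiable

/-! ### Derivatives of polynomials and Taylor remainders -/

lemma iteratedDeriv_polynomial_eval_s1 (P : Polynomial ℝ) (k : ℕ) :
    iteratedDeriv k (fun v => P.eval v) = fun v => (Polynomial.derivative^[k] P).eval v := by
  induction k with
  | zero => simp
  | succ k ih =>
    funext v
    rw [iteratedDeriv_succ, ih, Function.iterate_succ_apply', Polynomial.deriv]

lemma iteratedDeriv_polynomial_eval_of_natDegree_le {P : Polynomial ℝ} {k : ℕ}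
    (hP : P.natDegree ≤ k) (v : ℝ) :
    iteratedDeriv k (fun v => P.eval v) v = k.factorial * P.coeff k := by
  have hdeg : (Polynomial.derivative^[k] P).natDegree ≤ 0 :=
    (Polynomial.natDegree_iterate_derivative P k).trans (by omega)
  simp_rw [iteratedDeriv_polynomial_eval_s1]
  rw [Polynomial.eq_C_of_natDegree_le_zero hdeg, Polynomial.eval_C,
    Polynomial.coeff_iterate_derivative, zero_add, Nat.descFactorial_self, nsmul_eq_mul]

lemma iteratedDeriv_sub_sq_pow (b a : ℝ) (p : ℕ) (v : ℝ) :
    iteratedDeriv (2 * p) (fun u => (b - (a - u) ^ 2) ^ p) v =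
      (-1 : ℝ) ^ p * (2 * p).factorial := by
  have hdeg : (Polynomial.C b - (Polynomial.C a - Polynomial.X) ^ 2).natDegree ≤ 2 := by
    compute_degree
  have hcoeff : ((Polynomial.C b - (Polynomial.C a - Polynomial.X) ^ 2) ^ p).coeff (p * 2) =
      (-1) ^ p := by
    rw [Polynomial.coeff_pow_of_natDegree_le hdeg]
    congr 1
    compute_degree!
  have h := iteratedDeriv_polynomial_eval_of_natDegree_le
    ((Polynomial.natDegree_pow_le_of_le p hdeg).trans (mul_comm p 2).le) v
  rw [mul_comm 2 p, hcoeff, mul_comm _ ((-1 : ℝ) ^ p)] at h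
  simpa [mul_comm p 2] using h

lemma iteratedDeriv_eq_zero_of_isLittleO {L : ℝ → ℝ} {I : Set ℝ} {v₀ : ℝ} (hI : I ∈ 𝓝 v₀)
    {m : ℕ} (hL : ContDiffOn ℝ m L I) (hLo : L =o[𝓝 v₀] fun v => (v - v₀) ^ m) :
    iteratedDeriv m L v₀ = 0 := by
  obtain ⟨ε, hε, hball⟩ := Metric.mem_nhds_iff.1 hI
  have hv₀ : v₀ ∈ ball v₀ ε := mem_ball_self hε
  induction m using Nat.strong_induction_on with
  | _ m ih =>
  have hlower (k) (hk : k ∈ Finset.range m) : iteratedDeriv k L v₀ = 0 := by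
    have hkm := Finset.mem_range.1 hk
    have hpow : (fun v => (v - v₀) ^ m) =o[𝓝 v₀] fun v => (v - v₀) ^ k := by
      simpa only [← norm_pow, Asymptotics.isLittleO_norm_norm] using
        Asymptotics.isLittleO_pow_sub_pow_sub v₀ hkm
    exact ih k hkm (hL.of_le (by exact_mod_cast hkm.le)) (hLo.trans hpow)
  have htaylor := taylor_isLittleO (convex_ball v₀ ε) hv₀ (hL.mono hball)
  rw [isOpen_ball.nhdsWithin_eq hv₀] at htaylor
  have hlead : (fun v => ((m.factorial : ℝ)⁻¹ * iteratedDeriv m L v₀) * (v - v₀) ^ m) =o[𝓝 v₀]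
      fun v => (v - v₀) ^ m := by
    refine (hLo.sub htaylor).congr_left fun v => ?_
    rw [sub_sub_cancel, taylor_within_apply, Finset.sum_range_succ, Finset.sum_eq_zero]
    · rw [iteratedDerivWithin_of_isOpen isOpen_ball hv₀, smul_eq_mul]
      ring
    · intro k hk
      rw [iteratedDerivWithin_of_isOpen isOpen_ball hv₀, hlower k hk, smul_zero]
  have hfreq : ∃ᶠ v in 𝓝 v₀, (v - v₀) ^ m ≠ 0 := by
    have hne : ∀ᶠ v in 𝓝[≠] v₀, (v - v₀) ^ m ≠ 0 := by
      filter_upwards [self_mem_nhdsWithin] with v hv using pow_ne_zero m (sub_ne_zero.2 hv)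
    exact hne.frequently.filter_mono nhdsWithin_le_nhds
  by_contra hne
  exact Asymptotics.isLittleO_irrefl hfreq <| (Asymptotics.isLittleO_const_mul_left_iff <|
    mul_ne_zero (inv_ne_zero (Nat.cast_ne_zero.2 m.factorial_ne_zero)) hne).1 hlead

/-! ### The shifted backprojection -/

section Backprojection

variable {E : Type*} [NormedAddCommGroup E] [InnerProductSpace ℝ E] [FiniteDimensional ℝ E]
  [MeasurableSpace E] [BorelSpace E]

/-- The spherical mean of `f` over the sphere of radius `t` about `θ`, not normalized: the
integral is against the surface measure of the unit sphere. -/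
noncomputable def sphericalIntegral (f : E → ℝ) (θ : E) (t : ℝ) : ℝ :=
  ∫ σ : sphere (0 : E) 1, f (θ - t • (σ : E)) ∂volume.toSphere

/-- The backprojection at `x` of `t ^ k` times the spherical integrals of `f`, with all squared
radii shifted by `v`. As `d/d(t²) = D`, its derivatives at `v = 0` are backprojections of
iterates of `D`. -/
noncomputable def shiftedBackprojection (k : ℕ) (f : E → ℝ) (x : E) (v : ℝ) : ℝ :=
  ∫ θ : sphere (0 : E) 1, √(‖x - θ‖ ^ 2 + v) ^ k * sphericalIntegral f θ √(‖x - θ‖ ^ 2 + v)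
    ∂volume.toSphere

lemma continuous_sphericalIntegral {f : E → ℝ} (hf : Continuous f) :
    Continuous fun q : E × ℝ => sphericalIntegral f q.1 q.2 := by
  have hint : Continuous (Function.uncurry fun (q : E × ℝ) (σ : sphere (0 : E) 1) =>
      f (q.1 - q.2 • (σ : E))) := by
    simp only [Function.uncurry_def]
    fun_prop
  simpa only [Measure.restrict_univ, sphericalIntegral] using
    continuous_parametric_integral_of_continuous (μ := volume.toSphere) hint isCompact_univ

lemma continuous_pow_mul_sphericalIntegral (k : ℕ) {f : E → ℝ} (hf : Continuous f) :
    Continuous fun q : E × ℝ => √q.2 ^ k * sphericalIntegral f q.1 √q.2 :=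
  (by fun_prop : Continuous fun q : E × ℝ => √q.2 ^ k).mul <|
    (continuous_sphericalIntegral hf).comp <|
      (by fun_prop : Continuous fun q : E × ℝ => (q.1, √q.2))

lemma continuous_shiftedBackprojection (k : ℕ) {f : E → ℝ} (hf : Continuous f) (x : E) :
    Continuous (shiftedBackprojection k f x) := by
  have hint : Continuous (Function.uncurry fun (v : ℝ) (θ : sphere (0 : E) 1) =>
      √(‖x - θ‖ ^ 2 + v) ^ k * sphericalIntegral f θ √(‖x - θ‖ ^ 2 + v)) :=
    (continuous_pow_mul_sphericalIntegral k hf).comp <|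
      (by fun_prop : Continuous fun q : ℝ × sphere (0 : E) 1 =>
        ((q.2 : E), ‖x - (q.2 : E)‖ ^ 2 + q.1))
  simpa only [Measure.restrict_univ, ← shiftedBackprojection.eq_1] using
    continuous_parametric_integral_of_continuous (μ := volume.toSphere) hint isCompact_univ

lemma integral_comp_norm_sq_mul {k : ℕ} (hk : k ≠ 0) (hE : Module.finrank ℝ E = k + 2)
    {f : E → ℝ} (hf : Continuous f) (hfc : HasCompactSupport f) {ψ : ℝ → ℝ} (hψ : Continuous ψ)
    (θ : E) :
    2 * ∫ y, ψ (‖θ - y‖ ^ 2) * f y = ∫ s, ψ s * (√s ^ k * sphericalIntegral f θ √s) := by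
  have : Nontrivial E := Module.nontrivial_of_finrank_pos (R := ℝ) (by omega)
  have hint : Integrable fun z : E => ψ (‖z‖ ^ 2) * f (θ - z) := by
    refine Continuous.integrable_of_hasCompactSupport (by fun_prop) ?_
    exact (hfc.comp_homeomorph (Homeomorph.subLeft θ)).mul_left
  have hvanish : ∀ s ∉ Ioi (0 : ℝ), ψ s * (√s ^ k * sphericalIntegral f θ √s) = 0 := by
    intro s hs
    rw [Real.sqrt_eq_zero_of_nonpos (not_lt.1 hs), zero_pow hk, zero_mul, mul_zero]
  calc 2 * ∫ y, ψ (‖θ - y‖ ^ 2) * f y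
      = 2 * ∫ z, ψ (‖z‖ ^ 2) * f (θ - z) := by
        rw [← integral_sub_left_eq_self (fun y => ψ (‖θ - y‖ ^ 2) * f y) volume θ]
        simp only [sub_sub_cancel]
    _ = ∫ r in Ioi (0 : ℝ), (2 * r ^ ((2 : ℝ) - 1)) •
          (ψ (r ^ (2 : ℝ)) * (√(r ^ (2 : ℝ)) ^ k * sphericalIntegral f θ √(r ^ (2 : ℝ)))) := by
        rw [integral_eq_integral_Ioi_sphere volume hint, ← integral_const_mul]
        refine setIntegral_congr_fun measurableSet_Ioi fun r (hr : 0 < r) => ?_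
        have hnorm (σ : sphere (0 : E) 1) : ‖r • (σ : E)‖ = r := by
          rw [norm_smul, norm_eq_of_mem_sphere σ, mul_one, Real.norm_of_nonneg hr.le]
        simp only [hnorm, integral_const_mul, hE, Real.rpow_two, Real.sqrt_sq hr.le, smul_eq_mul,
          ← sphericalIntegral.eq_1, show (2 : ℝ) - 1 = 1 by norm_num, Real.rpow_one,
          show k + 2 - 1 = k + 1 by omega]
        ring
    _ = ∫ s in Ioi (0 : ℝ), ψ s * (√s ^ k * sphericalIntegral f θ √s) :=
        integral_comp_rpow_Ioi_of_pos two_pos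
          (g := fun s => ψ s * (√s ^ k * sphericalIntegral f θ √s))
    _ = ∫ s, ψ s * (√s ^ k * sphericalIntegral f θ √s) :=
        setIntegral_eq_integral_of_forall_compl_eq_zero hvanish

lemma integral_mul_shiftedBackprojection {k : ℕ} (hk : k ≠ 0) (hE : Module.finrank ℝ E = k + 2)
    {f : E → ℝ} (hf : Continuous f) (hfc : HasCompactSupport f) (x : E) {χ : ℝ → ℝ}
    (hχ : Continuous χ) (hχc : HasCompactSupport χ) :
    ∫ v, χ v * shiftedBackprojection k f x v =
      2 * ∫ θ : sphere (0 : E) 1, (∫ y, χ (‖(θ : E) - y‖ ^ 2 - ‖x - θ‖ ^ 2) * f y)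
        ∂volume.toSphere := by
  set R : E × ℝ → ℝ := fun q => √q.2 ^ k * sphericalIntegral f q.1 √q.2
  have hR : Continuous R := continuous_pow_mul_sphericalIntegral k hf
  have hint : Integrable (Function.uncurry fun (v : ℝ) (θ : sphere (0 : E) 1) =>
      χ v * R (θ, ‖x - θ‖ ^ 2 + v)) (volume.prod volume.toSphere) := by
    refine Continuous.integrable_of_hasCompactSupport ?_ ?_
    · simp only [Function.uncurry_def]
      fun_prop
    · refine HasCompactSupport.intro (hχc.prod (isCompact_univ (X := sphere (0 : E) 1))) ?_
      rintro ⟨v, θ⟩ hv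
      have : χ v = 0 := image_eq_zero_of_notMem_tsupport fun h => hv ⟨h, mem_univ _⟩
      simp [this]
  calc ∫ v, χ v * shiftedBackprojection k f x v
      = ∫ v, ∫ θ : sphere (0 : E) 1, χ v * R (θ, ‖x - θ‖ ^ 2 + v) ∂volume.toSphere := by
        simp only [shiftedBackprojection, integral_const_mul, R]
    _ = ∫ θ : sphere (0 : E) 1, (∫ v, χ v * R (θ, ‖x - θ‖ ^ 2 + v)) ∂volume.toSphere :=
        integral_integral_swap hint
    _ = ∫ θ : sphere (0 : E) 1, (∫ s, χ (s - ‖x - θ‖ ^ 2) * R (θ, s)) ∂volume.toSphere := by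
        refine integral_congr_ae (.of_forall fun θ => ?_)
        beta_reduce
        rw [← integral_add_left_eq_self (fun s => χ (s - ‖x - θ‖ ^ 2) * R (θ, s)) (‖x - θ‖ ^ 2)]
        simp only [add_sub_cancel_left]
    _ = _ := by
        rw [← integral_const_mul]
        refine integral_congr_ae (.of_forall fun θ => ?_)
        exact (integral_comp_norm_sq_mul hk hE hf hfc
          (ψ := fun s => χ (s - ‖x - θ‖ ^ 2)) (by fun_prop) (θ : E)).symm

end Backprojection

/-! ### Slices of the sphere -/

section Slice

variable {E : Type*} [NormedAddCommGroup E]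

/-- The discriminant of the slice `{θ | ‖θ - y‖ ^ 2 - ‖θ - x‖ ^ 2 = v}`: this hyperplane meets the
closed unit ball if and only if `sliceDiscr x y v` is nonnegative. -/
def sliceDiscr (x y : E) (v : ℝ) : ℝ :=
  (2 * ‖y - x‖) ^ 2 - (‖y‖ ^ 2 - ‖x‖ ^ 2 - v) ^ 2

lemma sliceDiscr_nonneg_iff {x y : E} {v : ℝ} :
    0 ≤ sliceDiscr x y v ↔
      v ∈ Icc (‖y‖ ^ 2 - ‖x‖ ^ 2 - 2 * ‖y - x‖) (‖y‖ ^ 2 - ‖x‖ ^ 2 + 2 * ‖y - x‖) := by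
  rw [sliceDiscr, sub_nonneg, sq_le_sq, abs_of_nonneg (by positivity : 0 ≤ 2 * ‖y - x‖),
    mem_Icc_iff_abs_le]

/-- The part of `sliceDiscr x y v ^ p` carried by the slices that meet the unit ball. -/
noncomputable def slicePow (p : ℕ) (x y : E) (v : ℝ) : ℝ :=
  (Ici (0 : ℝ)).indicator (· ^ p) (sliceDiscr x y v)

lemma abs_slicePow_le (p : ℕ) (x y : E) (v : ℝ) :
    |slicePow p x y v| ≤ (2 * ‖y - x‖) ^ (2 * p) := by
  by_cases h : 0 ≤ sliceDiscr x y v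
  · rw [slicePow, indicator_of_mem (mem_Ici.2 h), abs_of_nonneg (pow_nonneg h p), pow_mul]
    exact pow_le_pow_left₀ h (sub_le_self _ (sq_nonneg _)) p
  · rw [slicePow, indicator_of_notMem (notMem_Ici.2 (not_le.1 h)), abs_zero]
    positivity

lemma abs_div_pow_mul_slicePow_le (c : ℝ) (p : ℕ) (x y : E) (v : ℝ) :
    |c / (2 * ‖y - x‖) ^ (2 * p + 1) * slicePow p x y v| ≤ |c| / ‖y - x‖ := by
  rcases eq_or_ne (2 * ‖y - x‖) 0 with hρ | hρ
  · rw [hρ, zero_pow (by omega), div_zero, zero_mul, abs_zero]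
    positivity
  have hdouble : ‖y - x‖ ≤ 2 * ‖y - x‖ := by linarith [norm_nonneg (y - x)]
  calc |c / (2 * ‖y - x‖) ^ (2 * p + 1) * slicePow p x y v|
      = |c| / (2 * ‖y - x‖) ^ (2 * p + 1) * |slicePow p x y v| := by
        rw [abs_mul, abs_div, abs_of_nonneg (by positivity : 0 ≤ (2 * ‖y - x‖) ^ (2 * p + 1))]
    _ ≤ |c| / (2 * ‖y - x‖) ^ (2 * p + 1) * (2 * ‖y - x‖) ^ (2 * p) := by
        gcongr
        exact abs_slicePow_le p x y v
    _ = |c| / (2 * ‖y - x‖) := by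
        rw [pow_succ]
        field_simp
    _ ≤ |c| / ‖y - x‖ := by
        have : 0 < ‖y - x‖ := by simpa using hρ
        gcongr

lemma measurable_slicePow [MeasurableSpace E] [OpensMeasurableSpace E] [SecondCountableTopology E]
    (p : ℕ) (x : E) :
    Measurable fun q : E × ℝ => slicePow p x q.1 q.2 := by
  have hdiscr : Continuous fun q : E × ℝ => sliceDiscr x q.1 q.2 := by
    unfold sliceDiscr
    fun_prop
  exact ((measurable_id.pow_const p).indicator measurableSet_Ici).comp hdiscr.measurable

lemma integrable_div_norm_sub_pow [NormedSpace ℝ E] [FiniteDimensional ℝ E] [MeasurableSpace E]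
    [BorelSpace E] {μ : Measure E} [μ.IsAddHaarMeasure] {k : ℕ} (hk : k < Module.finrank ℝ E)
    {f : E → ℝ} (hf : Continuous f) (hfc : HasCompactSupport f) (x : E) :
    Integrable (fun y => f y / ‖y - x‖ ^ k) μ := by
  have hloc : LocallyIntegrable (fun z : E => (‖z‖ ^ k)⁻¹) μ := by
    refine locallyIntegrable_of_norm_le_rpow (C := 1) (α := k) (by omega) (by exact_mod_cast hk)
      (.of_forall fun z => ?_) (by fun_prop)
    rw [one_mul, Real.rpow_neg (norm_nonneg z), Real.rpow_natCast,
      Real.norm_of_nonneg (by positivity)]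
  have hint := (hloc.integrable_smul_left_of_hasCompactSupport (g := fun z => f (z + x))
    (by fun_prop) (hfc.comp_homeomorph (Homeomorph.addRight x))).comp_sub_right x
  simpa only [sub_add_cancel, smul_eq_mul, ← div_eq_mul_inv] using hint

variable [InnerProductSpace ℝ E]

lemma norm_sub_sq_sub_norm_sub_sq (x y θ : E) :
    ‖θ - y‖ ^ 2 - ‖x - θ‖ ^ 2 = ‖y‖ ^ 2 - ‖x‖ ^ 2 - ⟪θ, (2 : ℝ) • (y - x)⟫ := by
  rw [norm_sub_sq_real, norm_sub_sq_real, inner_smul_right, inner_sub_right, real_inner_comm x θ]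
  ring

variable [FiniteDimensional ℝ E] [MeasurableSpace E] [BorelSpace E]

lemma integrable_div_pow_mul_slicePow {p : ℕ} (hE : 1 < Module.finrank ℝ E) {f : E → ℝ}
    (hf : Continuous f) (hfc : HasCompactSupport f) (x : E) {χ : ℝ → ℝ} {ν : Measure ℝ} [SFinite ν]
    (hχ : Integrable χ ν) :
    Integrable (fun q : E × ℝ => χ q.2 * (f q.1 / (2 * ‖q.1 - x‖) ^ (2 * p + 1) *
      slicePow p x q.1 q.2)) (volume.prod ν) := by
  have hbound : Integrable (fun q : E × ℝ => f q.1 / ‖q.1 - x‖ * χ q.2) (volume.prod ν) := by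
    simpa only [pow_one] using (integrable_div_norm_sub_pow hE hf hfc x).mul_prod hχ
  refine hbound.norm.mono' ?_ (.of_forall fun ⟨y, v⟩ => ?_)
  · have hweight : Measurable fun y : E => f y / (2 * ‖y - x‖) ^ (2 * p + 1) := by fun_prop
    exact hχ.aestronglyMeasurable.comp_snd.mul
      ((hweight.comp measurable_fst).mul (measurable_slicePow p x)).aestronglyMeasurable
  · rw [norm_mul, norm_mul _ (χ _), norm_div (f y), norm_norm, mul_comm (‖f y‖ / _)]
    exact mul_le_mul_of_nonneg_left (abs_div_pow_mul_slicePow_le (f y) p x y v) (norm_nonneg _)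

lemma integral_sphere_comp_norm_sub_sq {p : ℕ} (hE : Module.finrank ℝ E = 2 * p + 3) {χ : ℝ → ℝ}
    (hχ : Continuous χ) {x y : E} (hxy : y ≠ x) :
    ∫ θ : sphere (0 : E) 1, χ (‖(θ : E) - y‖ ^ 2 - ‖x - θ‖ ^ 2) ∂volume.toSphere =
      sphereArea (2 * p + 2) / (2 * ‖y - x‖) ^ (2 * p + 1) * ∫ v, χ v * slicePow p x y v := by
  have hw : (2 : ℝ) • (y - x) ≠ 0 := smul_ne_zero two_ne_zero (sub_ne_zero.2 hxy)
  simp only [norm_sub_sq_sub_norm_sub_sq]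
  rw [integral_sphere_comp_sub_inner hχ hE _ hw, norm_smul, Real.norm_two,
    intervalIntegral.integral_of_le (by linarith [norm_nonneg (y - x)]),
    ← integral_Icc_eq_integral_Ioc, ← integral_indicator measurableSet_Icc]
  congr 2 with v
  simp only [indicator_apply, ← sliceDiscr_nonneg_iff, slicePow, mem_Ici, mul_ite, mul_zero,
    sliceDiscr]

lemma integral_mul_shiftedBackprojection_eq_slice {p : ℕ} (hE : Module.finrank ℝ E = 2 * p + 3)
    {f : E → ℝ} (hf : Continuous f) (hfc : HasCompactSupport f) (x : E) {χ : ℝ → ℝ}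
    (hχ : Continuous χ) (hχc : HasCompactSupport χ) :
    ∫ v, χ v * shiftedBackprojection (2 * p + 1) f x v =
      ∫ v, χ v * (2 * sphereArea (2 * p + 2) *
        ∫ y, f y / (2 * ‖y - x‖) ^ (2 * p + 1) * slicePow p x y v) := by
  have : Nontrivial E := Module.nontrivial_of_finrank_pos (R := ℝ) (by omega)
  have hint : Integrable (Function.uncurry fun (θ : sphere (0 : E) 1) (y : E) =>
      χ (‖(θ : E) - y‖ ^ 2 - ‖x - θ‖ ^ 2) * f y) (volume.toSphere.prod volume) := by
    refine Continuous.integrable_of_hasCompactSupport ?_ ?_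
    · simp only [Function.uncurry_def]
      fun_prop
    · refine HasCompactSupport.intro ((isCompact_univ (X := sphere (0 : E) 1)).prod hfc) ?_
      rintro ⟨θ, y⟩ hy
      have : f y = 0 := image_eq_zero_of_notMem_tsupport fun h => hy ⟨mem_univ _, h⟩
      simp [this]
  have hχi : Integrable χ := hχ.integrable_of_hasCompactSupport hχc
  calc ∫ v, χ v * shiftedBackprojection (2 * p + 1) f x v
      = 2 * ∫ y, ∫ θ : sphere (0 : E) 1, χ (‖(θ : E) - y‖ ^ 2 - ‖x - θ‖ ^ 2) * f y
          ∂volume.toSphere := by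
        rw [integral_mul_shiftedBackprojection (by omega) (by omega) hf hfc x hχ hχc,
          integral_integral_swap hint]
    _ = 2 * ∫ y, sphereArea (2 * p + 2) *
          ∫ v, χ v * (f y / (2 * ‖y - x‖) ^ (2 * p + 1) * slicePow p x y v) := by
        congr 1
        refine integral_congr_ae ?_
        filter_upwards [volume.ae_ne x] with y hy
        rw [integral_mul_const, integral_sphere_comp_norm_sub_sq hE hχ hy]
        simp only [mul_left_comm (χ _), integral_const_mul]
        ring
    _ = _ := by
        rw [integral_const_mul, integral_integral_swap
          (integrable_div_pow_mul_slicePow (by omega) hf hfc x hχi)]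
        simp only [mul_left_comm (χ _) (2 * _), integral_const_mul]
        ring

end Slice

/-! ### Comparison with a polynomial in the shift -/

lemma isLittleO_of_ae_norm_le {X F G : Type*} [TopologicalSpace X] [MeasurableSpace X]
    {μ : Measure X} [μ.IsOpenPosMeasure] [SeminormedAddCommGroup F] [SeminormedAddCommGroup G]
    {L : X → F} {g : X → G} {B : X → ℝ} {x₀ : X} (hL : Continuous L) (hg : Continuous g)
    (hB : Filter.Tendsto B (𝓝 x₀) (𝓝 0)) (h : ∀ᵐ x ∂μ, ‖L x‖ ≤ B x * ‖g x‖) : L =o[𝓝 x₀] g := by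
  rw [Asymptotics.isLittleO_iff]
  intro ε hε
  obtain ⟨U, hUB, hU, hxU⟩ := eventually_nhds_iff.1 (hB.eventually_le_const hε)
  have hopen : IsOpen (U ∩ {x | ε * ‖g x‖ < ‖L x‖}) :=
    hU.inter (isOpen_lt (by fun_prop) (by fun_prop))
  have hnull : μ (U ∩ {x | ε * ‖g x‖ < ‖L x‖}) = 0 := by
    refine measure_mono_null (fun x hx => ?_) (ae_iff.1 h)
    exact fun hle => hx.2.not_ge <| hle.trans <|
      mul_le_mul_of_nonneg_right (hUB x hx.1) (norm_nonneg _)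
  filter_upwards [hU.mem_nhds hxU] with x hx
  by_contra! hlt
  exact (hopen.measure_eq_zero_iff μ |>.1 hnull).le ⟨hx, hlt⟩

lemma tendsto_setIntegral_closedBall_zero {E G : Type*} [NormedAddCommGroup E] [NormedSpace ℝ E]
    [FiniteDimensional ℝ E] [Nontrivial E] [MeasurableSpace E] [BorelSpace E]
    {μ : Measure E} [μ.IsAddHaarMeasure] [NormedAddCommGroup G] [NormedSpace ℝ G] {h : E → G}
    (hh : Integrable h μ) (x : E) :
    Filter.Tendsto (fun r => ∫ y in closedBall x r, h y ∂μ) (𝓝[≥] 0) (𝓝 0) := by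
  refine hh.tendsto_setIntegral_nhds_zero ?_
  have hpow : Filter.Tendsto (fun r : ℝ => r ^ Module.finrank ℝ E) (𝓝 0) (𝓝 0) := by
    simpa [Module.finrank_pos.ne'] using (continuous_pow (M := ℝ) (Module.finrank ℝ E)).tendsto 0
  have hvol : Filter.Tendsto (fun r : ℝ => ENNReal.ofReal (r ^ Module.finrank ℝ E) * μ (ball 0 1))
      (𝓝 0) (𝓝 0) := by
    simpa using ENNReal.Tendsto.mul_const (ENNReal.tendsto_ofReal hpow)
      (.inr (measure_ball_lt_top (μ := μ) (x := 0) (r := 1)).ne)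
  refine (hvol.mono_left nhdsWithin_le_nhds).congr' ?_
  filter_upwards [self_mem_nhdsWithin] with r hr
  exact (Measure.addHaar_closedBall μ x hr).symm

section PolynomialSlice

variable {E : Type*} [NormedAddCommGroup E]

lemma abs_sliceDiscr_le_of_neg {x y : E} {v : ℝ} (hx : ‖x‖ < 1) (hy : ‖y‖ ≤ 1)
    (h : sliceDiscr x y v < 0) :
    ‖y - x‖ ≤ |v| / (1 - ‖x‖) ∧ |sliceDiscr x y v| ≤ ((1 + 2 / (1 - ‖x‖)) * |v|) ^ 2 := by
  have hη : 0 < 1 - ‖x‖ := sub_pos.2 hx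
  have hgap : |‖y‖ ^ 2 - ‖x‖ ^ 2| ≤ (1 + ‖x‖) * ‖y - x‖ := by
    rw [sq_sub_sq, abs_mul, abs_of_nonneg (by positivity : 0 ≤ ‖y‖ + ‖x‖)]
    gcongr
    exact abs_norm_sub_norm_le y x
  have hshift : |‖y‖ ^ 2 - ‖x‖ ^ 2 - v| ≤ (1 + ‖x‖) * ‖y - x‖ + |v| :=
    (abs_sub _ _).trans (by gcongr)
  have hlt : 2 * ‖y - x‖ < |‖y‖ ^ 2 - ‖x‖ ^ 2 - v| :=
    lt_of_pow_lt_pow_left₀ 2 (abs_nonneg _) (by rw [sq_abs]; exact sub_neg.1 h)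
  have hclose : ‖y - x‖ ≤ |v| / (1 - ‖x‖) := by
    rw [le_div_iff₀ hη]
    linarith
  refine ⟨hclose, ?_⟩
  have hbound : |‖y‖ ^ 2 - ‖x‖ ^ 2 - v| ≤ (1 + 2 / (1 - ‖x‖)) * |v| := by
    calc |‖y‖ ^ 2 - ‖x‖ ^ 2 - v| ≤ 2 * ‖y - x‖ + |v| := by nlinarith [norm_nonneg (y - x)]
      _ ≤ 2 * (|v| / (1 - ‖x‖)) + |v| := by gcongr
      _ = (1 + 2 / (1 - ‖x‖)) * |v| := by ring
  rw [abs_of_neg h, sliceDiscr, neg_sub, ← sq_abs (‖y‖ ^ 2 - ‖x‖ ^ 2 - v)]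
  exact (sub_le_self _ (sq_nonneg _)).trans (by gcongr)

lemma abs_slicePow_sub_pow_le (p : ℕ) {x y : E} (v : ℝ) (hx : ‖x‖ < 1) (hy : ‖y‖ ≤ 1) :
    |slicePow p x y v - sliceDiscr x y v ^ p| ≤
      (closedBall x (|v| / (1 - ‖x‖))).indicator
        (fun _ => ((1 + 2 / (1 - ‖x‖)) * |v|) ^ (2 * p)) y := by
  by_cases h : 0 ≤ sliceDiscr x y v
  · rw [slicePow, indicator_of_mem (mem_Ici.2 h), sub_self, abs_zero]
    exact indicator_nonneg (fun _ _ => by rw [pow_mul]; positivity) y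
  · obtain ⟨hclose, hdiscr⟩ := abs_sliceDiscr_le_of_neg hx hy (not_le.1 h)
    rw [slicePow, indicator_of_notMem (notMem_Ici.2 (not_le.1 h)), zero_sub, abs_neg, abs_pow,
      indicator_of_mem (by rwa [mem_closedBall, dist_eq_norm]), pow_mul]
    gcongr

variable [InnerProductSpace ℝ E]

lemma contDiff_sliceDiscr (x : E) {m : WithTop ℕ∞} :
    ContDiff ℝ m fun q : ℝ × E => sliceDiscr x q.2 q.1 := by
  have hnorm (z : E) : ContDiff ℝ m fun q : ℝ × E => ‖q.2 - z‖ ^ 2 :=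
    (contDiff_snd.sub contDiff_const).norm_sq ℝ
  have hnorm' : ContDiff ℝ m fun q : ℝ × E => ‖q.2‖ ^ 2 := contDiff_snd.norm_sq ℝ
  simp only [sliceDiscr, mul_pow]
  fun_prop

variable [FiniteDimensional ℝ E] [MeasurableSpace E] [BorelSpace E]

lemma shiftedBackprojection_ae_eq {p : ℕ} (hE : Module.finrank ℝ E = 2 * p + 3)
    {f : E → ℝ} (hf : Continuous f) (hfc : HasCompactSupport f) (x : E) :
    ∀ᵐ v, shiftedBackprojection (2 * p + 1) f x v = 2 * sphereArea (2 * p + 2) *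
      ∫ y, f y / (2 * ‖y - x‖) ^ (2 * p + 1) * slicePow p x y v := by
  refine ae_eq_of_integral_contDiff_smul_eq
    (continuous_shiftedBackprojection _ hf x).locallyIntegrable ?_ fun χ hχ hχc =>
      integral_mul_shiftedBackprojection_eq_slice hE hf hfc x hχ.continuous hχc
  refine locallyIntegrable_iff.2 fun K hK => Integrable.const_mul ?_ _
  have : IsFiniteMeasure (volume.restrict K) := ⟨by simpa using hK.measure_lt_top⟩
  simpa only [one_mul] using (integrable_div_pow_mul_slicePow (p := p) (by omega) hf hfc x
    (integrable_const (μ := volume.restrict K) (1 : ℝ))).integral_prod_right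

/-- The slice integral of `f` with the density `sliceDiscr x y v ^ p` kept also on the slices that
miss the unit ball. This makes it a polynomial in `v`. -/
noncomputable def polynomialSlice (p : ℕ) (f : E → ℝ) (x : E) (v : ℝ) : ℝ :=
  ∫ y, f y / (2 * ‖y - x‖) ^ (2 * p + 1) * sliceDiscr x y v ^ p

lemma integrable_sliceWeight {p : ℕ} (hE : 2 * p + 1 < Module.finrank ℝ E) {f : E → ℝ}
    (hf : Continuous f) (hfc : HasCompactSupport f) (x : E) :
    Integrable fun y => f y / (2 * ‖y - x‖) ^ (2 * p + 1) := by
  simpa only [mul_pow, div_div, mul_comm] using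
    (integrable_div_norm_sub_pow hE hf hfc x).div_const (2 ^ (2 * p + 1))

lemma polynomialSlice_eq_setIntegral (p : ℕ) (f : E → ℝ) (x : E) (v : ℝ) :
    polynomialSlice p f x v = ∫ y in tsupport f, f y / (2 * ‖y - x‖) ^ (2 * p + 1) *
      sliceDiscr x y v ^ p := by
  refine (setIntegral_eq_integral_of_forall_compl_eq_zero fun y hy => ?_).symm
  rw [image_eq_zero_of_notMem_tsupport hy, zero_div, zero_mul]

section

variable {p : ℕ} (hE : 2 * p + 1 < Module.finrank ℝ E) {f : E → ℝ} (hf : Continuous f)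
  (hfc : HasCompactSupport f) (x : E)
include hE hf hfc

lemma contDiff_polynomialSlice (m : ℕ) : ContDiff ℝ m (polynomialSlice p f x) := by
  rw [funext (polynomialSlice_eq_setIntegral p f x), ← contDiffOn_univ]
  exact contDiffOn_integral_mul_comp (A := fun q => sliceDiscr x q.2 q.1 ^ p) (c := id)
    isOpen_univ ((contDiff_sliceDiscr x).pow p).contDiffOn hfc continuousOn_id
    (integrable_sliceWeight hE hf hfc x).integrableOn isOpen_univ fun _ _ _ _ => mem_univ _

lemma iteratedDeriv_polynomialSlice (v : ℝ) :
    iteratedDeriv (2 * p) (polynomialSlice p f x) v =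
      (-1) ^ p * (2 * p).factorial * ∫ y, f y / (2 * ‖y - x‖) ^ (2 * p + 1) := by
  rw [funext (polynomialSlice_eq_setIntegral p f x)]
  refine (iteratedDeriv_integral_mul_comp (A := fun q => sliceDiscr x q.2 q.1 ^ p) (c := id)
    isOpen_univ ((contDiff_sliceDiscr x).pow p).contDiffOn hfc continuousOn_id
    (integrable_sliceWeight hE hf hfc x).integrableOn isOpen_univ (fun _ _ _ _ => mem_univ _)
    (mem_univ v)).trans ?_
  simp only [id, sliceDiscr, iteratedDeriv_sub_sq_pow, integral_mul_const]
  rw [mul_comm, setIntegral_eq_integral_of_forall_compl_eq_zero fun y hy => by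
    rw [image_eq_zero_of_notMem_tsupport hy, zero_div]]

end

lemma abs_integral_slicePow_sub_polynomialSlice_le {p : ℕ} (hE : 2 * p + 1 < Module.finrank ℝ E)
    {f : E → ℝ} (hf : Continuous f) (hsupp : Function.support f ⊆ closedBall 0 1) {x : E}
    (hx : ‖x‖ < 1) (v : ℝ) :
    |(∫ y, f y / (2 * ‖y - x‖) ^ (2 * p + 1) * slicePow p x y v) - polynomialSlice p f x v| ≤
      (∫ y in closedBall x (|v| / (1 - ‖x‖)), |f y / (2 * ‖y - x‖) ^ (2 * p + 1)|) *
        ((1 + 2 / (1 - ‖x‖)) * |v|) ^ (2 * p) := by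
  have hfc : HasCompactSupport f := .of_support_subset_isCompact (isCompact_closedBall 0 1) hsupp
  have hweight := integrable_sliceWeight hE hf hfc x
  have hslice : Integrable fun y => f y / (2 * ‖y - x‖) ^ (2 * p + 1) * slicePow p x y v := by
    refine (integrable_div_norm_sub_pow (k := 1) (by omega) hf hfc x).norm.mono'
      (hweight.aestronglyMeasurable.mul
        ((measurable_slicePow p x).comp measurable_prodMk_right).aestronglyMeasurable)
      (.of_forall fun y => ?_)
    rw [pow_one, norm_div, norm_norm]
    exact abs_div_pow_mul_slicePow_le (f y) p x y v
  have hpoly : Integrable fun y => f y / (2 * ‖y - x‖) ^ (2 * p + 1) * sliceDiscr x y v ^ p := by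
    refine (integrableOn_iff_integrable_of_support_subset fun y hy => ?_).1
      (integrableOn_mul_comp (A := fun q => sliceDiscr x q.2 q.1 ^ p) (c := id)
        ((contDiff_sliceDiscr (m := 0) x).continuous.pow p).continuousOn hfc continuousOn_id
        hweight.integrableOn fun _ _ => mem_univ _)
    exact subset_tsupport f fun h => hy (by simp [h])
  rw [polynomialSlice, ← integral_sub hslice hpoly, ← integral_mul_const,
    ← integral_indicator measurableSet_closedBall, ← Real.norm_eq_abs]
  refine norm_integral_le_of_norm_le ?_ (.of_forall fun y => ?_)
  · exact (hweight.abs.mul_const _).indicator measurableSet_closedBall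
  rw [← mul_sub, norm_mul, indicator_mul_right]
  by_cases hy : f y = 0
  · simp [hy]
  · exact mul_le_mul_of_nonneg_left
      (abs_slicePow_sub_pow_le p v hx (mem_closedBall_zero_iff.1 (hsupp hy))) (norm_nonneg _)

lemma isLittleO_shiftedBackprojection_sub_polynomialSlice {p : ℕ}
    (hE : Module.finrank ℝ E = 2 * p + 3) {f : E → ℝ} (hf : Continuous f)
    (hsupp : Function.support f ⊆ closedBall 0 1) {x : E} (hx : ‖x‖ < 1) :
    (fun v => shiftedBackprojection (2 * p + 1) f x v -
      2 * sphereArea (2 * p + 2) * polynomialSlice p f x v) =o[𝓝 0] fun v => v ^ (2 * p) := by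
  have : Nontrivial E := Module.nontrivial_of_finrank_pos (R := ℝ) (by omega)
  have hfc : HasCompactSupport f := .of_support_subset_isCompact (isCompact_closedBall 0 1) hsupp
  have hradius : Filter.Tendsto (fun v : ℝ => |v| / (1 - ‖x‖)) (𝓝 0) (𝓝[≥] 0) := by
    refine tendsto_nhdsWithin_iff.2 ⟨?_, .of_forall fun v => ?_⟩
    · simpa using (by fun_prop : Continuous fun v : ℝ => |v| / (1 - ‖x‖)).tendsto 0
    · exact div_nonneg (abs_nonneg v) (sub_nonneg.2 hx.le)
  have hmass := (tendsto_setIntegral_closedBall_zero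
    (integrable_sliceWeight (p := p) (by omega) hf hfc x).norm x).comp hradius
  have hcont : Continuous fun v => shiftedBackprojection (2 * p + 1) f x v -
      2 * sphereArea (2 * p + 2) * polynomialSlice p f x v :=
    (continuous_shiftedBackprojection _ hf x).sub
      ((contDiff_polynomialSlice (by omega) hf hfc x 0).continuous.const_mul _)
  have hbound := hmass.const_mul (‖2 * sphereArea (2 * p + 2)‖ * (1 + 2 / (1 - ‖x‖)) ^ (2 * p))
  rw [mul_zero] at hbound
  refine isLittleO_of_ae_norm_le (μ := volume) hcont (by fun_prop) hbound ?_
  filter_upwards [shiftedBackprojection_ae_eq hE hf hfc x] with v hv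
  rw [hv, ← mul_sub, norm_mul]
  refine (mul_le_mul_of_nonneg_left (abs_integral_slicePow_sub_polynomialSlice_le (by omega) hf
    hsupp hx v) (norm_nonneg _)).trans_eq ?_
  rw [mul_pow (1 + 2 / (1 - ‖x‖)), norm_pow, Real.norm_eq_abs v]
  simp only [Function.comp_apply, Real.norm_eq_abs]
  ring

end PolynomialSlice

/-! ### Smoothness in the shift -/

section Kernel

variable {E : Type*} [NormedAddCommGroup E]

lemma norm_sub_sq_add_pos {x θ : E} {v : ℝ} (hx : ‖x‖ < 1) (hθ : ‖θ‖ = 1)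
    (hv : v ∈ Ioi (-(1 - ‖x‖) ^ 2)) : 0 < ‖x - θ‖ ^ 2 + v := by
  have hdist : 1 - ‖x‖ ≤ ‖x - θ‖ := hθ ▸ norm_sub_rev x θ ▸ norm_sub_norm_le θ x
  have hsq : (1 - ‖x‖) ^ 2 ≤ ‖x - θ‖ ^ 2 := pow_le_pow_left₀ (sub_nonneg.2 hx.le) hdist 2
  linarith [mem_Ioi.1 hv]

lemma isOpen_norm_sub_sq_add_pos (x : E) :
    IsOpen {q : ℝ × E × E | 0 < ‖x - q.2.1‖ ^ 2 + q.1} :=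
  isOpen_lt continuous_const (by fun_prop)

variable [InnerProductSpace ℝ E]

/-- The integrand of `shiftedBackprojection` over pairs `(θ, σ)` of unit vectors, as a function of
`(v, θ, σ)`. -/
noncomputable def backprojectionKernel (k : ℕ) (f : E → ℝ) (x : E) (q : ℝ × E × E) : ℝ :=
  √(‖x - q.2.1‖ ^ 2 + q.1) ^ k * f (q.2.1 - √(‖x - q.2.1‖ ^ 2 + q.1) • q.2.2)

lemma continuous_backprojectionKernel (k : ℕ) {f : E → ℝ} (hf : Continuous f) (x : E) :
    Continuous (backprojectionKernel k f x) := by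
  unfold backprojectionKernel
  fun_prop

lemma contDiffOn_backprojectionKernel (k : ℕ) {m : WithTop ℕ∞} {f : E → ℝ} (hf : ContDiff ℝ m f)
    (x : E) : ContDiffOn ℝ m (backprojectionKernel k f x) {q | 0 < ‖x - q.2.1‖ ^ 2 + q.1} := by
  have hθ : ContDiff ℝ m fun q : ℝ × E × E => q.2.1 := contDiff_fst.comp contDiff_snd
  have hσ : ContDiff ℝ m fun q : ℝ × E × E => q.2.2 := contDiff_snd.comp contDiff_snd
  have hr : ContDiffOn ℝ m (fun q : ℝ × E × E => √(‖x - q.2.1‖ ^ 2 + q.1))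
      {q | 0 < ‖x - q.2.1‖ ^ 2 + q.1} :=
    (((contDiff_const.sub hθ).norm_sq ℝ).add contDiff_fst).contDiffOn.sqrt fun q hq => ne_of_gt hq
  exact (hr.pow k).mul (hf.comp_contDiffOn (hθ.contDiffOn.sub (hr.smul hσ.contDiffOn)))

variable [FiniteDimensional ℝ E] [MeasurableSpace E] [BorelSpace E]

lemma integral_backprojectionKernel (k : ℕ) (f : E → ℝ) (x θ : E) (v : ℝ) :
    ∫ σ : sphere (0 : E) 1, backprojectionKernel k f x (v, θ, σ) ∂volume.toSphere =
      √(‖x - θ‖ ^ 2 + v) ^ k * sphericalIntegral f θ √(‖x - θ‖ ^ 2 + v) := by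
  simp only [backprojectionKernel, integral_const_mul, sphericalIntegral]

lemma shiftedBackprojection_eq_integral_prod (k : ℕ) {f : E → ℝ} (hf : Continuous f) (x : E)
    (v : ℝ) : shiftedBackprojection k f x v =
      ∫ q : sphere (0 : E) 1 × sphere (0 : E) 1, backprojectionKernel k f x (v, q.1, q.2)
        ∂(volume.toSphere.prod volume.toSphere) := by
  have hker : Continuous fun q : sphere (0 : E) 1 × sphere (0 : E) 1 =>
      backprojectionKernel k f x (v, q.1, q.2) :=
    (continuous_backprojectionKernel k hf x).comp (by fun_prop)
  rw [integral_prod _ (hker.integrable_of_hasCompactSupport (.of_compactSpace _))]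
  simp only [integral_backprojectionKernel, shiftedBackprojection]

section

variable (k : ℕ) {m : ℕ} {f : E → ℝ} (hf : ContDiff ℝ m f) {x : E} (hx : ‖x‖ < 1)
include hf hx

lemma contDiffOn_shiftedBackprojection :
    ContDiffOn ℝ m (shiftedBackprojection k f x) (Ioi (-(1 - ‖x‖) ^ 2)) := by
  rw [funext (shiftedBackprojection_eq_integral_prod k hf.continuous x)]
  simpa only [Measure.restrict_univ, one_mul] using contDiffOn_integral_mul_comp
    (μ := (volume.toSphere.prod volume.toSphere :
      Measure (sphere (0 : E) 1 × sphere (0 : E) 1)))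
    (K := univ) (c := fun q => ((q.1 : E), (q.2 : E))) (w := fun _ => 1)
    (isOpen_norm_sub_sq_add_pos x)
    (contDiffOn_backprojectionKernel k hf x) isCompact_univ (by fun_prop)
    (integrable_const 1).integrableOn isOpen_Ioi
    fun _ hv q _ => norm_sub_sq_add_pos hx (norm_eq_of_mem_sphere q.1) hv

lemma integral_iteratedDeriv_backprojectionKernel {θ : E} (hθ : ‖θ‖ = 1) {v : ℝ}
    (hv : v ∈ Ioi (-(1 - ‖x‖) ^ 2)) :
    ∫ σ : sphere (0 : E) 1, iteratedDeriv m (fun u => backprojectionKernel k f x (u, θ, σ)) v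
        ∂volume.toSphere =
      Dop^[m] (fun t => t ^ k * sphericalIntegral f θ t) √(‖x - θ‖ ^ 2 + v) := by
  rw [iterate_Dop_sqrt _ _ (norm_sub_sq_add_pos hx hθ hv)]
  have hshift := congrFun (iteratedDeriv_comp_const_add m
    (fun s => √s ^ k * sphericalIntegral f θ √s) (‖x - θ‖ ^ 2)) v
  simp only [← hshift, ← integral_backprojectionKernel]
  simpa only [Measure.restrict_univ, one_mul] using (iteratedDeriv_integral_mul_comp
    (μ := (volume.toSphere : Measure (sphere (0 : E) 1)))
    (K := univ) (c := fun σ => (θ, (σ : E))) (w := fun _ => 1)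
    (isOpen_norm_sub_sq_add_pos x)
    (contDiffOn_backprojectionKernel k hf x) isCompact_univ (by fun_prop)
    (integrable_const 1).integrableOn isOpen_Ioi
    (fun _ hv _ _ => norm_sub_sq_add_pos hx hθ hv) hv).symm

lemma iteratedDeriv_shiftedBackprojection {v : ℝ} (hv : v ∈ Ioi (-(1 - ‖x‖) ^ 2)) :
    iteratedDeriv m (shiftedBackprojection k f x) v =
      ∫ θ : sphere (0 : E) 1,
        Dop^[m] (fun t => t ^ k * sphericalIntegral f θ t) √(‖x - θ‖ ^ 2 + v) ∂volume.toSphere := by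
  have hmem : ∀ v ∈ Ioi (-(1 - ‖x‖) ^ 2), ∀ q : sphere (0 : E) 1 × sphere (0 : E) 1,
      0 < ‖x - q.1‖ ^ 2 + v :=
    fun v hv q => norm_sub_sq_add_pos hx (norm_eq_of_mem_sphere q.1) hv
  have hderiv : Continuous fun q : sphere (0 : E) 1 × sphere (0 : E) 1 =>
      iteratedDeriv m (fun u => backprojectionKernel k f x (u, q.1, q.2)) v :=
    (contDiffOn_iteratedDeriv_fst m (m := 0) (isOpen_norm_sub_sq_add_pos x)
      (by simpa using contDiffOn_backprojectionKernel k hf x)).continuousOn.comp_continuous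
      (f := fun q : sphere (0 : E) 1 × sphere (0 : E) 1 => (v, (q.1 : E), (q.2 : E)))
      (by fun_prop) (hmem v hv)
  calc iteratedDeriv m (shiftedBackprojection k f x) v
      = ∫ q : sphere (0 : E) 1 × sphere (0 : E) 1,
          iteratedDeriv m (fun u => backprojectionKernel k f x (u, q.1, q.2)) v
          ∂(volume.toSphere.prod volume.toSphere) := by
        rw [funext (shiftedBackprojection_eq_integral_prod k hf.continuous x)]
        simpa only [Measure.restrict_univ, one_mul] using iteratedDeriv_integral_mul_comp
          (μ := (volume.toSphere.prod volume.toSphere :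
            Measure (sphere (0 : E) 1 × sphere (0 : E) 1)))
          (K := univ) (c := fun q => ((q.1 : E), (q.2 : E))) (w := fun _ => 1)
          (isOpen_norm_sub_sq_add_pos x)
          (contDiffOn_backprojectionKernel k hf x) isCompact_univ (by fun_prop)
          (integrable_const 1).integrableOn isOpen_Ioi (fun v hv q _ => hmem v hv q) hv
    _ = ∫ θ : sphere (0 : E) 1, (∫ σ : sphere (0 : E) 1,
          iteratedDeriv m (fun u => backprojectionKernel k f x (u, θ, σ)) v ∂volume.toSphere)
          ∂volume.toSphere :=
        integral_prod _ (hderiv.integrable_of_hasCompactSupport (.of_compactSpace _))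
    _ = _ := by
        simp only [integral_iteratedDeriv_backprojectionKernel k hf hx
          (norm_eq_of_mem_sphere _) hv]

end

end Kernel

/-! ### The constant and the Riesz potential -/

lemma sphereArea_two_mul_add_two (p : ℕ) :
    sphereArea (2 * p + 2) = 2 * Real.pi ^ (p + 1) / p.factorial := by
  have hhalf : ((2 * p + 2 : ℕ) : ℝ) / 2 = p + 1 := by push_cast; ring
  rw [sphereArea, hhalf, Real.Gamma_nat_eq_factorial]
  norm_cast

lemma Gamma_nat_add_half_mul_factorial (p : ℕ) :
    Real.Gamma (p + 1 / 2) * p.factorial = (2 * p).factorial / 2 ^ (2 * p) * √Real.pi := by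
  have hdup := Real.Gamma_mul_Gamma_add_half (p + 1 / 2)
  have hexp : 1 - 2 * ((p : ℝ) + 1 / 2) = -(2 * p : ℕ) := by push_cast; ring
  rw [hexp, Real.rpow_neg two_pos.le, Real.rpow_natCast, add_assoc, add_halves,
    Real.Gamma_nat_eq_factorial, mul_add, mul_one_div_cancel two_ne_zero] at hdup
  rw [hdup, ← Nat.cast_ofNat (R := ℝ), ← Nat.cast_mul, Real.Gamma_nat_eq_factorial,
    div_eq_mul_inv]

lemma backprojection_constant (p : ℕ) :
    2 * sphereArea (2 * p + 2) * ((-1) ^ p * (2 * p).factorial / 2 ^ (2 * p + 1)) /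
        sphereArea (2 * p + 3) ^ 2 =
      2 * (-1) ^ p * Real.Gamma ((2 * p + 3 : ℕ) / 2) ^ 2 / Real.pi *
        (Real.Gamma ((2 * p + 3 : ℕ) / 2 - 1) / (4 * Real.pi ^ (((2 * p + 3 : ℕ) : ℝ) / 2))) := by
  have hpi := Real.pi_pos
  have hpow : Real.pi ^ (((2 * p + 3 : ℕ) : ℝ) / 2) = Real.pi ^ (p + 1) * √Real.pi := by
    rw [Real.sqrt_eq_rpow, ← Real.rpow_natCast, ← Real.rpow_add hpi]
    congr 1
    push_cast
    ring
  have hGamma : Real.Gamma (((2 * p + 3 : ℕ) : ℝ) / 2 - 1) =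
      (2 * p).factorial / 2 ^ (2 * p) * √Real.pi / p.factorial := by
    rw [← Gamma_nat_add_half_mul_factorial, mul_div_cancel_right₀ _ (by positivity)]
    congr 1
    push_cast
    ring
  have hGamma_pos : 0 < Real.Gamma (((2 * p + 3 : ℕ) : ℝ) / 2) :=
    Real.Gamma_pos_of_pos (by positivity)
  have hsqrt : √Real.pi ^ 2 = Real.pi := Real.sq_sqrt hpi.le
  rw [sphereArea_two_mul_add_two, sphereArea, hGamma, hpow]
  field_simp [hGamma_pos.ne']
  rw [hsqrt]
  ring

section RieszPotential

variable {E : Type*} [NormedAddCommGroup E] [MeasurableSpace E]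

lemma setIntegral_mul_norm_sub_rpow (μ : Measure E) {f : E → ℝ} {s : Set E}
    (hs : Function.support f ⊆ s) (x : E) (k : ℕ) :
    ∫ y in s, f y * ‖x - y‖ ^ (-(k : ℝ)) ∂μ = ∫ y, f y / ‖y - x‖ ^ k ∂μ := by
  rw [setIntegral_eq_integral_of_forall_compl_eq_zero fun y hy => by
    rw [Function.notMem_support.1 fun h => hy (hs h), zero_mul]]
  simp only [Real.rpow_neg (norm_nonneg _), Real.rpow_natCast, norm_sub_rev x, div_eq_mul_inv]

variable [InnerProductSpace ℝ E] [FiniteDimensional ℝ E] [BorelSpace E]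

lemma integral_iterate_Dop_sphericalIntegral {p : ℕ} (hE : Module.finrank ℝ E = 2 * p + 3)
    {f : E → ℝ} (hf : ContDiff ℝ (2 * p : ℕ) f) (hsupp : Function.support f ⊆ closedBall 0 1)
    {x : E} (hx : ‖x‖ < 1) :
    ∫ θ : sphere (0 : E) 1,
        Dop^[2 * p] (fun t => t ^ (2 * p + 1) * sphericalIntegral f θ t) ‖x - θ‖
        ∂volume.toSphere =
      2 * sphereArea (2 * p + 2) *
        ((-1) ^ p * (2 * p).factorial / 2 ^ (2 * p + 1) * ∫ y, f y / ‖y - x‖ ^ (2 * p + 1)) := by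
  have hfc : HasCompactSupport f := .of_support_subset_isCompact (isCompact_closedBall 0 1) hsupp
  have hI : Ioi (-(1 - ‖x‖) ^ 2) ∈ 𝓝 (0 : ℝ) :=
    Ioi_mem_nhds (neg_neg_of_pos (pow_pos (sub_pos.2 hx) 2))
  have hF := contDiffOn_shiftedBackprojection (2 * p + 1) hf hx
  have hP := contDiff_polynomialSlice (p := p) (by omega) hf.continuous hfc x (2 * p)
  have hcP : ContDiff ℝ (2 * p : ℕ) fun v =>
      2 * sphereArea (2 * p + 2) * polynomialSlice p f x v := contDiff_const.mul hP
  have hremainder := iteratedDeriv_eq_zero_of_isLittleO hI (hF.sub hcP.contDiffOn) <| by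
    simpa only [sub_zero] using
      isLittleO_shiftedBackprojection_sub_polynomialSlice hE hf.continuous hsupp hx
  rw [iteratedDeriv_fun_sub (hF.contDiffAt hI) hcP.contDiffAt, sub_eq_zero,
    iteratedDeriv_const_mul_field, iteratedDeriv_polynomialSlice (by omega) hf.continuous hfc,
    iteratedDeriv_shiftedBackprojection _ hf hx (mem_of_mem_nhds hI)] at hremainder
  simpa only [add_zero, Real.sqrt_sq (norm_nonneg _), mul_pow, mul_comm ((2 : ℝ) ^ _), ← div_div,
    integral_div, mul_div_assoc', div_mul_eq_mul_div] using hremainder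

end RieszPotential

end Development

theorem backprojection_eq_riesz_potential_general
    (n : ℕ) (hn3 : 3 ≤ n) (hodd : Odd n)
    (f : EuclideanSpace ℝ (Fin n) → ℝ)
    (hf : ContDiff ℝ (n - 3 : ℕ) f)
    (hsupp : Function.support f ⊆ ball (0 : EuclideanSpace ℝ (Fin n)) 1)
    (φ : EuclideanSpace ℝ (Fin n) → ℝ → ℝ)
    (hφ : ∀ θ : EuclideanSpace ℝ (Fin n), ∀ t : ℝ,
      φ θ t = (1 / (2 * Real.pi ^ ((n : ℝ) / 2) / Real.Gamma ((n : ℝ) / 2))) *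
        ∫ σ : sphere (0 : EuclideanSpace ℝ (Fin n)) 1,
          f (θ - t • (σ : EuclideanSpace ℝ (Fin n))) ∂(sphereMeasure n))
    (g : EuclideanSpace ℝ (Fin n) → ℝ → ℝ)
    (hg : ∀ θ : EuclideanSpace ℝ (Fin n), ∀ t : ℝ,
      g θ t = Dop^[n - 3] (fun s => s ^ (n - 2) * φ θ s) t)
    (x : EuclideanSpace ℝ (Fin n)) (hx : x ∈ ball (0 : EuclideanSpace ℝ (Fin n)) 1) :
    (1 / (2 * Real.pi ^ ((n : ℝ) / 2) / Real.Gamma ((n : ℝ) / 2))) *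
      ∫ θ : sphere (0 : EuclideanSpace ℝ (Fin n)) 1,
        g (θ : EuclideanSpace ℝ (Fin n)) ‖x - (θ : EuclideanSpace ℝ (Fin n))‖
      ∂(sphereMeasure n)
    = (2 * (-1 : ℝ) ^ ((n - 3) / 2) * Real.Gamma ((n : ℝ) / 2) ^ 2 / Real.pi) *
        ((Real.Gamma ((n : ℝ) / 2 - 1) / (4 * Real.pi ^ ((n : ℝ) / 2))) *
          ∫ y in ball (0 : EuclideanSpace ℝ (Fin n)) 1,
            f y * ‖x - y‖ ^ ((2 : ℝ) - n)) := by
  obtain ⟨p, rfl⟩ : ∃ p, n = 2 * p + 3 := by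
    obtain ⟨m, rfl⟩ := hodd
    exact ⟨m - 1, by omega⟩
  have hφA (θ t) : φ θ t = 1 / sphereArea (2 * p + 3) * sphericalIntegral f θ t := hφ θ t
  have hgA (θ t) : g θ t = 1 / sphereArea (2 * p + 3) *
      Dop^[2 * p] (fun s => s ^ (2 * p + 1) * sphericalIntegral f θ s) t := by
    rw [hg, ← iterate_Dop_const_mul]
    simp only [hφA, mul_left_comm (1 / sphereArea _)]
    rfl
  have hexp : (2 : ℝ) - (2 * p + 3 : ℕ) = -(2 * p + 1 : ℕ) := by push_cast; ring
  have hp : (2 * p + 3 - 3) / 2 = p := by omega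
  rw [hp, hexp, setIntegral_mul_norm_sub_rpow volume hsupp, ← mul_assoc, ← backprojection_constant,
    ← sphereArea.eq_1]
  simp only [hgA, integral_const_mul]
  rw [sphereMeasure, integral_iterate_Dop_sphericalIntegral (by simp) hf
    (hsupp.trans ball_subset_closedBall) (mem_ball_zero_iff.1 hx)]
  ring

/-- the normalized back-projection of `D^{n-3} t^{n-2} (Mf)(θ,t)` equals
`c` times the Riesz potential `I²f`, for `n ≥ 3` odd. -/
theorem backprojection_eq_riesz_potential
    (n : ℕ) (hn3 : 3 ≤ n) (hodd : Odd n)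
    (f : EuclideanSpace ℝ (Fin n) → ℝ)
    (hf : ContDiff ℝ (⊤ : ℕ∞) f) (hfc : HasCompactSupport f)
    (hsupp : tsupport f ⊆ ball (0 : EuclideanSpace ℝ (Fin n)) 1)
    -- spherical means `φ_θ(t) = (Mf)(θ,t)`
    (φ : EuclideanSpace ℝ (Fin n) → ℝ → ℝ)
    (hφ : ∀ θ : EuclideanSpace ℝ (Fin n), ∀ t : ℝ,
      φ θ t = (1 / (2 * Real.pi ^ ((n : ℝ) / 2) / Real.Gamma ((n : ℝ) / 2))) *
        ∫ σ : sphere (0 : EuclideanSpace ℝ (Fin n)) 1,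
          f (θ - t • (σ : EuclideanSpace ℝ (Fin n))) ∂(sphereMeasure n))
    -- `g_θ(t) = D^{n-3}[t ↦ t^{n-2} φ_θ(t)](t)`
    (g : EuclideanSpace ℝ (Fin n) → ℝ → ℝ)
    (hg : ∀ θ : EuclideanSpace ℝ (Fin n), ∀ t : ℝ,
      g θ t = Dop^[n - 3] (fun s => s ^ (n - 2) * φ θ s) t)
    (x : EuclideanSpace ℝ (Fin n)) (hx : x ∈ ball (0 : EuclideanSpace ℝ (Fin n)) 1) :
    (1 / (2 * Real.pi ^ ((n : ℝ) / 2) / Real.Gamma ((n : ℝ) / 2))) *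
      ∫ θ : sphere (0 : EuclideanSpace ℝ (Fin n)) 1,
        g (θ : EuclideanSpace ℝ (Fin n)) ‖x - (θ : EuclideanSpace ℝ (Fin n))‖
      ∂(sphereMeasure n)
    = (2 * (-1 : ℝ) ^ ((n - 3) / 2) * Real.Gamma ((n : ℝ) / 2) ^ 2 / Real.pi) *
        ((Real.Gamma ((n : ℝ) / 2 - 1) / (4 * Real.pi ^ ((n : ℝ) / 2))) *
          ∫ y in ball (0 : EuclideanSpace ℝ (Fin n)) 1,
            f y * ‖x - y‖ ^ ((2 : ℝ) - n)) := by
  exact backprojection_eq_riesz_potential_general n hn3 hodd f (contDiff_infty.1 hf _)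
    ((subset_tsupport f).trans hsupp) φ hφ g hg x hx
end
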